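/- With notation as in the context, let c₂ = 2.02·10¹²·(log Y)². Suppose n > Y⁸ and let t be an integer with t ≠ u_n; moreover assume t ≠ b if β = 1, and t ≠ a·n + c if α = 1. Then for every prime p: if t = 0 then ν_p(u_n − t) < c₂·p·(log n)², and if t ≠ 0 then ν_p(u_n − t) < c₂·p·(log n)²·log⁺ t, where log⁺ t = max{1, log |t|}. -/

import Mathlib

/-!
Clearing denominators, `u n - t` divides `θ ^ n * x - y`, where `θ` is the root different from `1`
and `x`, `y` are integers of height polynomial in `n`, `Y` and `t`. The exponent of `p` in
`θ ^ n * x - y` is bounded by the `p`-adic Gel'fond–Baker method. If `p ^ ν` divides it, then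
`θ ^ j * x ^ (K - k) * y ^ k`, which is small in the archimedean sense, is congruent modulo `p ^ ν`
to `x ^ K * θ ^ (j + n * k)`, which is `p`-adically analytic in the exponent. Siegel's lemma yields
an exponential polynomial with Feldman polynomials as coefficients whose values, and many of whose
derivatives, vanish at small integers. For large `ν` the `p`-adic Schwarz lemma, against the
archimedean size of these integers, forces it to vanish on a longer range, which contradicts a zero
estimate.
-/

open Polynomial Finset

section Determinants

variable {R ι : Type*} [CommRing R]

theorem coeff_prod_sum_of_natDegree_le (s : Finset ι) {f : ι → R[X]} {d : ι → ℕ}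
    (h : ∀ i ∈ s, (f i).natDegree ≤ d i) :
    (∏ i ∈ s, f i).coeff (∑ i ∈ s, d i) = ∏ i ∈ s, (f i).coeff (d i) := by
  classical
  induction s using Finset.induction_on with
  | empty => simp
  | insert a s ha ih =>
    rw [prod_insert ha, sum_insert ha, prod_insert ha, ← ih fun i hi => h i (mem_insert_of_mem hi)]
    refine coeff_mul_add_eq_of_natDegree_le (h a (mem_insert_self a s)) ?_
    exact (natDegree_prod_le _ _).trans (sum_le_sum fun i hi => h i (mem_insert_of_mem hi))

variable [Fintype ι] [DecidableEq ι]

theorem natDegree_det_le_sum {M : Matrix ι ι R[X]} {d : ι → ℕ}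
    (h : ∀ i k, (M i k).natDegree ≤ d k) : M.det.natDegree ≤ ∑ k, d k := by
  rw [Matrix.det_apply]
  refine natDegree_sum_le_of_forall_le _ _ fun σ _ => ?_
  refine (natDegree_smul_le _ _).trans ((natDegree_prod_le _ _).trans ?_)
  exact sum_le_sum fun k _ => h _ _

theorem coeff_det_sum_of_natDegree_le {M : Matrix ι ι R[X]} {d : ι → ℕ}
    (h : ∀ i k, (M i k).natDegree ≤ d k) :
    M.det.coeff (∑ k, d k) = (Matrix.of fun i k => (M i k).coeff (d k)).det := by
  rw [Matrix.det_apply, Matrix.det_apply, finsetSum_coeff]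
  refine sum_congr rfl fun σ _ => ?_
  rw [coeff_smul, coeff_prod_sum_of_natDegree_le _ fun k _ => h _ _]
  rfl

theorem prod_dvd_det {A : Matrix ι ι R} {f : ι → R} (h : ∀ i k, f k ∣ A i k) :
    ∏ k, f k ∣ A.det := by
  choose g hg using h
  have hA : A = Matrix.of fun i k => f k * Matrix.of g i k := Matrix.ext hg
  rw [hA, Matrix.det_mul_row]
  exact dvd_mul_right _ _

theorem dvd_det_mul_of_dvd_mulVec {A : Matrix ι ι R} {w : ι → R} {f : R}
    (h : ∀ i, f ∣ A.mulVec w i) (k : ι) : f ∣ A.det * w k := by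
  have hw : A.det * w k = A.adjugate.mulVec (A.mulVec w) k := by
    simp [Matrix.adjugate_mul, Matrix.smul_mulVec]
  rw [hw]
  exact dvd_sum fun i _ => (h i).mul_left _

theorem det_ne_zero_of_coeff_eq_mul [IsDomain R] {M : Matrix ι ι R[X]} {B : Matrix ι ι R}
    {d : ι → ℕ} {a : ι → R} (h : ∀ i k, (M i k).natDegree ≤ d k) (ha : ∀ k, a k ≠ 0)
    (hB : B.det ≠ 0) (hcoeff : ∀ i k, (M i k).coeff (d k) = a k * B i k) : M.det ≠ 0 := by
  intro h0
  have htop := coeff_det_sum_of_natDegree_le h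
  simp only [h0, coeff_zero, hcoeff, Matrix.det_mul_row] at htop
  exact mul_ne_zero (prod_ne_zero_iff.2 fun k _ => ha k) hB htop.symm

end Determinants

section Multiplicity

theorem hasseDeriv_eval_taylor {R : Type*} [CommSemiring R] (m : ℕ) (r z : R) (f : R[X]) :
    (hasseDeriv m (taylor r f)).eval z = (hasseDeriv m f).eval (z + r) := by
  rw [← taylor_coeff, taylor_taylor, taylor_coeff, add_comm]

theorem X_sub_C_pow_dvd_iff_hasseDeriv {R : Type*} [CommRing R] {f : R[X]} {t : R} {m : ℕ} :
    (X - C t) ^ m ∣ f ↔ ∀ i < m, (hasseDeriv i f).eval t = 0 := by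
  simp_rw [X_sub_C_pow_dvd_iff, X_pow_dvd_iff, ← taylor_apply, taylor_coeff]

variable {K : Type*} [Field K]

theorem sum_le_natDegree_of_X_sub_C_pow_dvd {s : Finset K} {m : K → ℕ} {f : K[X]} (hf : f ≠ 0)
    (h : ∀ t ∈ s, (X - C t) ^ m t ∣ f) : ∑ t ∈ s, m t ≤ f.natDegree := by
  have hdvd : ∏ t ∈ s, (X - C t) ^ m t ∣ f :=
    Finset.prod_dvd_of_coprime (fun t _ u _ htu =>
      (pairwise_coprime_X_sub_C Function.injective_id htu).pow) h
  have hdeg := natDegree_le_of_dvd hdvd hf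
  rw [natDegree_prod_of_monic _ _ fun t _ => (monic_X_sub_C t).pow _] at hdeg
  simpa [natDegree_pow] using hdeg

theorem card_mul_le_natDegree_of_X_sub_C_pow_dvd {s : Finset K} {m : ℕ} {f : K[X]} (hf : f ≠ 0)
    (h : ∀ t ∈ s, (X - C t) ^ m ∣ f) : #s * m ≤ f.natDegree := by
  simpa using sum_le_natDegree_of_X_sub_C_pow_dvd hf h

/-- The Euler operator `X d/dX`: it multiplies the monomial `X ^ j` by `j`, so that its iterates
encode the moments of the coefficients. -/
noncomputable def eulerOp {R : Type*} [CommSemiring R] : R[X] →ₗ[R] R[X] :=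
  LinearMap.mulLeft R X ∘ₗ derivative

theorem eulerOp_apply {R : Type*} [CommSemiring R] (f : R[X]) : eulerOp f = X * derivative f := rfl

theorem coeff_eulerOp {R : Type*} [CommSemiring R] (f : R[X]) (j : ℕ) :
    (eulerOp f).coeff j = j * f.coeff j := by
  cases j with
  | zero => simp [eulerOp_apply]
  | succ j => rw [eulerOp_apply, coeff_X_mul, coeff_derivative]; push_cast; ring

theorem coeff_eulerOp_pow {R : Type*} [CommSemiring R] (m : ℕ) (f : R[X]) (j : ℕ) :
    ((eulerOp ^ m) f).coeff j = (j : R) ^ m * f.coeff j := by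
  induction m with
  | zero => simp
  | succ m ih => rw [pow_succ', Module.End.mul_apply, coeff_eulerOp, ih, pow_succ', mul_assoc]

theorem eulerOp_pow_monomial {R : Type*} [CommSemiring R] (m j : ℕ) (a : R) :
    (eulerOp ^ m) (monomial j a) = monomial j ((j : R) ^ m * a) := by
  ext i
  rw [coeff_eulerOp_pow, coeff_monomial, coeff_monomial]
  split_ifs with h
  · rw [h]
  · rw [mul_zero]

theorem natDegree_eulerOp_pow_le {R : Type*} [CommSemiring R] (m : ℕ) (f : R[X]) :
    ((eulerOp ^ m) f).natDegree ≤ f.natDegree :=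
  natDegree_le_iff_coeff_eq_zero.2 fun j hj => by
    rw [coeff_eulerOp_pow, coeff_eq_zero_of_natDegree_lt hj, mul_zero]

theorem X_pow_dvd_eulerOp_pow {R : Type*} [CommSemiring R] {s : ℕ} {f : R[X]} (h : X ^ s ∣ f)
    (m : ℕ) : X ^ s ∣ (eulerOp ^ m) f :=
  X_pow_dvd_iff.2 fun j hj => by rw [coeff_eulerOp_pow, X_pow_dvd_iff.1 h j hj, mul_zero]

theorem pow_sub_dvd_eulerOp_pow {R : Type*} [CommSemiring R] {g f : R[X]} {M : ℕ} (h : g ^ M ∣ f)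
    (m : ℕ) : g ^ (M - m) ∣ (eulerOp ^ m) f := by
  induction m with
  | zero => simpa using h
  | succ m ih =>
    rw [pow_succ', Module.End.mul_apply, eulerOp_apply, Nat.sub_succ]
    exact (pow_sub_one_dvd_derivative_of_pow_dvd ih).mul_left _

theorem X_sub_C_pow_dvd_of_eulerOp_pow_eval [CharZero K] {t : K} (ht : t ≠ 0) {M : ℕ} {f : K[X]}
    (h : ∀ m < M, ((eulerOp ^ m) f).eval t = 0) : (X - C t) ^ M ∣ f := by
  induction M generalizing f with
  | zero => simp
  | succ M ih =>
    obtain ⟨g, rfl⟩ := ih fun m hm => h m (by omega)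
    rw [pow_succ]
    refine mul_dvd_mul_left _ (dvd_iff_isRoot.2 ?_)
    rcases Nat.eq_zero_or_pos M with rfl | hM
    · simpa using h 0 one_pos
    have hE : (X - C t) ^ M ∣ eulerOp ((X - C t) ^ M * g) :=
      ih fun m hm => by simpa [pow_succ] using h (m + 1) (by omega)
    have hprod : eulerOp ((X - C t) ^ M * g) =
        (X - C t) ^ (M - 1) * (C (M : K) * X * g) + (X - C t) ^ M * (X * derivative g) := by
      rw [eulerOp_apply, derivative_mul, derivative_X_sub_C_pow]
      ring
    rw [hprod, dvd_add_left (dvd_mul_right _ _), ← Nat.sub_add_cancel hM, pow_succ,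
      Nat.add_sub_cancel, mul_dvd_mul_iff_left (pow_ne_zero _ (X_sub_C_ne_zero t)),
      dvd_iff_isRoot] at hE
    have hM0 : (M : K) ≠ 0 := by exact_mod_cast hM.ne'
    simpa [IsRoot, ht, hM0, Nat.sub_add_cancel hM] using hE

end Multiplicity

section ZeroEstimates

variable {K : Type*} [Field K]

theorem exists_injective_fin_range_eq {ι : Type*} [Fintype ι] (s : Set ι) :
    ∃ n ≤ Fintype.card ι, ∃ σ : Fin n → ι, Function.Injective σ ∧ Set.range σ = s := by
  classical
  let e := Fintype.equivFin s
  refine ⟨_, Fintype.card_subtype_le _, Subtype.val ∘ e.symm,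
    Subtype.val_injective.comp e.symm.injective, ?_⟩
  rw [e.symm.surjective.range_comp, Subtype.range_coe]

theorem exists_rows_det_ne_zero {m ι : Type*} [Finite m] [Fintype ι] [DecidableEq ι]
    (B : Matrix m ι K) (h : ∀ c : ι → K, B.mulVec c = 0 → c = 0) :
    ∃ f : ι → m, (B.submatrix f id).det ≠ 0 := by
  have := Fintype.ofFinite m
  have hinj : Function.Injective B.mulVecLin := by
    rw [injective_iff_map_eq_zero]
    exact fun c hc => h c (by simpa using hc)
  have hrank : Module.finrank K (Submodule.span K (Set.range B.row)) = Fintype.card ι := by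
    rw [← Matrix.rank_eq_finrank_span_row, Matrix.rank, LinearMap.finrank_range_of_inj hinj]
    simp
  obtain ⟨g, hg, -, hli⟩ := Submodule.exists_fun_fin_finrank_span_eq K (Set.range B.row)
  choose f hf using hg
  let e := Fintype.equivFinOfCardEq hrank.symm
  refine ⟨f ∘ e, ?_⟩
  rw [← isUnit_iff_ne_zero, ← Matrix.isUnit_iff_isUnit_det,
    ← Matrix.linearIndependent_rows_iff_isUnit]
  have hrow : (B.submatrix (f ∘ e) id).row = g ∘ e := funext fun i => hf (e i)
  rw [hrow]
  exact hli.comp e e.injective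

/-- The generalised Wronskian matrix of a family of polynomials, with the Euler operator in place of
the derivative so that its top coefficients form a Vandermonde matrix in the degrees. -/
noncomputable def eulerWronskian {n : ℕ} (Q : Fin n → K[X]) : Matrix (Fin n) (Fin n) K[X] :=
  Matrix.of fun i k => (eulerOp ^ (i : ℕ)) (Q k)

theorem det_eulerWronskian_ne_zero [CharZero K] {n : ℕ} {Q : Fin n → K[X]} (hQ : ∀ k, Q k ≠ 0)
    (hdeg : Function.Injective fun k => (Q k).natDegree) : (eulerWronskian Q).det ≠ 0 := by
  refine det_ne_zero_of_coeff_eq_mul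
    (B := (Matrix.vandermonde fun k => ((Q k).natDegree : K)).transpose)
    (a := fun k => (Q k).leadingCoeff) (fun i k => natDegree_eulerOp_pow_le _ _)
    (fun k => leadingCoeff_ne_zero.2 (hQ k)) ?_ fun i k => ?_
  · rw [Matrix.det_transpose, Matrix.det_vandermonde_ne_zero_iff]
    exact Nat.cast_injective.comp hdeg
  · simp [eulerWronskian, coeff_eulerOp_pow, Matrix.vandermonde_apply, mul_comm]

theorem X_sub_C_pow_dvd_det_eulerWronskian {n M : ℕ} (hn : 0 < n) {Q : Fin n → K[X]} {t : K}
    {c : Fin n → K} (hc : ∀ k, c k ≠ 0) (h : (X - C t) ^ M ∣ ∑ k, c k • Q k) :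
    (X - C t) ^ (M + 1 - n) ∣ (eulerWronskian Q).det := by
  have hdvd := dvd_det_mul_of_dvd_mulVec (A := eulerWronskian Q) (w := fun k => C (c k))
    (f := (X - C t) ^ (M + 1 - n)) (fun i => ?_) ⟨0, hn⟩
  · exact (isUnit_C.2 (hc _).isUnit).dvd_mul_right.1 hdvd
  · have hi : (X - C t) ^ (M - i) ∣ (eulerOp ^ (i : ℕ)) (∑ k, c k • Q k) :=
      pow_sub_dvd_eulerOp_pow h i
    refine (pow_dvd_pow _ (by omega)).trans (hi.trans (Eq.dvd ?_))
    simp_rw [map_sum, map_smul, smul_eq_C_mul, mul_comm (C _)]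
    rfl

theorem card_mul_add_sum_le_sum_natDegree [CharZero K] {n M : ℕ} (hn : 0 < n) {Q : Fin n → K[X]}
    (hQ : ∀ k, Q k ≠ 0) (hdeg : Function.Injective fun k => (Q k).natDegree) {s : Fin n → ℕ}
    (hs : ∀ k, X ^ s k ∣ Q k) {T : Finset K} (hT : 0 ∉ T)
    (h : ∀ t ∈ T, ∃ c : Fin n → K, (∀ k, c k ≠ 0) ∧ (X - C t) ^ M ∣ ∑ k, c k • Q k) :
    #T * (M + 1 - n) + ∑ k, s k ≤ ∑ k, (Q k).natDegree := by
  classical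
  have hroots : ∑ t ∈ insert 0 T, (if t = 0 then ∑ k, s k else M + 1 - n) ≤
      (eulerWronskian Q).det.natDegree := by
    refine sum_le_natDegree_of_X_sub_C_pow_dvd (det_eulerWronskian_ne_zero hQ hdeg) fun t ht => ?_
    split_ifs with h0
    · rw [h0, C_0, sub_zero, ← prod_pow_eq_pow_sum]
      exact prod_dvd_det fun i k => X_pow_dvd_eulerOp_pow (hs k) i
    · obtain ⟨c, hc, hdvd⟩ := h t (mem_of_mem_insert_of_ne ht h0)
      exact X_sub_C_pow_dvd_det_eulerWronskian hn hc hdvd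
  have hT' : ∀ t ∈ T, t ≠ 0 := fun t ht => ne_of_mem_of_not_mem ht hT
  rw [sum_insert hT, if_pos rfl, sum_congr rfl fun t ht => if_neg (hT' t ht), sum_const,
    smul_eq_mul, add_comm] at hroots
  exact hroots.trans (natDegree_det_le_sum fun i k => natDegree_eulerOp_pow_le _ _)

theorem card_mul_lt_mul_of_eulerOp_pow_eval [CharZero K] {n J M : ℕ} (hn : 0 < n) {P : Fin n → K[X]}
    (hP : ∀ i, P i ≠ 0) (hJ : ∀ i, (P i).natDegree < J) {s : Fin n → ℕ}
    (hs : Function.Injective fun i => (P i).natDegree + s i) {T : Finset K} (hT : 0 ∉ T)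
    (h : ∀ t ∈ T, ∃ c : Fin n → K, (∀ i, c i ≠ 0) ∧
      ∀ m < M, ∑ i, c i * ((eulerOp ^ m) (X ^ s i * P i)).eval t = 0) :
    #T * (M + 1 - n) < n * J := by
  have hdeg : ∀ i, (X ^ s i * P i).natDegree = (P i).natDegree + s i := fun i =>
    natDegree_X_pow_mul _ (hP i)
  have hcount := card_mul_add_sum_le_sum_natDegree (M := M) hn
    (fun i => mul_ne_zero (pow_ne_zero (s i) X_ne_zero) (hP i)) (by simpa only [hdeg] using hs)
    (fun i => dvd_mul_right _ _) hT fun t ht => ?_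
  · simp only [hdeg, sum_add_distrib, add_le_add_iff_right] at hcount
    refine hcount.trans_lt ((sum_lt_sum_of_nonempty ?_ fun i _ => hJ i).trans_eq (by simp))
    exact ⟨⟨0, hn⟩, mem_univ _⟩
  · obtain ⟨c, hc, hsum⟩ := h t ht
    refine ⟨c, hc, X_sub_C_pow_dvd_of_eulerOp_pow_eval (ne_of_mem_of_not_mem ht hT) fun m hm => ?_⟩
    simpa [eval_finsetSum, smul_eq_mul] using hsum m hm

theorem eval_eulerOp_pow_X_pow_mul_ofFn [DecidableEq K] {J m : ℕ} (s : ℕ) (c : Fin J → K) (t : K) :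
    ((eulerOp ^ m) (X ^ s * ofFn J c)).eval t =
      ∑ j : Fin J, c j * (((j : ℕ) + s : ℕ) : K) ^ m * t ^ ((j : ℕ) + s) := by
  simp_rw [ofFn_eq_sum_monomial, mul_sum, X_pow_mul_monomial, map_sum, eulerOp_pow_monomial,
    eval_finsetSum, eval_monomial]
  exact sum_congr rfl fun j _ => by ring

theorem ne_zero_of_injective_pow {M : Type*} [MonoidWithZero M] {θ : M}
    (hθ : Function.Injective fun r : ℕ => θ ^ r) : θ ≠ 0 := by
  rintro rfl
  exact absurd (@hθ 1 2 (by simp)) (by decide)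

theorem eq_zero_of_exponential_moments [CharZero K] {κ : Type*} [Fintype κ] {J M R : ℕ} {s : κ → ℕ}
    (hs : Function.Injective fun y : Fin J × κ => (y.1 : ℕ) + s y.2)
    {θ : K} (hθ : Function.Injective fun r : ℕ => θ ^ r) {γ : κ → K} (hγ : ∀ k, γ k ≠ 0)
    {c : Fin J × κ → K}
    (h : ∀ m < M, ∀ r < R, ∑ y : Fin J × κ, c y * (((y.1 : ℕ) + s y.2 : ℕ) : K) ^ m *
      (θ ^ (y.1 : ℕ) * γ y.2) ^ r = 0)
    (hM : Fintype.card κ ≤ M) (hR : Fintype.card κ * J ≤ R * (M - Fintype.card κ)) : c = 0 := by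
  classical
  have hθ0 := ne_zero_of_injective_pow hθ
  let P : κ → K[X] := fun k => ofFn J fun j => c (j, k)
  obtain ⟨n, hn, σ, hσ, hrange⟩ := exists_injective_fin_range_eq {k | P k ≠ 0}
  have hP : ∀ i, P (σ i) ≠ 0 := fun i => by simpa [hrange] using Set.mem_range_self (f := σ) i
  have hPJ : ∀ i, (P (σ i)).natDegree < J := fun i =>
    ofFn_natDegree_lt (Nat.one_le_iff_ne_zero.2 (ne_zero_of_ofFn_ne_zero (hP i))) _
  rcases Nat.eq_zero_or_pos n with rfl | hn0
  · have hP0 : ∀ k, P k = 0 := fun k => by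
      simpa using Set.eq_empty_iff_forall_notMem.1 (hrange.symm.trans (Set.range_eq_empty σ)) k
    funext ⟨j, k⟩
    exact congrFun (injective_ofFn J ((hP0 k).trans (map_zero _).symm)) j
  have hvanish : ∀ t ∈ (range R).image (θ ^ ·), ∃ a : Fin n → K, (∀ i, a i ≠ 0) ∧
      ∀ m < M, ∑ i, a i * ((eulerOp ^ m) (X ^ s (σ i) * P (σ i))).eval t = 0 := by
    simp only [mem_image, mem_range, forall_exists_index, and_imp, forall_apply_eq_imp_iff₂]
    intro r hr
    have ht := pow_ne_zero r hθ0
    refine ⟨fun i => γ (σ i) ^ r * ((θ ^ r) ^ s (σ i))⁻¹, fun i =>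
      mul_ne_zero (pow_ne_zero _ (hγ _)) (inv_ne_zero (pow_ne_zero _ ht)), fun m hm => ?_⟩
    rw [← h m hm r hr, Fintype.sum_prod_type_right]
    refine Fintype.sum_of_injective σ hσ _ _ (fun k hk => ?_) fun i => ?_
    · have hk0 : P k = 0 := by simpa [hrange] using hk
      have hck := injective_ofFn J (hk0.trans (map_zero _).symm)
      exact sum_eq_zero fun j _ => by simp [show c (j, k) = 0 from congrFun hck j]
    · rw [eval_eulerOp_pow_X_pow_mul_ofFn, mul_sum]
      refine sum_congr rfl fun j _ => ?_
      field_simp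
      ring
  have hcount := card_mul_lt_mul_of_eulerOp_pow_eval hn0 hP hPJ (s := s ∘ σ)
    (fun i i' hii' => hσ (congrArg Prod.snd (@hs (⟨_, hPJ i⟩, σ i) (⟨_, hPJ i'⟩, σ i') hii')))
    (by simp [hθ0]) hvanish
  rw [card_image_of_injective _ hθ, card_range] at hcount
  have hle : R * (M - Fintype.card κ) ≤ R * (M + 1 - n) := Nat.mul_le_mul_left _ (by omega)
  exact absurd ((Nat.mul_le_mul_right J hn).trans (hR.trans hle)) hcount.not_ge

theorem natDegree_C_mul_taylor_le (a r : K) (f : K[X]) :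
    (C a * taylor r f).natDegree ≤ f.natDegree :=
  (natDegree_C_mul_le _ _).trans (natDegree_taylor _ _).le

variable {n S M₂ M₃ : ℕ} {F : Fin n → K[X]} {B : Matrix (Fin n) (Fin n) K} {r : Fin n → K}

theorem det_C_mul_taylor_ne_zero (hF : ∀ y, F y ≠ 0) (hB : B.det ≠ 0) :
    (Matrix.of fun i y => C (B i y) * taylor (r i) (F y)).det ≠ 0 := by
  refine det_ne_zero_of_coeff_eq_mul (fun i y => natDegree_C_mul_taylor_le _ _ _)
    (fun y => leadingCoeff_ne_zero.2 (hF y)) hB fun i y => ?_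
  rw [Matrix.of_apply, coeff_C_mul, ← natDegree_taylor (F y) (r i), coeff_natDegree,
    leadingCoeff_taylor, mul_comm]

theorem X_sub_C_pow_dvd_det_C_mul_taylor {v w : Fin n → K} (hv : Function.Injective v)
    (hw : ∀ y, w y ≠ 0) {z : K}
    (h : ∀ i, ∀ a < M₃, ∀ m < M₂,
      ∑ y, (hasseDeriv a (F y)).eval (z + r i) * B i y * (v y ^ m * w y) = 0) :
    (X - C z) ^ (M₃ * min M₂ n) ∣
      (Matrix.of fun i y => C (B i y) * taylor (r i) (F y)).det := by
  set A : Matrix (Fin n) (Fin n) K[X] := Matrix.of fun i y => C (B i y) * taylor (r i) (F y)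
  let Q : Matrix (Fin n) (Fin n) K := Matrix.of fun y m => w y * Matrix.vandermonde v y m
  have hQ : Q.det ≠ 0 := by
    rw [Matrix.det_mul_column]
    exact mul_ne_zero (prod_ne_zero_iff.2 fun y _ => hw y)
      (Matrix.det_vandermonde_ne_zero_iff.2 hv)
  have hdvd : ∏ m : Fin n, (if (m : ℕ) < M₂ then (X - C z) ^ M₃ else 1) ∣ (A * Q.map C).det := by
    refine prod_dvd_det fun i m => ?_
    split_ifs with hm
    · refine X_sub_C_pow_dvd_iff_hasseDeriv.2 fun a ha => ?_
      rw [← h i a ha m hm, Matrix.mul_apply, map_sum, eval_finsetSum]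
      refine sum_congr rfl fun y _ => ?_
      simp only [A, Q, Matrix.of_apply, Matrix.map_apply, Matrix.vandermonde_apply]
      rw [mul_right_comm, ← C_mul, ← smul_eq_C_mul, map_smul, eval_smul, hasseDeriv_eval_taylor,
        smul_eq_mul]
      ring
    · exact one_dvd _
  have hcard : #{m : Fin n | (m : ℕ) < M₂} = min M₂ n := by rw [Fin.card_filter_val_lt, min_comm]
  have hdet : (Q.map C).det = C Q.det := (RingHom.map_det C Q).symm
  rwa [prod_ite, prod_const, prod_const_one, mul_one, hcard, ← pow_mul, Matrix.det_mul, hdet,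
    (isUnit_C.2 hQ.isUnit).dvd_mul_right] at hdvd

theorem card_mul_le_sum_natDegree_of_vanishing (hF : ∀ y, F y ≠ 0) (hB : B.det ≠ 0)
    {v : Fin n → K} (hv : Function.Injective v) {ω : Fin n → K} (hω : ∀ y, ω y ≠ 0) [CharZero K]
    (h : ∀ i, ∀ z < S, ∀ a < M₃, ∀ m < M₂,
      ∑ y, (hasseDeriv a (F y)).eval (z + r i) * B i y * (v y ^ m * ω y ^ z) = 0) :
    S * (M₃ * min M₂ n) ≤ ∑ y, (F y).natDegree := by
  have hroots := card_mul_le_natDegree_of_X_sub_C_pow_dvd (s := (range S).map Nat.castEmbedding)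
    (m := M₃ * min M₂ n) (det_C_mul_taylor_ne_zero (r := r) hF hB) fun t ht => ?_
  · rw [card_map, card_range] at hroots
    exact hroots.trans (natDegree_det_le_sum fun i y => natDegree_C_mul_taylor_le _ _ _)
  · obtain ⟨z, hz, rfl⟩ := mem_map.1 ht
    exact X_sub_C_pow_dvd_det_C_mul_taylor hv (fun y => pow_ne_zero z (hω y))
      fun i => h i z (mem_range.1 hz)

theorem exists_exponents_det_ne_zero {Y : Type*} [Fintype Y] {M R : ℕ} {v ω : Y → K}
    (hind : ∀ c : Y → K, (∀ m < M, ∀ r < R, ∑ y, c y * v y ^ m * ω y ^ r = 0) → c = 0)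
    {σ : Fin n → Y} (hσ : Function.Injective σ) :
    ∃ f : Fin n → Fin R × Fin M,
      (Matrix.of fun i k => v (σ k) ^ ((f i).2 : ℕ) * ω (σ k) ^ ((f i).1 : ℕ)).det ≠ 0 := by
  refine exists_rows_det_ne_zero (Matrix.of fun (i : Fin R × Fin M) (k : Fin n) =>
    v (σ k) ^ (i.2 : ℕ) * ω (σ k) ^ (i.1 : ℕ)) fun c hc => ?_
  have hext : Function.extend σ c 0 = 0 := hind _ fun m hm r hr => by
    refine Eq.trans (Eq.symm ?_) (congrFun hc (⟨r, hr⟩, ⟨m, hm⟩))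
    refine Fintype.sum_of_injective σ hσ _ _ (fun y hy => ?_) fun k => ?_
    · simp [Function.extend_apply' _ _ _ hy]
    · rw [hσ.extend_apply]
      exact (mul_comm _ _).trans (mul_assoc _ _ _).symm
  exact funext fun k => by simpa [hσ.extend_apply] using congrFun hext (σ k)

theorem eq_zero_of_exponential_polynomial_vanishing [CharZero K] {Y : Type*} [Fintype Y]
    {L M₁ R S : ℕ} {v ω : Y → K} (hv : Function.Injective v) (hω : ∀ y, ω y ≠ 0)
    (hind : ∀ c : Y → K, (∀ m < M₁, ∀ r < R, ∑ y, c y * v y ^ m * ω y ^ r = 0) → c = 0)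
    {F : Y → K[X]} (hF : ∀ y, (F y).natDegree < L)
    (h : ∀ z < R + S, ∀ a < M₃, ∀ m < M₁ + M₂,
      ∑ y, (hasseDeriv a (F y)).eval (z : K) * v y ^ m * ω y ^ z = 0)
    (hS : L ≤ S * M₃) (hS' : Fintype.card Y * L ≤ S * M₂ * M₃) : F = 0 := by
  classical
  obtain ⟨n, hn, σ, hσ, hrange⟩ := exists_injective_fin_range_eq {y | F y ≠ 0}
  have hFσ : ∀ i, F (σ i) ≠ 0 := fun i => by simpa [hrange] using Set.mem_range_self (f := σ) i
  have hF0 : ∀ y ∉ Set.range σ, F y = 0 := fun y hy => by simpa [hrange] using hy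
  rcases Nat.eq_zero_or_pos n with rfl | hn0
  · exact funext fun y => hF0 y (by simp)
  obtain ⟨f, hf⟩ := exists_exponents_det_ne_zero hind hσ
  have hcount := card_mul_le_sum_natDegree_of_vanishing (S := S) (M₂ := M₂) (M₃ := M₃)
    (r := fun i => ((f i).1 : K)) hFσ hf (hv.comp hσ) (fun k => hω (σ k)) fun i z hz a ha m hm => by
      have hr := (f i).1.2
      have hm₁ := (f i).2.2
      rw [← h (z + (f i).1) (by omega) a ha ((f i).2 + m) (by omega)]
      refine Fintype.sum_of_injective σ hσ _ _ (fun y hy => by simp [hF0 y hy]) fun k => ?_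
      simp only [Matrix.of_apply, Function.comp_apply]
      push_cast
      ring
  have hlt : ∑ k, (F (σ k)).natDegree < n * L :=
    (sum_lt_sum_of_nonempty ⟨⟨0, hn0⟩, mem_univ _⟩ fun k _ => hF (σ k)).trans_eq (by simp)
  refine absurd (hcount.trans_lt hlt) (not_lt.2 ?_)
  rcases le_total M₂ n with hMn | hMn
  · rw [min_eq_left hMn]
    nlinarith [Nat.mul_le_mul_right L hn]
  · rw [min_eq_right hMn]
    nlinarith [Nat.mul_le_mul_right n hS]

end ZeroEstimates

section CoeffAbsSum

variable {R : Type*} [Ring R] [LinearOrder R] [IsStrictOrderedRing R]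

/-- The sum of the absolute values of the coefficients of a polynomial (its length), which bounds
each of them and, unlike their maximum, is submultiplicative. -/
def coeffAbsSum (f : R[X]) : R := f.sum fun _ a => |a|

theorem coeffAbsSum_eq_sum_range {f : R[X]} {n : ℕ} (h : f.natDegree < n) :
    coeffAbsSum f = ∑ i ∈ range n, |f.coeff i| :=
  sum_over_range' _ (by simp) _ h

theorem coeffAbsSum_nonneg (f : R[X]) : 0 ≤ coeffAbsSum f :=
  sum_nonneg fun _ _ => abs_nonneg _

theorem abs_coeff_le_coeffAbsSum (f : R[X]) (m : ℕ) : |f.coeff m| ≤ coeffAbsSum f := by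
  rw [coeffAbsSum_eq_sum_range (n := max f.natDegree m + 1) (Nat.lt_succ_of_le (le_max_left _ _))]
  exact single_le_sum (f := fun i => |f.coeff i|) (fun i _ => abs_nonneg _)
    (mem_range.2 (Nat.lt_succ_of_le (le_max_right _ _)))

theorem coeffAbsSum_one : coeffAbsSum (1 : R[X]) = 1 := by
  rw [coeffAbsSum_eq_sum_range (n := 1) (by simp)]
  simp

theorem coeffAbsSum_add_le (f g : R[X]) : coeffAbsSum (f + g) ≤ coeffAbsSum f + coeffAbsSum g := by
  let n := max f.natDegree g.natDegree + 1
  rw [coeffAbsSum_eq_sum_range (n := n) (Nat.lt_succ_of_le (natDegree_add_le f g)),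
    coeffAbsSum_eq_sum_range (f := f) (n := n) (Nat.lt_succ_of_le (le_max_left _ _)),
    coeffAbsSum_eq_sum_range (f := g) (n := n) (Nat.lt_succ_of_le (le_max_right _ _)),
    ← sum_add_distrib]
  exact sum_le_sum fun i _ => by rw [coeff_add]; exact abs_add_le _ _

theorem coeffAbsSum_monomial_mul (n : ℕ) (a : R) (g : R[X]) :
    coeffAbsSum (monomial n a * g) = |a| * coeffAbsSum g := by
  have hdeg : (monomial n a * g).natDegree < n + (g.natDegree + 1) :=
    natDegree_mul_le.trans_lt (by have := natDegree_monomial_le a (m := n); omega)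
  rw [coeffAbsSum_eq_sum_range hdeg, coeffAbsSum_eq_sum_range (Nat.lt_succ_self _), sum_range_add,
    mul_sum, sum_eq_zero, zero_add]
  · exact sum_congr rfl fun i _ => by rw [add_comm, coeff_monomial_mul, abs_mul]
  · intro i hi
    rw [← C_mul_X_pow_eq_monomial, mul_assoc, coeff_C_mul, coeff_X_pow_mul',
      if_neg (mem_range.1 hi).not_ge, mul_zero, abs_zero]

theorem coeffAbsSum_mul_le (f g : R[X]) : coeffAbsSum (f * g) ≤ coeffAbsSum f * coeffAbsSum g := by
  have hpartial : ∀ s : Finset ℕ, coeffAbsSum ((∑ i ∈ s, monomial i (f.coeff i)) * g) ≤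
      (∑ i ∈ s, |f.coeff i|) * coeffAbsSum g := by
    intro s
    induction s using Finset.induction_on with
    | empty => simp [coeffAbsSum]
    | insert a s ha ih =>
      rw [sum_insert ha, sum_insert ha, add_mul, add_mul, ← coeffAbsSum_monomial_mul a]
      grw [coeffAbsSum_add_le, ih]
  have hsupport := hpartial f.support
  rwa [← as_sum_support] at hsupport

theorem coeffAbsSum_pow_le {f : R[X]} {c : R} (h : coeffAbsSum f ≤ c) (n : ℕ) :
    coeffAbsSum (f ^ n) ≤ c ^ n := by
  induction n with
  | zero => simp [coeffAbsSum_one]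
  | succ n ih =>
    rw [pow_succ, pow_succ]
    exact (coeffAbsSum_mul_le _ _).trans (mul_le_mul ih h (coeffAbsSum_nonneg _)
      ((coeffAbsSum_nonneg _).trans ih))

end CoeffAbsSum

section BinomialPolynomials

/-- The binomial polynomial `X (X - 1) ⋯ (X - r + 1) / r!`. -/
noncomputable def binomPoly (r : ℕ) : ℚ[X] := C ((r.factorial : ℚ)⁻¹) * descPochhammer ℚ r

theorem binomPoly_zero : binomPoly 0 = 1 := by simp [binomPoly]

theorem natDegree_binomPoly (r : ℕ) : (binomPoly r).natDegree = r := by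
  rw [binomPoly, natDegree_C_mul (inv_ne_zero (by exact_mod_cast r.factorial_ne_zero)),
    descPochhammer_natDegree]

theorem binomPoly_ne_zero (r : ℕ) : binomPoly r ≠ 0 :=
  mul_ne_zero (C_ne_zero.2 (inv_ne_zero (by exact_mod_cast r.factorial_ne_zero)))
    (monic_descPochhammer ℚ r).ne_zero

theorem binomPoly_eval_natCast (r n : ℕ) : (binomPoly r).eval (n : ℚ) = n.choose r := by
  rw [binomPoly, eval_C_mul, descPochhammer_eval_eq_descFactorial,
    Nat.descFactorial_eq_factorial_mul_choose, Nat.cast_mul,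
    inv_mul_cancel_left₀ (by exact_mod_cast r.factorial_ne_zero)]

theorem binomPoly_succ (r : ℕ) : binomPoly (r + 1) =
    (C (((r + 1 : ℕ) : ℚ)⁻¹) * X - C (r * ((r + 1 : ℕ) : ℚ)⁻¹)) * binomPoly r := by
  rw [binomPoly, binomPoly, descPochhammer_succ_right, Nat.factorial_succ, Nat.cast_mul, mul_inv,
    C_mul, C_mul, C_eq_natCast]
  ring

theorem binomPoly_succ_eq_prod (r : ℕ) : binomPoly (r + 1) =
    C (((r + 1 : ℕ) : ℚ)⁻¹) * X * ∏ i ∈ range r, (C (((i + 1 : ℕ) : ℚ)⁻¹) * X - 1) := by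
  induction r with
  | zero => simp [binomPoly]
  | succ r ih =>
    have hr : C ((r + 1 : ℕ) : ℚ) * C (((r + 1 : ℕ) : ℚ)⁻¹) = 1 := by
      rw [← C_mul, mul_inv_cancel₀ (by positivity), C_1]
    rw [binomPoly_succ, ih, prod_range_succ, C_mul]
    linear_combination -(C (((r + 1 + 1 : ℕ) : ℚ)⁻¹) * X *
      ∏ i ∈ range r, (C (((i + 1 : ℕ) : ℚ)⁻¹) * X - 1)) * hr

theorem taylor_one_binomPoly_succ (r : ℕ) :
    taylor 1 (binomPoly (r + 1)) = binomPoly (r + 1) + binomPoly r := by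
  refine eq_of_infinite_eval_eq _ _ (Set.Infinite.mono ?_
    (Set.infinite_range_of_injective (Nat.cast_injective (R := ℚ))))
  rintro _ ⟨n, rfl⟩
  rw [Set.mem_ofPred_eq, taylor_eval, ← Nat.cast_succ, eval_add, binomPoly_eval_natCast,
    binomPoly_eval_natCast, binomPoly_eval_natCast, Nat.choose_succ_succ, Nat.cast_add, add_comm]

theorem taylor_succ_binomPoly_succ (z r : ℕ) :
    taylor ((z + 1 : ℕ) : ℚ) (binomPoly (r + 1)) =
      taylor (z : ℚ) (binomPoly (r + 1)) + taylor (z : ℚ) (binomPoly r) := by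
  rw [Nat.cast_succ, ← taylor_taylor, taylor_one_binomPoly_succ, map_add]

/-- The ring of rational polynomials `f` such that `f (d X)` has integral coefficients; it records
the powers of `d` needed to clear the denominators of the coefficients of `f`. -/
noncomputable def dilationIntegral (d : ℕ) : Subring ℚ[X] :=
  (mapRingHom (Int.castRingHom ℚ)).range.comap (compRingHom (C (d : ℚ) * X))

theorem inv_mul_X_mem_dilationIntegral {d r : ℕ} (hd : d ≠ 0) (h : r ∣ d) :
    C ((r : ℚ)⁻¹) * X ∈ dilationIntegral d := by
  obtain ⟨k, rfl⟩ := h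
  have hr : (r : ℚ) ≠ 0 := by exact_mod_cast left_ne_zero_of_mul hd
  refine ⟨C (k : ℤ) * X, ?_⟩
  rw [coe_compRingHom_apply, mul_comp, C_comp, X_comp, ← mul_assoc, ← C_mul, Nat.cast_mul,
    inv_mul_cancel_left₀ hr]
  simp

theorem exists_int_eq_pow_mul_coeff {d : ℕ} {f : ℚ[X]} (hf : f ∈ dilationIntegral d) (m : ℕ) :
    ∃ k : ℤ, (d : ℚ) ^ m * f.coeff m = k := by
  obtain ⟨g, hg⟩ := hf
  refine ⟨g.coeff m, ?_⟩
  rw [mul_comm, ← comp_C_mul_X_coeff, ← coe_compRingHom_apply, ← hg]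
  simp

variable {d h : ℕ}

theorem binomPoly_mem_dilationIntegral (hd₀ : d ≠ 0) (hd : ∀ i, 1 ≤ i → i ≤ h → i ∣ d) {r : ℕ}
    (hr : r ≤ h) : binomPoly r ∈ dilationIntegral d := by
  cases r with
  | zero => rw [binomPoly_zero]; exact one_mem _
  | succ r =>
    have hX : ∀ i ≤ r, C (((i + 1 : ℕ) : ℚ)⁻¹) * X ∈ dilationIntegral d := fun i hi =>
      inv_mul_X_mem_dilationIntegral hd₀ (hd _ (by omega) (by omega))
    rw [binomPoly_succ_eq_prod]
    exact mul_mem (hX r le_rfl) (prod_mem fun i hi => sub_mem (hX i (mem_range.1 hi).le)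
      (one_mem _))

theorem taylor_binomPoly_mem_dilationIntegral (hd₀ : d ≠ 0) (hd : ∀ i, 1 ≤ i → i ≤ h → i ∣ d)
    (z : ℕ) {r : ℕ} (hr : r ≤ h) : taylor (z : ℚ) (binomPoly r) ∈ dilationIntegral d := by
  induction z generalizing r with
  | zero => simpa using binomPoly_mem_dilationIntegral hd₀ hd hr
  | succ z ih =>
    cases r with
    | zero => rw [binomPoly_zero, taylor_one]; exact one_mem _
    | succ r =>
      rw [taylor_succ_binomPoly_succ]
      exact add_mem (ih hr) (ih (by omega))

theorem coeffAbsSum_binomPoly_le_one (r : ℕ) : coeffAbsSum (binomPoly r) ≤ 1 := by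
  induction r with
  | zero => rw [binomPoly_zero, coeffAbsSum_one]
  | succ r ih =>
    have hcoeff : |((r + 1 : ℕ) : ℚ)⁻¹| + |-(r * ((r + 1 : ℕ) : ℚ)⁻¹)| = 1 := by
      rw [abs_neg, abs_of_nonneg (by positivity), abs_of_nonneg (by positivity)]
      push_cast
      field_simp
      ring
    rw [binomPoly_succ, sub_eq_add_neg, ← C_neg, C_mul_X_eq_monomial, ← monomial_zero_left, add_mul]
    refine (coeffAbsSum_add_le _ _).trans ?_
    rwa [coeffAbsSum_monomial_mul, coeffAbsSum_monomial_mul, ← add_mul, hcoeff, one_mul]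

theorem coeffAbsSum_taylor_binomPoly_le (z r : ℕ) :
    coeffAbsSum (taylor (z : ℚ) (binomPoly r)) ≤ (z + r).choose r := by
  induction z generalizing r with
  | zero => simpa using coeffAbsSum_binomPoly_le_one r
  | succ z ih =>
    cases r with
    | zero => rw [binomPoly_zero, taylor_one, C_1, coeffAbsSum_one]; simp
    | succ r =>
      have hchoose : (z + (r + 1)).choose (r + 1) + (z + r).choose r ≤
          (z + 1 + (r + 1)).choose (r + 1) := by
        rw [show z + 1 + (r + 1) = (z + (r + 1)) + 1 by ring, Nat.choose_succ_succ, add_comm]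
        exact Nat.add_le_add_right (Nat.choose_le_choose r (by omega)) _
      rw [taylor_succ_binomPoly_succ]
      refine (coeffAbsSum_add_le _ _).trans ((add_le_add (ih (r + 1)) (ih r)).trans ?_)
      exact_mod_cast hchoose

end BinomialPolynomials

section FeldmanPolynomials

/-- Feldman's polynomial of degree `i`: a product of binomial polynomials of degree at most `h`. It
replaces `X ^ i` in the auxiliary function because the values of its Hasse derivatives at integers
have small denominators. -/
noncomputable def feldmanPoly (h i : ℕ) : ℚ[X] := binomPoly h ^ (i / h) * binomPoly (i % h)

theorem feldmanPoly_ne_zero (h i : ℕ) : feldmanPoly h i ≠ 0 :=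
  mul_ne_zero (pow_ne_zero _ (binomPoly_ne_zero _)) (binomPoly_ne_zero _)

theorem natDegree_feldmanPoly (h i : ℕ) : (feldmanPoly h i).natDegree = i := by
  rw [feldmanPoly, natDegree_mul (pow_ne_zero _ (binomPoly_ne_zero _)) (binomPoly_ne_zero _),
    natDegree_pow, natDegree_binomPoly, natDegree_binomPoly, Nat.div_add_mod']

theorem linearIndependent_feldmanPoly (h : ℕ) : LinearIndependent ℚ (feldmanPoly h) := by
  let S : Polynomial.Sequence ℚ := ⟨feldmanPoly h, fun i => by
    rw [degree_eq_natDegree (feldmanPoly_ne_zero h i), natDegree_feldmanPoly]⟩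
  exact S.linearIndependent

variable {d h l i : ℕ}

theorem taylor_feldmanPoly_mem_dilationIntegral (hh : 0 < h) (hd₀ : d ≠ 0)
    (hd : ∀ i, 1 ≤ i → i ≤ h → i ∣ d) (z i : ℕ) :
    taylor (z : ℚ) (feldmanPoly h i) ∈ dilationIntegral d := by
  rw [feldmanPoly, taylor_mul, taylor_pow]
  exact mul_mem (pow_mem (taylor_binomPoly_mem_dilationIntegral hd₀ hd z le_rfl) _)
    (taylor_binomPoly_mem_dilationIntegral hd₀ hd z (Nat.mod_lt _ hh).le)

theorem coeffAbsSum_taylor_feldmanPoly_le (hh : 0 < h) (hi : i < l * h) (z : ℕ) :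
    coeffAbsSum (taylor (z : ℚ) (feldmanPoly h i)) ≤ ((z + h).choose h : ℚ) ^ l := by
  have hmod : coeffAbsSum (taylor (z : ℚ) (binomPoly (i % h))) ≤ ((z + h).choose h : ℚ) := by
    refine (coeffAbsSum_taylor_binomPoly_le z _).trans ?_
    rw [← Nat.choose_symm_add, ← Nat.choose_symm_add]
    exact_mod_cast Nat.choose_le_choose z (Nat.add_le_add_left (Nat.mod_lt i hh).le z)
  have hone : (1 : ℚ) ≤ (z + h).choose h := by exact_mod_cast Nat.choose_pos (by omega)
  rw [feldmanPoly, taylor_mul, taylor_pow]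
  calc _ ≤ ((z + h).choose h : ℚ) ^ (i / h) * (z + h).choose h :=
        (coeffAbsSum_mul_le _ _).trans (mul_le_mul
          (coeffAbsSum_pow_le (coeffAbsSum_taylor_binomPoly_le z h) _) hmod
          (coeffAbsSum_nonneg _) (by positivity))
    _ = ((z + h).choose h : ℚ) ^ (i / h + 1) := (pow_succ _ _).symm
    _ ≤ _ := pow_le_pow_right₀ hone (Nat.succ_le_of_lt ((Nat.div_lt_iff_lt_mul hh).2 hi))

theorem exists_int_eq_pow_mul_hasseDeriv_feldmanPoly (hh : 0 < h) (hd₀ : d ≠ 0)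
    (hd : ∀ i, 1 ≤ i → i ≤ h → i ∣ d) (hi : i < l * h) (z m : ℕ) :
    ∃ k : ℤ, (d : ℚ) ^ m * (hasseDeriv m (feldmanPoly h i)).eval (z : ℚ) = k ∧
      |k| ≤ (d : ℤ) ^ m * ((z + h).choose h : ℤ) ^ l := by
  obtain ⟨k, hk⟩ :=
    exists_int_eq_pow_mul_coeff (taylor_feldmanPoly_mem_dilationIntegral hh hd₀ hd z i) m
  have hcoeff := (abs_coeff_le_coeffAbsSum _ m).trans (coeffAbsSum_taylor_feldmanPoly_le hh hi z)
  rw [taylor_coeff] at hk hcoeff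
  have hbound : |(k : ℚ)| ≤ (d : ℚ) ^ m * ((z + h).choose h : ℚ) ^ l := by
    rw [← hk, abs_mul, abs_of_nonneg (by positivity : (0 : ℚ) ≤ (d : ℚ) ^ m)]
    gcongr
  exact ⟨k, hk, by exact_mod_cast hbound⟩

end FeldmanPolynomials

theorem ultrametric_norm_add_le {E : Type*} [SeminormedAddGroup E] [IsUltrametricDist E] {a b : E}
    {c : ℝ} (ha : ‖a‖ ≤ c) (hb : ‖b‖ ≤ c) : ‖a + b‖ ≤ c :=
  (IsUltrametricDist.norm_add_le_max a b).trans (max_le ha hb)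

theorem ultrametric_norm_mul_natCast_le {R : Type*} [SeminormedRing R] [NormOneClass R]
    [IsUltrametricDist R] {u : R} {c : ℝ} (hu : ‖u‖ ≤ c) (n : ℕ) : ‖u * n‖ ≤ c :=
  (norm_mul_le _ _).trans ((mul_le_of_le_one_right (norm_nonneg _)
    (IsUltrametricDist.norm_natCast_le_one R n)).trans hu)

theorem one_lt_sqrt_three : 1 < √3 := by
  rw [Real.lt_sqrt zero_le_one]
  norm_num

theorem inv_sqrt_three_lt_one : (√3)⁻¹ < 1 := inv_lt_one_of_one_lt₀ one_lt_sqrt_three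

section PadicFactorial

variable {p : ℕ} [hp : Fact p.Prime]

theorem padic_norm_factorial_pos (n : ℕ) : 0 < ‖(n.factorial : ℚ_[p])‖ :=
  norm_pos_iff.2 (by exact_mod_cast n.factorial_ne_zero)

theorem padic_norm_factorial (n : ℕ) :
    ‖(n.factorial : ℚ_[p])‖ = ((p : ℝ) ^ padicValNat p n.factorial)⁻¹ := by
  rw [Padic.norm_eq_zpow_neg_valuation (norm_pos_iff.1 (padic_norm_factorial_pos n)),
    Padic.valuation_natCast, zpow_neg, zpow_natCast]

theorem inv_padic_norm_factorial_le (n : ℕ) : ‖(n.factorial : ℚ_[p])‖⁻¹ ≤ 2 ^ n := by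
  have hv : (p - 1) * padicValNat p n.factorial ≤ n :=
    (sub_one_mul_padicValNat_factorial n).trans_le (Nat.sub_le _ _)
  have hp2 : p ≤ 2 ^ (p - 1) := by
    have := (p - 1).lt_two_pow_self
    have := hp.out.pos
    omega
  rw [padic_norm_factorial, inv_inv]
  calc (p : ℝ) ^ padicValNat p n.factorial ≤ ((2 : ℝ) ^ (p - 1)) ^ padicValNat p n.factorial := by
        gcongr
        exact_mod_cast hp2
    _ = 2 ^ ((p - 1) * padicValNat p n.factorial) := (pow_mul _ _ _).symm
    _ ≤ 2 ^ n := pow_le_pow_right₀ one_le_two hv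

end PadicFactorial

section PadicExponential

/-- A radius on which the `p`-adic exponential converges, small enough that
`‖u ^ b / b!‖ ≤ √3 ^ (-b)` whenever `‖u‖ ≤ expRadius p`. -/
noncomputable def expRadius (p : ℕ) : ℝ := if p = 2 then 1 / 8 else 1 / p

variable {p : ℕ} [hp : Fact p.Prime]

theorem expRadius_pos : 0 < expRadius p := by
  have := hp.out.pos
  unfold expRadius
  split_ifs <;> positivity

theorem expRadius_le_third : expRadius p ≤ 1 / 3 := by
  have := hp.out.two_le
  unfold expRadius
  split_ifs with h
  · norm_num
  · have h3 : (3 : ℝ) ≤ p := by exact_mod_cast (by omega : 3 ≤ p)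
    exact one_div_le_one_div_of_le (by norm_num) h3

theorem expRadius_mul_sqrt_three_pow_le (b : ℕ) :
    (expRadius p * √3) ^ b ≤ ‖((b + 1).factorial : ℚ_[p])‖ := by
  have hp2 := hp.out.two_le
  have hv := sub_one_mul_padicValNat_factorial_lt_of_ne_zero p (Nat.succ_ne_zero b)
  rw [padic_norm_factorial, ← inv_pow]
  set v := padicValNat p (b + 1).factorial
  unfold expRadius
  split_ifs with h
  · subst h
    have hbase : 1 / 8 * √3 ≤ 1 / 2 := by
      linarith [(Real.sqrt_le_left (y := 4) (by norm_num)).2 (by norm_num : (3 : ℝ) ≤ 4 ^ 2)]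
    calc (1 / 8 * √3) ^ b ≤ (1 / 2) ^ b := by gcongr
      _ ≤ (1 / 2) ^ v := pow_le_pow_of_le_one (by norm_num) (by norm_num) (by omega)
      _ = _ := by norm_num
  · have h3 : 3 ≤ p := by omega
    have h3' : (3 : ℝ) ≤ p := by exact_mod_cast h3
    have hvb : 2 * v ≤ b := by
      have : 2 * v ≤ (p - 1) * v := Nat.mul_le_mul_right _ (by omega)
      omega
    have hbase : (1 / p * √3) ^ 2 ≤ (p : ℝ)⁻¹ := by
      rw [mul_pow, Real.sq_sqrt (by norm_num)]
      field_simp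
      exact h3'
    have hbase' : 1 / p * √3 ≤ 1 :=
      (sq_le_one_iff₀ (by positivity)).1 (hbase.trans (inv_le_one_of_one_le₀ (by linarith)))
    calc (1 / p * √3) ^ b ≤ (1 / p * √3) ^ (2 * v) :=
          pow_le_pow_of_le_one (by positivity) hbase' hvb
      _ = ((1 / p * √3) ^ 2) ^ v := pow_mul _ _ _
      _ ≤ ((p : ℝ)⁻¹) ^ v := by gcongr

theorem expRadius_mul_sqrt_three_pow_le_factorial (b : ℕ) :
    (expRadius p * √3) ^ b ≤ ‖(b.factorial : ℚ_[p])‖ := by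
  refine (expRadius_mul_sqrt_three_pow_le b).trans ?_
  rw [Nat.factorial_succ, Nat.cast_mul, norm_mul]
  refine mul_le_of_le_one_left (norm_nonneg _) ?_
  exact IsUltrametricDist.norm_natCast_le_one ℚ_[p] (b + 1)

theorem padic_norm_pow_div_factorial_le {u : ℚ_[p]} (hu : ‖u‖ ≤ expRadius p) (b : ℕ) :
    ‖u ^ b / b.factorial‖ ≤ (√3)⁻¹ ^ b := by
  rw [norm_div, norm_pow, div_le_iff₀ (padic_norm_factorial_pos b)]
  calc ‖u‖ ^ b ≤ expRadius p ^ b := by gcongr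
    _ = (√3)⁻¹ ^ b * (expRadius p * √3) ^ b := by
      rw [← mul_pow]; congr 1; field_simp
    _ ≤ _ := by gcongr; exact expRadius_mul_sqrt_three_pow_le_factorial b

theorem padic_norm_pow_succ_div_factorial_le {u : ℚ_[p]} (hu : ‖u‖ ≤ expRadius p) (b : ℕ) :
    ‖u ^ (b + 1) / (b + 1).factorial‖ ≤ ‖u‖ * (√3)⁻¹ ^ b := by
  rw [norm_div, norm_pow, div_le_iff₀ (padic_norm_factorial_pos _), pow_succ, mul_comm _ ‖u‖,
    mul_assoc]
  gcongr
  calc ‖u‖ ^ b ≤ expRadius p ^ b := by gcongr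
    _ = (√3)⁻¹ ^ b * (expRadius p * √3) ^ b := by
      rw [← mul_pow]; congr 1; field_simp
    _ ≤ _ := by gcongr; exact expRadius_mul_sqrt_three_pow_le b

theorem mem_eball_expSeries_radius {u : ℚ_[p]} (hu : ‖u‖ ≤ expRadius p) :
    u ∈ Metric.eball (0 : ℚ_[p]) (NormedSpace.expSeries ℚ_[p] ℚ_[p]).radius := by
  have hpos : 0 < expRadius p * √3 := mul_pos expRadius_pos (by positivity)
  have hradius : ((Real.toNNReal (expRadius p * √3) : NNReal) : ENNReal) ≤
      (NormedSpace.expSeries ℚ_[p] ℚ_[p]).radius := by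
    refine FormalMultilinearSeries.le_radius_of_bound _ 1 fun n => ?_
    have hn : ‖NormedSpace.expSeries ℚ_[p] ℚ_[p] n‖ ≤ ‖(n.factorial : ℚ_[p])‖⁻¹ := by
      rw [NormedSpace.expSeries, norm_smul, norm_inv]
      exact mul_le_of_le_one_right (by positivity)
        (ContinuousMultilinearMap.norm_mkPiAlgebraFin (𝕜 := ℚ_[p]) (A := ℚ_[p])).le
    rw [Real.coe_toNNReal _ hpos.le]
    calc _ ≤ ‖(n.factorial : ℚ_[p])‖⁻¹ * (expRadius p * √3) ^ n := by
          exact mul_le_mul_of_nonneg_right hn (by positivity)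
      _ ≤ ‖(n.factorial : ℚ_[p])‖⁻¹ * ‖(n.factorial : ℚ_[p])‖ := by
          gcongr; exact expRadius_mul_sqrt_three_pow_le_factorial n
      _ ≤ 1 := inv_mul_le_one
  rw [mem_eball_zero_iff]
  refine lt_of_lt_of_le ?_ hradius
  rw [← ofReal_norm, ENNReal.ofReal_lt_coe_iff (norm_nonneg _), Real.coe_toNNReal _ hpos.le]
  refine hu.trans_lt ?_
  have : 1 < √3 := by rw [Real.lt_sqrt (by norm_num)]; norm_num
  nlinarith [expRadius_pos (p := p)]

theorem padic_hasSum_exp {u : ℚ_[p]} (hu : ‖u‖ ≤ expRadius p) :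
    HasSum (fun n => u ^ n / n.factorial) (NormedSpace.exp u) := by
  have := NormedSpace.expSeries_hasSum_exp_of_mem_ball' (𝕂 := ℚ_[p]) u
    (mem_eball_expSeries_radius hu)
  simpa [div_eq_inv_mul] using this

theorem padic_norm_exp_sub_sum_le {u : ℚ_[p]} (hu : ‖u‖ ≤ expRadius p) (I : ℕ) {c : ℝ}
    (hc : ∀ b, ‖u ^ (b + I) / (b + I).factorial‖ ≤ c) :
    ‖NormedSpace.exp u - ∑ b ∈ range I, u ^ b / b.factorial‖ ≤ c := by
  have h := padic_hasSum_exp hu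
  rw [← h.tsum_eq, ← h.summable.sum_add_tsum_nat_add I, add_sub_cancel_left]
  exact IsUltrametricDist.norm_tsum_le_of_forall_le hc

theorem padic_norm_exp_sub_truncation_le {u : ℚ_[p]} (hu : ‖u‖ ≤ expRadius p) (I : ℕ) :
    ‖NormedSpace.exp u - ∑ b ∈ range I, u ^ b / b.factorial‖ ≤ (√3)⁻¹ ^ I :=
  padic_norm_exp_sub_sum_le hu I fun b => (padic_norm_pow_div_factorial_le hu _).trans
    (pow_le_pow_of_le_one (by positivity) inv_sqrt_three_lt_one.le (by omega))

theorem padic_norm_exp_sub_one_le {u : ℚ_[p]} (hu : ‖u‖ ≤ expRadius p) :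
    ‖NormedSpace.exp u - 1‖ ≤ ‖u‖ := by
  have := padic_norm_exp_sub_sum_le hu 1 (c := ‖u‖) fun b =>
    (padic_norm_pow_succ_div_factorial_le hu b).trans
      (mul_le_of_le_one_right (norm_nonneg _)
        (pow_le_one₀ (by positivity) inv_sqrt_three_lt_one.le))
  simpa using this

theorem padic_norm_exp_sub_one_sub_le {u : ℚ_[p]} (hu : ‖u‖ ≤ expRadius p) :
    ‖NormedSpace.exp u - (1 + u)‖ ≤ ‖u‖ * (√3)⁻¹ := by
  have := padic_norm_exp_sub_sum_le hu 2 (c := ‖u‖ * (√3)⁻¹) fun b =>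
    (padic_norm_pow_succ_div_factorial_le hu (b + 1)).trans (by
      gcongr
      exact pow_le_of_le_one (by positivity) inv_sqrt_three_lt_one.le (by omega))
  simpa [sum_range_succ] using this

theorem padic_exp_add_of_norm_le {u v : ℚ_[p]} (hu : ‖u‖ ≤ expRadius p) (hv : ‖v‖ ≤ expRadius p) :
    NormedSpace.exp (u + v) = NormedSpace.exp u * NormedSpace.exp v :=
  NormedSpace.exp_add_of_mem_ball (𝕂 := ℚ_[p]) (mem_eball_expSeries_radius hu)
    (mem_eball_expSeries_radius hv)

theorem padic_exp_mul_natCast {u : ℚ_[p]} (hu : ‖u‖ ≤ expRadius p) (n : ℕ) :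
    NormedSpace.exp (u * n) = NormedSpace.exp u ^ n := by
  induction n with
  | zero => simp
  | succ n ih =>
    rw [Nat.cast_succ, mul_add, mul_one,
      padic_exp_add_of_norm_le (ultrametric_norm_mul_natCast_le hu n) hu, ih, pow_succ]

theorem norm_le_one_of_norm_sub_one_le {θ : ℚ_[p]} (hθ : ‖θ - 1‖ ≤ expRadius p) : ‖θ‖ ≤ 1 := by
  have h := ultrametric_norm_add_le (hθ.trans (expRadius_le_third.trans (by norm_num)))
    (norm_one (α := ℚ_[p])).le
  rwa [sub_add_cancel] at h

theorem norm_mul_padic_exp_neg_sub_one_le {θ u : ℚ_[p]} (hθ : ‖θ - 1‖ ≤ expRadius p)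
    (hu : ‖u‖ ≤ expRadius p) : ‖θ * NormedSpace.exp (-u) - 1‖ ≤ expRadius p := by
  rw [← norm_neg] at hu
  rw [show θ * NormedSpace.exp (-u) - 1 = θ * (NormedSpace.exp (-u) - 1) + (θ - 1) by ring]
  refine ultrametric_norm_add_le ?_ hθ
  rw [norm_mul]
  exact (mul_le_of_le_one_left (norm_nonneg _) (norm_le_one_of_norm_sub_one_le hθ)).trans
    ((padic_norm_exp_sub_one_le hu).trans hu)

theorem norm_one_add_mul_padic_exp_neg_sub_one_lt {w : ℚ_[p]} (hw : ‖w‖ ≤ expRadius p)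
    (hw₀ : w ≠ 0) : ‖(1 + w) * NormedSpace.exp (-w) - 1‖ < ‖w‖ := by
  set R := NormedSpace.exp (-w) - (1 + -w) with hR
  have hw_third : ‖w‖ ≤ 1 / 3 := hw.trans expRadius_le_third
  have hR_le : ‖R‖ ≤ ‖w‖ * (√3)⁻¹ := by
    simpa using padic_norm_exp_sub_one_sub_le (u := -w) (by rwa [norm_neg])
  have hthird : 1 / 3 ≤ (√3)⁻¹ := by
    rw [one_div]
    gcongr
    rw [Real.sqrt_le_left (by norm_num)]
    norm_num
  have hexpand : (1 + w) * NormedSpace.exp (-w) - 1 = -(w * w) + (R + w * R) := by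
    rw [hR]
    ring
  have hle : ‖(1 + w) * NormedSpace.exp (-w) - 1‖ ≤ ‖w‖ * (√3)⁻¹ := by
    rw [hexpand]
    refine ultrametric_norm_add_le ?_ (ultrametric_norm_add_le hR_le ?_)
    · rw [norm_neg, norm_mul]
      gcongr
      exact hw_third.trans hthird
    · rw [norm_mul]
      exact (mul_le_of_le_one_left (norm_nonneg _) (by linarith)).trans hR_le
  exact hle.trans_lt (mul_lt_of_lt_one_right (norm_pos_iff.2 hw₀) inv_sqrt_three_lt_one)

-- `u` minimises `‖θ * exp (-u) - 1‖` on a compact ball: were the minimum `‖w‖` positive, the Newton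
-- step from `u` to `u + w` would decrease it.
theorem exists_padic_exp_eq {θ : ℚ_[p]} (hθ : ‖θ - 1‖ ≤ expRadius p) :
    ∃ u : ℚ_[p], ‖u‖ ≤ expRadius p ∧ NormedSpace.exp u = θ := by
  have hcont : ContinuousOn (fun u : ℚ_[p] => ‖θ * NormedSpace.exp (-u) - 1‖)
      (Metric.closedBall 0 (expRadius p)) := by
    refine ((continuousOn_const.mul ?_).sub continuousOn_const).norm
    refine (NormedSpace.continuousOn_exp (𝕂 := ℚ_[p])).comp continuousOn_neg fun u hu => ?_
    exact mem_eball_expSeries_radius (by simpa using hu)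
  obtain ⟨u, hu, hmin⟩ := (isCompact_closedBall (0 : ℚ_[p]) (expRadius p)).exists_isMinOn
    ⟨0, by simpa using expRadius_pos.le⟩ hcont
  rw [mem_closedBall_zero_iff] at hu
  have hu' : ‖-u‖ ≤ expRadius p := by rwa [norm_neg]
  set w := θ * NormedSpace.exp (-u) - 1 with hw
  have hθw : θ * NormedSpace.exp (-u) = 1 + w := by rw [hw, add_sub_cancel]
  have hwle : ‖w‖ ≤ expRadius p := norm_mul_padic_exp_neg_sub_one_le hθ hu
  have hexp : NormedSpace.exp (-u) * NormedSpace.exp u = 1 := by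
    rw [← padic_exp_add_of_norm_le hu' hu, neg_add_cancel, NormedSpace.exp_zero]
  suffices hw₀ : w = 0 by
    refine ⟨u, hu, ?_⟩
    rw [← mul_one θ, ← hexp, ← mul_assoc, hθw, hw₀, add_zero, one_mul]
  by_contra hw₀
  have hnewton : θ * NormedSpace.exp (-(u + w)) = (1 + w) * NormedSpace.exp (-w) := by
    rw [neg_add, padic_exp_add_of_norm_le hu' (by rwa [norm_neg]), ← mul_assoc, hθw]
  have hle : ‖w‖ ≤ ‖θ * NormedSpace.exp (-(u + w)) - 1‖ :=
    hmin (mem_closedBall_zero_iff.2 (ultrametric_norm_add_le hu hwle))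
  rw [hnewton] at hle
  exact hle.not_gt (norm_one_add_mul_padic_exp_neg_sub_one_lt hwle hw₀)

end PadicExponential

section GaussNorm

variable {K : Type*} [NormedField K]

/-- The Gauss norm `max ‖f.coeff i‖ * r ^ i` of `f` on the disc of radius `r`, with respect to the
norm of the field of coefficients. -/
noncomputable abbrev discNorm (r : ℝ) (f : K[X]) : ℝ :=
  f.gaussNorm (NormedField.toAbsoluteValue K) r

theorem discNorm_le {r c : ℝ} {f : K[X]} (h : ∀ i, ‖f.coeff i‖ * r ^ i ≤ c) :
    discNorm r f ≤ c := by
  obtain ⟨i, hi⟩ := f.exists_eq_gaussNorm (NormedField.toAbsoluteValue K) r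
  exact hi.trans_le (h i)

theorem norm_coeff_mul_pow_le_discNorm {r : ℝ} (hr : 0 ≤ r) (f : K[X]) (i : ℕ) :
    ‖f.coeff i‖ * r ^ i ≤ discNorm r f :=
  f.le_gaussNorm (NormedField.toAbsoluteValue K) hr i

theorem discNorm_nonneg {r : ℝ} (hr : 0 ≤ r) (f : K[X]) : 0 ≤ discNorm r f :=
  f.gaussNorm_nonneg _ hr

theorem discNorm_C (r : ℝ) (a : K) : discNorm r (C a) = ‖a‖ :=
  gaussNorm_C _ _ _

theorem discNorm_monomial (r : ℝ) (n : ℕ) (a : K) : discNorm r (monomial n a) = ‖a‖ * r ^ n :=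
  gaussNorm_monomial _ _ _ _

variable [IsUltrametricDist K]

theorem norm_eval_le_discNorm {r : ℝ} (f : K[X]) {z : K} (hz : ‖z‖ ≤ r) :
    ‖f.eval z‖ ≤ discNorm r f := by
  have hr := (norm_nonneg z).trans hz
  rw [eval_eq_sum_range]
  refine IsUltrametricDist.norm_sum_le_of_forall_le_of_nonneg (discNorm_nonneg hr f) fun b _ => ?_
  rw [norm_mul, norm_pow]
  exact le_trans (by gcongr) (norm_coeff_mul_pow_le_discNorm hr f b)

theorem discNorm_divByMonic_X_sub_C_le {r : ℝ} (hr : 0 < r) (f : K[X]) {x : K} (hx : ‖x‖ ≤ r) :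
    discNorm r (f /ₘ (X - C x)) ≤ discNorm r f / r := by
  have hf := discNorm_nonneg hr.le f
  refine discNorm_le fun b => ?_
  rw [coeff_divByMonic_X_sub_C, le_div_iff₀ hr, mul_assoc, ← pow_succ,
    ← le_div_iff₀ (by positivity)]
  refine IsUltrametricDist.norm_sum_le_of_forall_le_of_nonneg (by positivity) fun i hi => ?_
  rw [norm_mul, norm_pow, le_div_iff₀ (by positivity)]
  refine le_trans ?_ (norm_coeff_mul_pow_le_discNorm hr.le f i)
  calc ‖x‖ ^ (i - (b + 1)) * ‖f.coeff i‖ * r ^ (b + 1)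
      ≤ r ^ (i - (b + 1)) * ‖f.coeff i‖ * r ^ (b + 1) := by gcongr
    _ = ‖f.coeff i‖ * (r ^ (i - (b + 1)) * r ^ (b + 1)) := by ring
    _ = ‖f.coeff i‖ * r ^ i := by rw [← pow_add, Nat.sub_add_cancel (mem_Icc.1 hi).1]

theorem discNorm_mul_le {r : ℝ} (hr : 0 ≤ r) (f g : K[X]) :
    discNorm r (f * g) ≤ discNorm r f * discNorm r g :=
  gaussNorm_mul_le _ IsUltrametricDist.isNonarchimedean_norm f g hr

theorem discNorm_pow_le {r : ℝ} (hr : 0 ≤ r) (f : K[X]) (n : ℕ) :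
    discNorm r (f ^ n) ≤ discNorm r f ^ n := by
  induction n with
  | zero => simp [← C_1, -map_one]
  | succ n ih =>
    rw [pow_succ, pow_succ]
    exact (discNorm_mul_le hr _ _).trans (mul_le_mul_of_nonneg_right ih (discNorm_nonneg hr f))

theorem discNorm_sum_le {ι : Type*} {s : Finset ι} {r c : ℝ} (hr : 0 < r) (hc : 0 ≤ c)
    {f : ι → K[X]} (hf : ∀ i ∈ s, discNorm r (f i) ≤ c) : discNorm r (∑ i ∈ s, f i) ≤ c := by
  refine discNorm_le fun b => ?_
  rw [finsetSum_coeff, ← le_div_iff₀ (by positivity)]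
  refine IsUltrametricDist.norm_sum_le_of_forall_le_of_nonneg (by positivity) fun i hi => ?_
  rw [le_div_iff₀ (by positivity)]
  exact (norm_coeff_mul_pow_le_discNorm hr.le _ b).trans (hf i hi)

theorem discNorm_hasseDeriv_le {r : ℝ} (hr : 1 ≤ r) (f : K[X]) (m : ℕ) :
    discNorm r (hasseDeriv m f) ≤ discNorm r f := by
  have hr₀ : 0 ≤ r := zero_le_one.trans hr
  refine discNorm_le fun b => ?_
  rw [hasseDeriv_coeff, norm_mul]
  refine le_trans ?_ (norm_coeff_mul_pow_le_discNorm hr₀ f (b + m))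
  calc _ ≤ 1 * ‖f.coeff (b + m)‖ * r ^ (b + m) := by
        gcongr
        · exact IsUltrametricDist.norm_natCast_le_one K _
        · omega
    _ = _ := by rw [one_mul]

end GaussNorm

section DivisionByLinearFactors

variable {R : Type*} [CommRing R]

theorem eq_eval_add_mul_divByMonic (f : R[X]) (x : R) :
    f = C (f.eval x) + (X - C x) * (f /ₘ (X - C x)) := by
  conv_lhs => rw [← modByMonic_add_div f (X - C x), modByMonic_X_sub_C_eq_C_eval]

theorem taylor_eq_eval_add_mul_taylor_divByMonic (f : R[X]) (x s : R) :
    taylor s f = C (f.eval x) + (X + C (s - x)) * taylor s (f /ₘ (X - C x)) := by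
  conv_lhs => rw [eq_eval_add_mul_divByMonic f x]
  rw [map_add, taylor_C, taylor_mul, map_sub, taylor_X, taylor_C, C_sub, add_sub_assoc]

theorem taylor_divByMonic_coeff (f : R[X]) (x : R) (m : ℕ) :
    (taylor x (f /ₘ (X - C x))).coeff m = (taylor x f).coeff (m + 1) := by
  rw [taylor_eq_eval_add_mul_taylor_divByMonic f x x]
  simp

theorem taylor_iterate_divByMonic_coeff (f : R[X]) (x : R) (l m : ℕ) :
    (taylor x ((· /ₘ (X - C x))^[l] f)).coeff m = (taylor x f).coeff (m + l) := by
  induction l generalizing m with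
  | zero => rfl
  | succ l ih =>
    rw [Function.iterate_succ_apply', taylor_divByMonic_coeff, ih, add_right_comm, add_assoc]

end DivisionByLinearFactors

section SchwarzLemma

variable {K : Type*} [NormedField K] [IsUltrametricDist K]

theorem discNorm_iterate_divByMonic_le {r : ℝ} (hr : 0 < r) (f : K[X]) {x : K} (hx : ‖x‖ ≤ r)
    (l : ℕ) : discNorm r ((· /ₘ (X - C x))^[l] f) ≤ discNorm r f / r ^ l := by
  induction l with
  | zero => simp
  | succ l ih =>
    rw [Function.iterate_succ_apply', pow_succ, ← div_div]
    exact (discNorm_divByMonic_X_sub_C_le hr _ hx).trans (by gcongr)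

theorem norm_eval_le_max_iterate_divByMonic {f : K[X]} {x z : K} (hz : ‖z - x‖ ≤ 1) {δ : ℝ} {l : ℕ}
    (hδ : ∀ m < l, ‖(taylor x f).coeff m‖ ≤ δ) :
    ‖f.eval z‖ ≤ max δ ‖((· /ₘ (X - C x))^[l] f).eval z‖ := by
  induction l with
  | zero => exact le_max_right _ _
  | succ l ih =>
    refine (ih fun m hm => hδ m (hm.trans l.lt_succ_self)).trans (max_le (le_max_left _ _) ?_)
    set g := (· /ₘ (X - C x))^[l] f with hg
    have hgx : ‖g.eval x‖ ≤ δ := by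
      rw [← taylor_coeff_zero, hg, taylor_iterate_divByMonic_coeff, zero_add]
      exact hδ l l.lt_succ_self
    have heval : g.eval z = g.eval x + (z - x) * (g /ₘ (X - C x)).eval z := by
      conv_lhs => rw [eq_eval_add_mul_divByMonic g x]
      simp
    rw [Function.iterate_succ_apply', heval]
    refine (IsUltrametricDist.norm_add_le_max _ _).trans (max_le_max hgx ?_)
    rw [norm_mul]
    exact mul_le_of_le_one_left (norm_nonneg _) hz

theorem norm_taylor_divByMonic_coeff_le {f : K[X]} {x s : K} (hne : s ≠ x)
    {e : ℝ} {M : ℕ} (hx : ‖f.eval x‖ ≤ e)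
    (h : ∀ m < M, ‖(taylor s f).coeff m‖ ≤ e * ‖s - x‖⁻¹ ^ m) :
    ∀ m < M, ‖(taylor s (f /ₘ (X - C x))).coeff m‖ ≤ e * ‖s - x‖⁻¹ ^ (m + 1) := by
  have hpos : 0 < ‖s - x‖ := norm_pos_iff.2 (sub_ne_zero.2 hne)
  have hdiv : ∀ (a : K) (k : ℕ), ‖(s - x) * a‖ ≤ e * ‖s - x‖⁻¹ ^ k →
      ‖a‖ ≤ e * ‖s - x‖⁻¹ ^ (k + 1) := fun a k ha => by
    rw [norm_mul, mul_comm, ← le_div_iff₀ hpos] at ha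
    rwa [pow_succ, ← mul_assoc, ← div_eq_mul_inv]
  set g := taylor s (f /ₘ (X - C x))
  have htaylor : taylor s f = C (f.eval x) + (X + C (s - x)) * g :=
    taylor_eq_eval_add_mul_taylor_divByMonic f x s
  intro m
  induction m with
  | zero =>
    intro hm
    have hcoeff : (s - x) * g.coeff 0 = (taylor s f).coeff 0 + -f.eval x := by
      rw [htaylor]
      simp [mul_coeff_zero]
    refine hdiv _ _ (hcoeff ▸ ultrametric_norm_add_le (h 0 hm) ?_)
    simpa using hx
  | succ m ih =>
    intro hm
    have hcoeff : (s - x) * g.coeff (m + 1) = (taylor s f).coeff (m + 1) + -g.coeff m := by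
      rw [htaylor, coeff_add, coeff_C_succ, add_mul, coeff_add, coeff_X_mul, coeff_C_mul]
      ring
    refine hdiv _ _ (hcoeff ▸ ultrametric_norm_add_le (h _ hm) ?_)
    rw [norm_neg]
    exact ih (m.lt_succ_self.trans hm)

theorem norm_taylor_iterate_divByMonic_coeff_le {f : K[X]} {x s : K} (hs : ‖s - x‖ ≤ 1)
    (hne : s ≠ x) {e : ℝ} {l M : ℕ} (hx : ∀ m < l, ‖(taylor x f).coeff m‖ ≤ e)
    (h : ∀ m < M, ‖(taylor s f).coeff m‖ ≤ e * ‖s - x‖⁻¹ ^ m) :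
    ∀ m < M, ‖(taylor s ((· /ₘ (X - C x))^[l] f)).coeff m‖ ≤ e * ‖s - x‖⁻¹ ^ (m + l) := by
  have hone : 1 ≤ ‖s - x‖⁻¹ := (one_le_inv₀ (norm_pos_iff.2 (sub_ne_zero.2 hne))).2 hs
  induction l with
  | zero => exact h
  | succ l ih =>
    intro m hm
    have hl := hx l l.lt_succ_self
    rw [Function.iterate_succ_apply', show m + (l + 1) = l + (m + 1) by ring, pow_add, ← mul_assoc]
    refine norm_taylor_divByMonic_coeff_le hne ?_ (fun m hm => ?_) m hm
    · rw [← taylor_coeff_zero, taylor_iterate_divByMonic_coeff, zero_add]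
      exact hl.trans (le_mul_of_one_le_right ((norm_nonneg _).trans hl) (one_le_pow₀ hone))
    · rw [mul_assoc, ← pow_add, add_comm l]
      exact ih (fun m hm => hx m (hm.trans l.lt_succ_self)) m hm

/-- The quotient of `f` by `∏ s < k, (X - s) ^ M`, obtained by successive division by linear
factors; it is the remainder term of the Hermite interpolation of `f` at `0, …, k - 1`. -/
noncomputable def blockQuotient (M : ℕ) (f : K[X]) : ℕ → K[X]
  | 0 => f
  | k + 1 => (· /ₘ (X - C (k : K)))^[M] (blockQuotient M f k)

theorem norm_natCast_sub_natCast_le_one (m n : ℕ) : ‖(m : K) - n‖ ≤ 1 := by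
  exact_mod_cast IsUltrametricDist.norm_intCast_le_one K ((m : ℤ) - n)

theorem discNorm_blockQuotient_le {r : ℝ} (hr : 1 ≤ r) (M : ℕ) (f : K[X]) (k : ℕ) :
    discNorm r (blockQuotient M f k) ≤ discNorm r f / r ^ (k * M) := by
  have hr₀ : 0 < r := zero_lt_one.trans_le hr
  induction k with
  | zero => simp [blockQuotient]
  | succ k ih =>
    rw [Nat.succ_mul, pow_add, ← div_div]
    refine (discNorm_iterate_divByMonic_le hr₀ _
      ((IsUltrametricDist.norm_natCast_le_one K k).trans hr) M).trans ?_
    gcongr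

variable [CharZero K] {f : K[X]} {ε : ℝ} {S M : ℕ}

theorem inv_norm_natCast_le_of_dvd {m n : ℕ} (h : m ∣ n) (hn : n ≠ 0) :
    ‖(m : K)‖⁻¹ ≤ ‖(n : K)‖⁻¹ := by
  refine inv_anti₀ (norm_pos_iff.2 (Nat.cast_ne_zero.2 hn)) ?_
  obtain ⟨k, rfl⟩ := h
  rw [Nat.cast_mul]
  exact ultrametric_norm_mul_natCast_le le_rfl k

theorem norm_taylor_blockQuotient_coeff_le (hε : 0 ≤ ε)
    (h : ∀ s < S, ∀ m < M, ‖(taylor (s : K) f).coeff m‖ ≤ ε) {k s : ℕ} (hks : k ≤ s) (hs : s < S) :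
    ∀ m < M, ‖(taylor (s : K) (blockQuotient M f k)).coeff m‖ ≤
      ε * ‖(s.descFactorial k : K)‖⁻¹ ^ (2 * M) := by
  induction k generalizing s with
  | zero => simpa [blockQuotient] using h s hs
  | succ k ih =>
    intro m hm
    have hne : (s : K) ≠ k := by exact_mod_cast (Nat.lt_of_succ_le hks).ne'
    have hle_one := norm_natCast_sub_natCast_le_one (K := K) s k
    have hone : 1 ≤ ‖(s : K) - k‖⁻¹ :=
      (one_le_inv₀ (norm_pos_iff.2 (sub_ne_zero.2 hne))).2 hle_one
    set e := ε * ‖(s.descFactorial k : K)‖⁻¹ ^ (2 * M) with he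
    have he₀ : 0 ≤ e := by positivity
    have hcenter : ∀ m < M, ‖(taylor (k : K) (blockQuotient M f k)).coeff m‖ ≤ e := fun m hm => by
      refine (ih le_rfl (by omega) m hm).trans ?_
      rw [Nat.descFactorial_self, he]
      gcongr ε * ?_ ^ _
      exact inv_norm_natCast_le_of_dvd (Nat.factorial_dvd_descFactorial s k)
        (Nat.descFactorial_pos.2 (by omega)).ne'
    calc ‖(taylor (s : K) (blockQuotient M f (k + 1))).coeff m‖
        ≤ e * ‖(s : K) - k‖⁻¹ ^ (m + M) :=
          norm_taylor_iterate_divByMonic_coeff_le hle_one hne hcenter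
            (fun m hm => (ih (by omega) hs m hm).trans
              (le_mul_of_one_le_right he₀ (one_le_pow₀ hone))) m hm
      _ ≤ e * ‖(s : K) - k‖⁻¹ ^ (2 * M) := by gcongr; omega
      _ = ε * ‖(s.descFactorial (k + 1) : K)‖⁻¹ ^ (2 * M) := by
          rw [Nat.descFactorial_succ, Nat.cast_mul, Nat.cast_sub (by omega), norm_mul, mul_inv,
            mul_pow, he]
          ring

theorem norm_eval_le_max_blockQuotient (hε : 0 ≤ ε)
    (h : ∀ s < S, ∀ m < M, ‖(taylor (s : K) f).coeff m‖ ≤ ε) (z : ℕ) {k : ℕ} (hk : k ≤ S) :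
    ‖f.eval (z : K)‖ ≤ max (ε * ‖(S.factorial : K)‖⁻¹ ^ (2 * M))
      ‖(blockQuotient M f k).eval (z : K)‖ := by
  induction k with
  | zero => exact le_max_right _ _
  | succ k ih =>
    refine (ih (by omega)).trans (max_le (le_max_left _ _)
      (norm_eval_le_max_iterate_divByMonic (norm_natCast_sub_natCast_le_one z k) fun m hm => ?_))
    refine (norm_taylor_blockQuotient_coeff_le hε h le_rfl hk m hm).trans ?_
    rw [Nat.descFactorial_self]
    gcongr ε * ?_ ^ _
    exact inv_norm_natCast_le_of_dvd (Nat.factorial_dvd_factorial (by omega)) S.factorial_ne_zero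

theorem ultrametric_schwarz {r : ℝ} (hr : 1 ≤ r) (hε : 0 ≤ ε)
    (h : ∀ s < S, ∀ m < M, ‖(hasseDeriv m f).eval (s : K)‖ ≤ ε) (z : ℕ) :
    ‖f.eval (z : K)‖ ≤
      max (discNorm r f / r ^ (S * M)) (ε * ‖(S.factorial : K)‖⁻¹ ^ (2 * M)) := by
  simp only [← taylor_coeff] at h
  refine (norm_eval_le_max_blockQuotient hε h z le_rfl).trans
    (max_le (le_max_right _ _) (le_max_of_le_left ?_))
  exact (norm_eval_le_discNorm _ ((IsUltrametricDist.norm_natCast_le_one K z).trans hr)).trans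
    (discNorm_blockQuotient_le hr M f S)

theorem padic_schwarz {p : ℕ} [Fact p.Prime] {f : ℚ_[p][X]} {r : ℝ} (hr : 1 ≤ r) (hε : 0 ≤ ε)
    (h : ∀ s < S, ∀ m < M, ‖(hasseDeriv m f).eval (s : ℚ_[p])‖ ≤ ε) (z : ℕ) :
    ‖f.eval (z : ℚ_[p])‖ ≤ max (discNorm r f / r ^ (S * M)) (ε * 4 ^ (S * M)) := by
  refine (ultrametric_schwarz hr hε h z).trans (max_le_max_left _ ?_)
  rw [show (4 : ℝ) = 2 ^ 2 by norm_num, ← pow_mul, show 2 * (S * M) = S * (2 * M) by ring,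
    pow_mul 2 S]
  gcongr
  exact inv_padic_norm_factorial_le S

end SchwarzLemma

section TruncatedExponential

variable {K : Type*} [Field K]

/-- The truncation of the power series `exp (u X)` at degree `I`. -/
noncomputable def expTrunc (u : K) (I : ℕ) : K[X] :=
  ∑ b ∈ range I, monomial b (u ^ b / b.factorial)

theorem expTrunc_eval (u : K) (I : ℕ) (z : K) :
    (expTrunc u I).eval z = ∑ b ∈ range I, (u * z) ^ b / b.factorial := by
  simp only [expTrunc, eval_finsetSum, eval_monomial]
  refine sum_congr rfl fun b _ => ?_
  rw [mul_pow, div_mul_eq_mul_div]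

theorem hasseDeriv_expTrunc [CharZero K] (u : K) (b I : ℕ) :
    hasseDeriv b (expTrunc u (b + I)) = C (u ^ b / b.factorial) * expTrunc u I := by
  rw [expTrunc, map_sum, sum_range_add, sum_eq_zero fun i hi => by
    rw [hasseDeriv_monomial, Nat.choose_eq_zero_of_lt (mem_range.1 hi)]; simp, zero_add, expTrunc,
    mul_sum]
  refine sum_congr rfl fun i _ => ?_
  have hfac : (((b + i).choose b : ℕ) : K) * b.factorial * i.factorial = (b + i).factorial := by
    rw [Nat.choose_symm_add]
    exact_mod_cast Nat.add_choose_mul_factorial_mul_factorial b i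
  have hb : (b.factorial : K) ≠ 0 := by exact_mod_cast b.factorial_ne_zero
  have hi : (i.factorial : K) ≠ 0 := by exact_mod_cast i.factorial_ne_zero
  have hbi : ((b + i).factorial : K) ≠ 0 := by exact_mod_cast (b + i).factorial_ne_zero
  rw [hasseDeriv_monomial, Nat.add_sub_cancel_left, C_mul_monomial, pow_add]
  congr 1
  field_simp
  linear_combination u ^ b * u ^ i * hfac

end TruncatedExponential

section Extrapolation

/-- The mixed derivative of order `(a, b)` at `z` of the exponential polynomial
`∑ y, P y (z) θ ^ (v y * z)`: the order `a` counts Hasse derivatives of the polynomial coefficients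
and `b` counts multiplications by the frequencies `v y`. -/
noncomputable def mixedDeriv {ι K : Type*} [Fintype ι] [CommSemiring K] (P : ι → K[X]) (v : ι → ℕ)
    (θ : K) (a b z : ℕ) : K :=
  ∑ y, (hasseDeriv a (P y)).eval (z : K) * (v y : K) ^ b * θ ^ (v y * z)

/-- The polynomial approximation to `z ↦ mixedDeriv P v (exp u) a b z` obtained by truncating the
exponential series. -/
noncomputable def mixedDerivTrunc {ι K : Type*} [Fintype ι] [Field K] (P : ι → K[X]) (v : ι → ℕ)
    (u : K) (a b I : ℕ) : K[X] :=
  ∑ y, C ((v y : K) ^ b) * (hasseDeriv a (P y) * expTrunc (u * v y) I)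

theorem hasseDeriv_mixedDerivTrunc {ι K : Type*} [Fintype ι] [Field K] [CharZero K] (P : ι → K[X])
    (v : ι → ℕ) (u : K) (a b : ℕ) {m I : ℕ} (hm : m ≤ I) :
    hasseDeriv m (mixedDerivTrunc P v u a b I) = ∑ i ∈ antidiagonal m,
      C (((a + i.1).choose i.1 : ℕ) * (u ^ i.2 / i.2.factorial)) *
        mixedDerivTrunc P v u (a + i.1) (b + i.2) (I - i.2) := by
  simp only [mixedDerivTrunc, mul_sum, map_sum]
  rw [sum_comm]
  refine sum_congr rfl fun y _ => ?_
  rw [← smul_eq_C_mul, LinearMap.map_smul, hasseDeriv_mul, smul_eq_C_mul, mul_sum]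
  refine sum_congr rfl fun i hi => ?_
  have hi' := mem_antidiagonal.1 hi
  have hcomp : hasseDeriv i.1 (hasseDeriv a (P y)) =
      C ((a + i.1).choose i.1 : K) * hasseDeriv (a + i.1) (P y) := by
    have := LinearMap.congr_fun (hasseDeriv_comp (R := K) i.1 a) (P y)
    rw [LinearMap.comp_apply, LinearMap.smul_apply] at this
    rw [this, add_comm a, nsmul_eq_mul, C_eq_natCast]
  have hexp := hasseDeriv_expTrunc (u * v y) i.2 (I - i.2)
  rw [Nat.add_sub_cancel' (by omega)] at hexp
  rw [hcomp, hexp, mul_pow, pow_add, mul_div_right_comm]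
  simp only [C_mul]
  ring

variable {p : ℕ} [hp : Fact p.Prime] {u : ℚ_[p]}

theorem discNorm_expTrunc_le_one (hu : ‖u‖ ≤ expRadius p) (I : ℕ) :
    discNorm (√3) (expTrunc u I) ≤ 1 := by
  refine discNorm_sum_le (by positivity) zero_le_one fun i _ => ?_
  rw [discNorm_monomial]
  calc ‖u ^ i / i.factorial‖ * √3 ^ i ≤ (√3)⁻¹ ^ i * √3 ^ i := by
        gcongr
        exact padic_norm_pow_div_factorial_le hu i
    _ = 1 := by rw [← mul_pow, inv_mul_cancel₀ (by positivity), one_pow]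

theorem padic_norm_exp_pow_sub_expTrunc_eval_le (hu : ‖u‖ ≤ expRadius p) (v I s : ℕ) :
    ‖NormedSpace.exp u ^ (v * s) - (expTrunc (u * v) I).eval (s : ℚ_[p])‖ ≤ (√3)⁻¹ ^ I := by
  rw [expTrunc_eval, ← padic_exp_mul_natCast hu, Nat.cast_mul, ← mul_assoc]
  exact padic_norm_exp_sub_truncation_le
    (ultrametric_norm_mul_natCast_le (ultrametric_norm_mul_natCast_le hu v) s) I

variable {ι : Type*} [Fintype ι] {P : ι → ℚ_[p][X]} {v : ι → ℕ} {c : ℝ}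

theorem norm_natCast_pow_le_one {K : Type*} [NormedField K] [IsUltrametricDist K] (n b : ℕ) :
    ‖(n : K) ^ b‖ ≤ 1 := by
  exact_mod_cast IsUltrametricDist.norm_natCast_le_one K (n ^ b)

theorem discNorm_mixedDerivTrunc_le (hu : ‖u‖ ≤ expRadius p) (hc : 0 ≤ c)
    (hP : ∀ y, discNorm (√3) (P y) ≤ c) (a b I : ℕ) :
    discNorm (√3) (mixedDerivTrunc P v u a b I) ≤ c := by
  refine discNorm_sum_le (by positivity) hc fun y _ => ?_
  calc _ ≤ ‖(v y : ℚ_[p]) ^ b‖ * (discNorm (√3) (hasseDeriv a (P y)) *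
        discNorm (√3) (expTrunc (u * v y) I)) := by
        refine (discNorm_mul_le (by positivity) _ _).trans ?_
        rw [discNorm_C]
        exact mul_le_mul_of_nonneg_left (discNorm_mul_le (by positivity) _ _) (norm_nonneg _)
    _ ≤ 1 * (c * 1) := by
        gcongr
        · exact mul_nonneg (discNorm_nonneg (by positivity) _) (discNorm_nonneg (by positivity) _)
        · exact norm_natCast_pow_le_one _ _
        · exact discNorm_nonneg (by positivity) _
        · exact (discNorm_hasseDeriv_le one_lt_sqrt_three.le _ _).trans (hP y)
        · exact discNorm_expTrunc_le_one (ultrametric_norm_mul_natCast_le hu _) I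
    _ = c := by ring

theorem norm_mixedDeriv_sub_mixedDerivTrunc_le (hu : ‖u‖ ≤ expRadius p) (hc : 0 ≤ c)
    (hP : ∀ y, discNorm (√3) (P y) ≤ c) (a b I s : ℕ) :
    ‖mixedDeriv P v (NormedSpace.exp u) a b s -
      (mixedDerivTrunc P v u a b I).eval (s : ℚ_[p])‖ ≤ c * (√3)⁻¹ ^ I := by
  rw [mixedDeriv, mixedDerivTrunc, eval_finsetSum, ← sum_sub_distrib]
  refine IsUltrametricDist.norm_sum_le_of_forall_le_of_nonneg (by positivity) fun y _ => ?_
  have hPs : ‖(hasseDeriv a (P y)).eval (s : ℚ_[p])‖ ≤ c :=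
    (norm_eval_le_discNorm _ ((IsUltrametricDist.norm_natCast_le_one ℚ_[p] s).trans
      one_lt_sqrt_three.le)).trans ((discNorm_hasseDeriv_le one_lt_sqrt_three.le _ _).trans (hP y))
  rw [eval_mul, eval_C, eval_mul]
  calc _ = ‖(v y : ℚ_[p]) ^ b‖ * (‖(hasseDeriv a (P y)).eval (s : ℚ_[p])‖ *
        ‖NormedSpace.exp u ^ (v y * s) - (expTrunc (u * v y) I).eval (s : ℚ_[p])‖) := by
        rw [← norm_mul, ← norm_mul]
        congr 1
        ring
    _ ≤ 1 * (c * (√3)⁻¹ ^ I) := by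
        gcongr
        · exact norm_natCast_pow_le_one _ _
        · exact padic_norm_exp_pow_sub_expTrunc_eval_le hu _ _ _
    _ = _ := one_mul _

theorem norm_hasseDeriv_mixedDerivTrunc_eval_le (hu : ‖u‖ ≤ expRadius p) {ε : ℝ} (hε : 0 ≤ ε)
    {a b m I s : ℕ} (hm : m ≤ I) (h : ∀ i j, i + j = m →
      ‖(mixedDerivTrunc P v u (a + i) (b + j) (I - j)).eval (s : ℚ_[p])‖ ≤ ε) :
    ‖(hasseDeriv m (mixedDerivTrunc P v u a b I)).eval (s : ℚ_[p])‖ ≤ ε := by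
  rw [hasseDeriv_mixedDerivTrunc P v u a b hm, eval_finsetSum]
  refine IsUltrametricDist.norm_sum_le_of_forall_le_of_nonneg hε fun i hi => ?_
  rw [eval_mul, eval_C, norm_mul, norm_mul]
  refine (mul_le_of_le_one_left (norm_nonneg _) (mul_le_one₀
    (IsUltrametricDist.norm_natCast_le_one _ _) (norm_nonneg _) ?_)).trans
      (h i.1 i.2 (mem_antidiagonal.1 hi))
  exact (padic_norm_pow_div_factorial_le hu _).trans
    (pow_le_one₀ (by positivity) inv_sqrt_three_lt_one.le)

theorem norm_mixedDeriv_le_of_forall_le {θ : ℚ_[p]} (hθ : ‖θ - 1‖ ≤ expRadius p) {ε : ℝ}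
    (hε : 0 < ε) (hc : 0 ≤ c) (hP : ∀ y, discNorm (√3) (P y) ≤ c) {S M T a b : ℕ} (ha : a + M ≤ T)
    (hb : b + M ≤ T) (h : ∀ s < S, ∀ a < T, ∀ b < T, ‖mixedDeriv P v θ a b s‖ ≤ ε) (z : ℕ) :
    ‖mixedDeriv P v θ a b z‖ ≤ max (c / √3 ^ (S * M)) (ε * 4 ^ (S * M)) := by
  obtain ⟨u, hu, rfl⟩ := exists_padic_exp_eq hθ
  obtain ⟨I₀, hI₀⟩ : ∃ I₀, ∀ I ≥ I₀, c * (√3)⁻¹ ^ I ≤ ε := by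
    have hlim := (tendsto_pow_atTop_nhds_zero_of_lt_one (by positivity)
      inv_sqrt_three_lt_one).const_mul c
    rw [mul_zero] at hlim
    exact Filter.eventually_atTop.1 (hlim.eventually_le_const hε)
  have happrox : ∀ a b I s, I₀ ≤ I → ‖mixedDeriv P v (NormedSpace.exp u) a b s -
      (mixedDerivTrunc P v u a b I).eval (s : ℚ_[p])‖ ≤ ε := fun a b I s hI =>
    (norm_mixedDeriv_sub_mixedDerivTrunc_le hu hc hP a b I s).trans (hI₀ I hI)
  set f := mixedDerivTrunc P v u a b (M + I₀)
  have hdata : ∀ s < S, ∀ m < M, ‖(hasseDeriv m f).eval (s : ℚ_[p])‖ ≤ ε := by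
    refine fun s hs m hm => norm_hasseDeriv_mixedDerivTrunc_eval_le hu hε.le (by omega) ?_
    intro i j hij
    have := ultrametric_norm_add_le (h s hs (a + i) (by omega) (b + j) (by omega))
      ((norm_neg _).trans_le (happrox (a + i) (b + j) (M + I₀ - j) s (by omega)))
    rwa [neg_sub, add_sub_cancel] at this
  have hschwarz : ‖f.eval (z : ℚ_[p])‖ ≤ max (c / √3 ^ (S * M)) (ε * 4 ^ (S * M)) := by
    refine (padic_schwarz one_lt_sqrt_three.le hε.le hdata z).trans (max_le_max_right _ ?_)
    gcongr
    exact discNorm_mixedDerivTrunc_le hu hc hP a b _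
  have hεle : ε ≤ max (c / √3 ^ (S * M)) (ε * 4 ^ (S * M)) :=
    (le_mul_of_one_le_right hε.le (one_le_pow₀ (by norm_num))).trans (le_max_right _ _)
  have := ultrametric_norm_add_le ((happrox a b (M + I₀) z (by omega)).trans hεle) hschwarz
  rwa [sub_add_cancel] at this

end Extrapolation

section FeldmanGaussNorm

variable {p : ℕ} [hp : Fact p.Prime] {r : ℝ}

theorem discNorm_X_sub_natCast_le {K : Type*} [NormedField K] [IsUltrametricDist K] (hr : 1 ≤ r)
    (n : ℕ) : discNorm r (X - (n : K[X])) ≤ r := by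
  rw [← C_eq_natCast]
  refine discNorm_le fun i => ?_
  rcases i with _ | _ | i
  · simpa using (IsUltrametricDist.norm_natCast_le_one K n).trans hr
  · simp
  · simpa [coeff_X, coeff_C] using zero_le_one.trans hr

theorem discNorm_descPochhammer_le {K : Type*} [NormedField K] [IsUltrametricDist K] (hr : 1 ≤ r)
    (n : ℕ) : discNorm r (descPochhammer K n) ≤ r ^ n := by
  have hr₀ : 0 ≤ r := zero_le_one.trans hr
  induction n with
  | zero => simp [← C_1, -map_one]
  | succ n ih =>
    rw [descPochhammer_succ_right, pow_succ]
    exact (discNorm_mul_le hr₀ _ _).trans (mul_le_mul ih (discNorm_X_sub_natCast_le hr n)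
      (discNorm_nonneg hr₀ _) (by positivity))

theorem discNorm_map_binomPoly_le (hr : 1 ≤ r) (n : ℕ) :
    discNorm r ((binomPoly n).map (algebraMap ℚ ℚ_[p])) ≤ (2 * r) ^ n := by
  have hr₀ : 0 ≤ r := zero_le_one.trans hr
  rw [binomPoly, Polynomial.map_mul, map_C, descPochhammer_map, mul_pow]
  refine (discNorm_mul_le hr₀ _ _).trans (mul_le_mul ?_ (discNorm_descPochhammer_le hr n)
    (discNorm_nonneg hr₀ _) (by positivity))
  rw [discNorm_C]
  simpa using inv_padic_norm_factorial_le (p := p) n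

theorem discNorm_map_feldmanPoly_le (hr : 1 ≤ r) (h i : ℕ) :
    discNorm r ((feldmanPoly h i).map (algebraMap ℚ ℚ_[p])) ≤ (2 * r) ^ i := by
  have hr₀ : 0 ≤ r := zero_le_one.trans hr
  have hpow : discNorm r (((binomPoly h).map (algebraMap ℚ ℚ_[p])) ^ (i / h)) ≤
      ((2 * r) ^ h) ^ (i / h) :=
    (discNorm_pow_le hr₀ _ _).trans
      (pow_le_pow_left₀ (discNorm_nonneg hr₀ _) (discNorm_map_binomPoly_le hr h) _)
  rw [feldmanPoly, Polynomial.map_mul, Polynomial.map_pow]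
  calc _ ≤ ((2 * r) ^ h) ^ (i / h) * (2 * r) ^ (i % h) :=
        (discNorm_mul_le hr₀ _ _).trans (mul_le_mul hpow (discNorm_map_binomPoly_le hr _)
          (discNorm_nonneg hr₀ _) (by positivity))
    _ = (2 * r) ^ i := by rw [← pow_mul, ← pow_add, Nat.div_add_mod]

end FeldmanGaussNorm

section Siegel

attribute [local instance] Matrix.seminormedAddCommGroup in
theorem exists_ne_zero_int_vec_abs_le {ι κ : Type*} [Fintype ι] [Fintype κ] (A : ι → κ → ℤ)
    {C : ℕ} (hC : 1 ≤ C) (hA : ∀ i k, |A i k| ≤ C) (hι : 0 < Fintype.card ι)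
    (hκ : 2 * Fintype.card ι ≤ Fintype.card κ) :
    ∃ t : κ → ℤ, t ≠ 0 ∧ (∀ i, ∑ k, A i k * t k = 0) ∧ ∀ k, |t k| ≤ Fintype.card κ * C := by
  classical
  obtain ⟨t, ht, h0, hle⟩ := Int.Matrix.exists_ne_zero_int_vec_norm_le (Matrix.of A)
    (by omega) hι
  refine ⟨t, ht, fun i => ?_, fun k => ?_⟩
  · simpa [Matrix.mulVec, dotProduct] using congrFun h0 i
  have hnorm : max 1 ‖Matrix.of A‖ ≤ C := by
    refine max_le (by exact_mod_cast hC) ((Matrix.norm_le_iff (by positivity)).2 fun i k => ?_)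
    rw [Matrix.of_apply, Int.norm_eq_abs]
    exact_mod_cast hA i k
  have hκ1 : (1 : ℝ) ≤ Fintype.card κ := by exact_mod_cast (by omega : 1 ≤ Fintype.card κ)
  have hκ2 : (2 : ℝ) * Fintype.card ι ≤ Fintype.card κ := by exact_mod_cast hκ
  have hι1 : (0 : ℝ) < Fintype.card ι := by exact_mod_cast hι
  have hexponent : (Fintype.card ι : ℝ) / (Fintype.card κ - Fintype.card ι) ≤ 1 := by
    rw [div_le_one (by linarith)]
    linarith
  have hk : ‖t k‖ ≤ Fintype.card κ * C := calc
    ‖t k‖ ≤ ‖t‖ := norm_le_pi_norm t k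
    _ ≤ ((Fintype.card κ : ℝ) * max 1 ‖Matrix.of A‖) ^ (1 : ℝ) :=
      hle.trans (Real.rpow_le_rpow_of_exponent_le
        (one_le_mul_of_one_le_of_one_le hκ1 (le_max_left _ _)) hexponent)
    _ ≤ Fintype.card κ * C := by
      rw [Real.rpow_one]
      gcongr
  rw [Int.norm_eq_abs] at hk
  exact_mod_cast hk

end Siegel

section ExponentialMoment

variable {ι : Type*} [Fintype ι]

/-- The exponential sum `∑ y, G y * v y ^ m * b y ^ z`. For
`G y = d ^ a * (hasseDeriv a (F y)).eval z` and `b y ≈ x * θ ^ v y` it is an integer approximation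
to `x ^ z * d ^ a * mixedDeriv F v θ a m z`. -/
def exponentialMoment (G : ι → ℤ) (v : ι → ℕ) (b : ι → ℤ) (m z : ℕ) : ℤ :=
  ∑ y, G y * (v y : ℤ) ^ m * b y ^ z

theorem exponentialMoment_sum {κ : Type*} [Fintype κ] (g : κ → ℤ) (c : κ × ι → ℤ) (v : ι → ℕ)
    (b : ι → ℤ) (m z : ℕ) : exponentialMoment (fun y => ∑ i, g i * c (i, y)) v b m z =
      ∑ w : κ × ι, g w.1 * (v w.2 : ℤ) ^ m * b w.2 ^ z * c w := by
  rw [exponentialMoment, Fintype.sum_prod_type_right]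
  refine sum_congr rfl fun y _ => ?_
  rw [sum_mul, sum_mul]
  exact sum_congr rfl fun i _ => by ring

theorem abs_exponentialMoment_sum_le {κ : Type*} [Fintype κ] {g : κ → ℤ} {c : κ × ι → ℤ}
    {v : ι → ℕ} {b : ι → ℤ} {m z : ℕ} {C C' : ℤ} (hC : 0 ≤ C)
    (hg : ∀ i y, |g i * (v y : ℤ) ^ m * b y ^ z| ≤ C) (hc : ∀ w, |c w| ≤ C') :
    |exponentialMoment (fun y => ∑ i, g i * c (i, y)) v b m z| ≤
      Fintype.card (κ × ι) * (C * C') := by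
  rw [exponentialMoment_sum]
  calc _ ≤ ∑ w : κ × ι, |g w.1 * (v w.2 : ℤ) ^ m * b w.2 ^ z * c w| := abs_sum_le_sum_abs _ _
    _ ≤ ∑ _w : κ × ι, C * C' := by
      refine sum_le_sum fun w _ => ?_
      rw [abs_mul]
      exact mul_le_mul (hg w.1 w.2) (hc w) (abs_nonneg _) hC
    _ = _ := by rw [sum_const, card_univ, nsmul_eq_mul]

theorem exists_ne_zero_exponentialMoment_sum_eq_zero {κ : Type*} [Fintype κ] {S T C : ℕ}
    {g : κ → ℕ → ℕ → ℤ} {v : ι → ℕ} {b : ι → ℤ} (hS : 0 < S) (hT : 0 < T) (hC : 1 ≤ C)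
    (hg : ∀ z < S, ∀ a < T, ∀ m < T, ∀ i y, |g i z a * (v y : ℤ) ^ m * b y ^ z| ≤ C)
    (hcard : 2 * (S * T ^ 2) ≤ Fintype.card (κ × ι)) :
    ∃ c : κ × ι → ℤ, c ≠ 0 ∧
      (∀ z < S, ∀ a < T, ∀ m < T,
        exponentialMoment (fun y => ∑ i, g i z a * c (i, y)) v b m z = 0) ∧
      ∀ w, |c w| ≤ Fintype.card (κ × ι) * C := by
  obtain ⟨c, hc₀, hc, hcle⟩ := exists_ne_zero_int_vec_abs_le
    (fun (q : Fin S × Fin T × Fin T) (w : κ × ι) =>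
      g w.1 q.1 q.2.1 * (v w.2 : ℤ) ^ (q.2.2 : ℕ) * b w.2 ^ (q.1 : ℕ)) hC
    (fun q w => hg _ q.1.2 _ q.2.1.2 _ q.2.2.2 w.1 w.2) (by simp [hS, hT])
    (by simpa [sq] using hcard)
  refine ⟨c, hc₀, fun z hz a ha m hm => ?_, hcle⟩
  rw [exponentialMoment_sum]
  exact hc (⟨z, hz⟩, ⟨a, ha⟩, ⟨m, hm⟩)

end ExponentialMoment

section PadicExtrapolation

theorem one_le_abs_mul_padic_norm (p : ℕ) [hp : Fact p.Prime] {a : ℤ} (ha : a ≠ 0) :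
    1 ≤ (|a| : ℝ) * ‖(a : ℚ_[p])‖ := by
  rw [Padic.norm_eq_zpow_neg_valuation (by exact_mod_cast ha), Padic.valuation_intCast,
    zpow_neg, zpow_natCast, ← div_eq_mul_inv, one_le_div (by have := hp.1.pos; positivity)]
  have hdvd : ((p ^ padicValInt p a : ℕ) : ℤ) ∣ |a| := by
    rw [dvd_abs]
    push_cast
    exact padicValInt_dvd a
  exact_mod_cast Int.le_of_dvd (abs_pos.2 ha) hdvd

theorem inv_pow_le_padic_norm_natCast_pow (p : ℕ) [Fact p.Prime] {d m n : ℕ} (hd : d ≠ 0)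
    (hmn : m ≤ n) : ((d : ℝ) ^ n)⁻¹ ≤ ‖(d : ℚ_[p])‖ ^ m := by
  have hd₁ : (1 : ℝ) ≤ d := by exact_mod_cast Nat.one_le_iff_ne_zero.2 hd
  have hnorm : (d : ℝ)⁻¹ ≤ ‖(d : ℚ_[p])‖ := by
    rw [inv_le_iff_one_le_mul₀' (by positivity)]
    simpa using one_le_abs_mul_padic_norm p (a := d) (by exact_mod_cast hd)
  calc ((d : ℝ) ^ n)⁻¹ ≤ ((d : ℝ) ^ m)⁻¹ := by gcongr
    _ ≤ ‖(d : ℚ_[p])‖ ^ m := by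
      rw [← inv_pow]
      gcongr

theorem padic_norm_le_of_pow_dvd {p ν : ℕ} [hp : Fact p.Prime] {a : ℤ} (h : (p : ℤ) ^ ν ∣ a) :
    ‖(a : ℚ_[p])‖ ≤ ((p : ℝ) ^ ν)⁻¹ := by
  have := (Padic.norm_int_le_pow_iff_dvd (p := p) a ν).2 (by exact_mod_cast h)
  rwa [zpow_neg, zpow_natCast] at this

theorem hasseDeriv_map_eval_natCast {R S : Type*} [Semiring R] [Semiring S] (φ : R →+* S) (m : ℕ)
    (f : R[X]) (z : ℕ) : (hasseDeriv m (f.map φ)).eval (z : S) =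
      φ ((hasseDeriv m f).eval (z : R)) := by
  have hmap : hasseDeriv m (f.map φ) = (hasseDeriv m f).map φ := by
    ext k
    simp [hasseDeriv_coeff]
  rw [hmap, eval_natCast_map]

variable {p : ℕ} [hp : Fact p.Prime] {ι : Type*} [Fintype ι] {d ν : ℕ} {θ x : ℤ} {v : ι → ℕ}
  {b : ι → ℤ} {F : ι → ℚ[X]}

theorem padic_norm_exponentialMoment_sub_le (hb : ∀ y, (p : ℤ) ^ ν ∣ b y - x * θ ^ v y)
    {a z : ℕ} {G : ι → ℤ} (hG : ∀ y, (d : ℚ) ^ a * (hasseDeriv a (F y)).eval (z : ℚ) = G y)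
    (m : ℕ) :
    ‖(exponentialMoment G v b m z : ℚ_[p]) - x ^ z * (d ^ a *
      mixedDeriv (fun y => (F y).map (algebraMap ℚ ℚ_[p])) v (θ : ℚ_[p]) a m z)‖ ≤
        ((p : ℝ) ^ ν)⁻¹ := by
  have hG' : ∀ y, (d : ℚ_[p]) ^ a *
      (hasseDeriv a ((F y).map (algebraMap ℚ ℚ_[p]))).eval (z : ℚ_[p]) = G y := fun y => by
    rw [hasseDeriv_map_eval_natCast]
    simpa using congrArg (algebraMap ℚ ℚ_[p]) (hG y)
  have hdiff : (exponentialMoment G v b m z : ℚ_[p]) - x ^ z * (d ^ a *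
      mixedDeriv (fun y => (F y).map (algebraMap ℚ ℚ_[p])) v (θ : ℚ_[p]) a m z) =
      ((∑ y, G y * (v y : ℤ) ^ m * (b y ^ z - (x * θ ^ v y) ^ z) : ℤ) : ℚ_[p]) := by
    simp only [exponentialMoment, mixedDeriv, mul_sum]
    push_cast
    rw [← sum_sub_distrib]
    refine sum_congr rfl fun y _ => ?_
    rw [← hG' y, mul_pow, ← pow_mul]
    ring
  rw [hdiff]
  exact padic_norm_le_of_pow_dvd
    (dvd_sum fun y _ => ((hb y).trans (sub_dvd_pow_sub_pow _ _ z)).mul_left _)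

theorem padic_norm_intCast_eq_one (hx : ¬ (p : ℤ) ∣ x) : ‖(x : ℚ_[p])‖ = 1 :=
  le_antisymm (Padic.norm_int_le_one _)
    (not_lt.1 fun hlt => hx (Padic.norm_intCast_lt_one_iff.1 hlt))

theorem padic_norm_exponentialMoment_le (hd : d ≠ 0) (hx : ¬ (p : ℤ) ∣ x)
    (hθ : ‖(θ : ℚ_[p]) - 1‖ ≤ expRadius p) (hb : ∀ y, (p : ℤ) ^ ν ∣ b y - x * θ ^ v y)
    {c : ℝ} (hc : 0 ≤ c) (hF : ∀ y, discNorm (√3) ((F y).map (algebraMap ℚ ℚ_[p])) ≤ c)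
    {S M : ℕ} {G : ℕ → ℕ → ι → ℤ}
    (hG : ∀ (z a : ℕ) y, (d : ℚ) ^ a * (hasseDeriv a (F y)).eval (z : ℚ) = G z a y)
    (h₀ : ∀ z < S, ∀ a < 2 * M, ∀ m < 2 * M, exponentialMoment (G z a) v b m z = 0)
    {z a m : ℕ} (ha : a ≤ M) (hm : m ≤ M) :
    ‖(exponentialMoment (G z a) v b m z : ℚ_[p])‖ ≤
      max (c / √3 ^ (S * M)) (((p : ℝ) ^ ν)⁻¹ * d ^ (2 * M) * 4 ^ (S * M)) := by
  have hp₀ : (0 : ℝ) < p := by exact_mod_cast hp.1.pos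
  have hd₁ : (1 : ℝ) ≤ d := by exact_mod_cast Nat.one_le_iff_ne_zero.2 hd
  set D := mixedDeriv (fun y => (F y).map (algebraMap ℚ ℚ_[p])) v (θ : ℚ_[p]) with hD
  have hnorm : ∀ z a m, ‖(x : ℚ_[p]) ^ z * (d ^ a * D a m z)‖ = ‖(d : ℚ_[p])‖ ^ a * ‖D a m z‖ :=
    fun z a m => by rw [norm_mul, norm_mul, norm_pow, norm_pow, padic_norm_intCast_eq_one hx,
      one_pow, one_mul]
  have hsmall : ∀ z < S, ∀ a < 2 * M, ∀ m < 2 * M,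
      ‖D a m z‖ ≤ ((p : ℝ) ^ ν)⁻¹ * d ^ (2 * M) := by
    intro z hz a ha m hm
    have hcongr := padic_norm_exponentialMoment_sub_le hb (hG z a) m
    rw [h₀ z hz a ha m hm, Int.cast_zero, zero_sub, norm_neg, ← hD, hnorm] at hcongr
    have hle := (mul_le_mul_of_nonneg_right (inv_pow_le_padic_norm_natCast_pow p hd ha.le)
      (norm_nonneg (D a m z))).trans hcongr
    rwa [inv_mul_le_iff₀ (by positivity), mul_comm] at hle
  have hextrapolate := norm_mixedDeriv_le_of_forall_le hθ (by positivity) hc hF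
    (by omega : a + M ≤ 2 * M) (by omega : m + M ≤ 2 * M) hsmall z
  rw [← sub_add_cancel (exponentialMoment (G z a) v b m z : ℚ_[p]) (x ^ z * (d ^ a * D a m z))]
  refine ultrametric_norm_add_le
    ((padic_norm_exponentialMoment_sub_le hb (hG z a) m).trans (le_max_of_le_right ?_)) ?_
  · rw [mul_assoc]
    exact le_mul_of_one_le_right (by positivity)
      (one_le_mul_of_one_le_of_one_le (one_le_pow₀ hd₁) (one_le_pow₀ (by norm_num)))
  · rw [hnorm]
    exact (mul_le_of_le_one_left (norm_nonneg _) (pow_le_one₀ (norm_nonneg _)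
      (IsUltrametricDist.norm_natCast_le_one ℚ_[p] d))).trans hextrapolate

theorem exponentialMoment_eq_zero_of_abs_le (hd : d ≠ 0) (hx : ¬ (p : ℤ) ∣ x)
    (hθ : ‖(θ : ℚ_[p]) - 1‖ ≤ expRadius p) (hb : ∀ y, (p : ℤ) ^ ν ∣ b y - x * θ ^ v y)
    {c : ℝ} (hc : 0 ≤ c) (hF : ∀ y, discNorm (√3) ((F y).map (algebraMap ℚ ℚ_[p])) ≤ c)
    {S M W : ℕ} {G : ℕ → ℕ → ι → ℤ}
    (hG : ∀ (z a : ℕ) y, (d : ℚ) ^ a * (hasseDeriv a (F y)).eval (z : ℚ) = G z a y)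
    (h₀ : ∀ z < S, ∀ a < 2 * M, ∀ m < 2 * M, exponentialMoment (G z a) v b m z = 0)
    (h₁ : W * c < √3 ^ (S * M)) (h₂ : (W : ℝ) * d ^ (2 * M) * 4 ^ (S * M) < p ^ ν)
    {z a m : ℕ} (ha : a ≤ M) (hm : m ≤ M) (hW : |exponentialMoment (G z a) v b m z| ≤ W) :
    exponentialMoment (G z a) v b m z = 0 := by
  have hp₀ : (0 : ℝ) < p := by exact_mod_cast hp.1.pos
  by_contra hne
  have hprod := (one_le_abs_mul_padic_norm p hne).trans (mul_le_mul
    (by exact_mod_cast hW : (|exponentialMoment (G z a) v b m z| : ℝ) ≤ W)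
    (padic_norm_exponentialMoment_le hd hx hθ hb hc hF hG h₀ ha hm)
    (norm_nonneg _) (by positivity))
  rw [mul_max_of_nonneg _ _ (by positivity)] at hprod
  rcases le_max_iff.1 hprod with hle | hle
  · rw [mul_div_assoc', one_le_div (by positivity)] at hle
    exact hle.not_gt h₁
  · rw [mul_assoc, mul_left_comm, le_inv_mul_iff₀ (by positivity), mul_one, ← mul_assoc] at hle
    exact hle.not_gt h₂

end PadicExtrapolation

section FeldmanCombination

variable {ι : Type*} {L : ℕ}

/-- The polynomials with integer coordinates `c` in the basis of Feldman polynomials of degree less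
than `L`. -/
noncomputable def feldmanComb (h : ℕ) (c : Fin L × ι → ℤ) (y : ι) : ℚ[X] :=
  ∑ i : Fin L, C (c (i, y) : ℚ) * feldmanPoly h i

theorem natDegree_feldmanComb_lt (hL : 0 < L) (h : ℕ) (c : Fin L × ι → ℤ) (y : ι) :
    (feldmanComb h c y).natDegree < L := by
  refine (natDegree_sum_le_of_forall_le (n := L - 1) _ _ fun i _ => ?_).trans_lt (by omega)
  refine (natDegree_C_mul_le _ _).trans ?_
  rw [natDegree_feldmanPoly]
  omega

theorem eq_zero_of_feldmanComb_eq_zero {h : ℕ} {c : Fin L × ι → ℤ} (hc : feldmanComb h c = 0) :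
    c = 0 := by
  have hind := Fintype.linearIndependent_iff.1
    ((linearIndependent_feldmanPoly h).comp (Fin.val : Fin L → ℕ) Fin.val_injective)
  funext w
  exact_mod_cast hind (fun i => (c (i, w.2) : ℚ)) (by
    simpa only [feldmanComb, ← smul_eq_C_mul, Pi.zero_apply, Function.comp_apply]
      using congrFun hc w.2) w.1

theorem discNorm_map_feldmanComb_le {p : ℕ} [Fact p.Prime] {r : ℝ} (hr : 1 ≤ r) (h : ℕ)
    (c : Fin L × ι → ℤ) (y : ι) :
    discNorm r ((feldmanComb h c y).map (algebraMap ℚ ℚ_[p])) ≤ (2 * r) ^ L := by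
  have hr₀ : 0 < r := zero_lt_one.trans_le hr
  simp only [feldmanComb, Polynomial.map_sum, Polynomial.map_mul, map_C]
  refine discNorm_sum_le hr₀ (by positivity) fun i _ => ?_
  calc _ ≤ 1 * (2 * r) ^ (i : ℕ) := by
        refine (discNorm_mul_le hr₀.le _ _).trans (mul_le_mul ?_
          (discNorm_map_feldmanPoly_le hr h i) (discNorm_nonneg hr₀.le _) zero_le_one)
        rw [discNorm_C, map_intCast]
        exact Padic.norm_int_le_one _
    _ ≤ (2 * r) ^ L := by
        rw [one_mul]
        exact pow_le_pow_right₀ (by linarith) i.2.le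

theorem pow_mul_hasseDeriv_feldmanComb_eval {h d a z : ℕ} {g : Fin L → ℤ}
    (hg : ∀ i : Fin L, (d : ℚ) ^ a * (hasseDeriv a (feldmanPoly h i)).eval (z : ℚ) = g i)
    (c : Fin L × ι → ℤ) (y : ι) :
    (d : ℚ) ^ a * (hasseDeriv a (feldmanComb h c y)).eval (z : ℚ) =
      ((∑ i, g i * c (i, y) : ℤ) : ℚ) := by
  simp only [feldmanComb, map_sum, eval_finsetSum, mul_sum]
  push_cast
  refine sum_congr rfl fun i _ => ?_
  rw [← hg, ← smul_eq_C_mul, map_smul, eval_smul, smul_eq_mul]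
  ring

end FeldmanCombination

section AuxiliaryFunction

theorem eq_zero_of_exponentialMoment_eq_zero {J K L S M M₁ M₂ R d : ℕ} {s : Fin K → ℕ}
    {γ : Fin K → ℤ} {θ : ℤ} {F : Fin J × Fin K → ℚ[X]} {G : ℕ → ℕ → Fin J × Fin K → ℤ}
    (hs : Function.Injective fun y : Fin J × Fin K => (y.1 : ℕ) + s y.2) (hθ : 1 < |θ|)
    (hγ : ∀ k, γ k ≠ 0) (hF : ∀ y, (F y).natDegree < L) (hd : d ≠ 0)
    (hG : ∀ (z a : ℕ) y, (d : ℚ) ^ a * (hasseDeriv a (F y)).eval (z : ℚ) = G z a y)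
    (h₀ : ∀ z < R + S, ∀ a < M, ∀ m < M₁ + M₂, exponentialMoment (G z a)
      (fun y => (y.1 : ℕ) + s y.2) (fun y => θ ^ (y.1 : ℕ) * γ y.2) m z = 0)
    (hM₁ : K ≤ M₁) (hR : K * J ≤ R * (M₁ - K)) (hS : L ≤ S * M)
    (hS' : J * K * L ≤ S * M₂ * M) : F = 0 := by
  have hθ₁ : 1 < |(θ : ℚ)| := by exact_mod_cast hθ
  have hθ₀ : (θ : ℚ) ≠ 0 := abs_pos.1 (zero_lt_one.trans hθ₁)
  have hγ' : ∀ k, (γ k : ℚ) ≠ 0 := fun k => by exact_mod_cast hγ k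
  have hθpow : Function.Injective fun r : ℕ => (θ : ℚ) ^ r := fun r r' hr =>
    pow_right_injective₀ (zero_lt_one.trans hθ₁) hθ₁.ne'
      (by simpa only [abs_pow] using congrArg abs hr)
  have hind : ∀ c : Fin J × Fin K → ℚ, (∀ m < M₁, ∀ r < R, ∑ y,
      c y * (((y.1 : ℕ) + s y.2 : ℕ) : ℚ) ^ m * ((θ : ℚ) ^ (y.1 : ℕ) * γ y.2) ^ r = 0) → c = 0 :=
    fun c hc => eq_zero_of_exponential_moments hs hθpow hγ' hc
      (by rwa [Fintype.card_fin]) (by rwa [Fintype.card_fin])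
  refine eq_zero_of_exponential_polynomial_vanishing (M₁ := M₁) (M₂ := M₂) (M₃ := M)
    (v := fun y => (((y.1 : ℕ) + s y.2 : ℕ) : ℚ)) (ω := fun y => (θ : ℚ) ^ (y.1 : ℕ) * γ y.2)
    (Nat.cast_injective.comp hs) (fun y => mul_ne_zero (pow_ne_zero _ hθ₀) (hγ' _))
    hind hF (fun z hz a ha m hm => ?_) hS (by simpa only [Fintype.card_prod, Fintype.card_fin])
  refine (mul_eq_zero_iff_left (pow_ne_zero a (by exact_mod_cast hd : (d : ℚ) ≠ 0))).1 ?_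
  calc (d : ℚ) ^ a * _ = (exponentialMoment (G z a) (fun y => (y.1 : ℕ) + s y.2)
        (fun y => θ ^ (y.1 : ℕ) * γ y.2) m z : ℚ) := by
        rw [exponentialMoment, mul_sum]
        push_cast
        refine sum_congr rfl fun y _ => ?_
        rw [← hG, ← mul_assoc, ← mul_assoc]
    _ = 0 := by rw [h₀ z hz a ha m hm, Int.cast_zero]

theorem abs_auxiliary_entry_le {d h l V B Z T z a m y : ℕ} {g b : ℤ} (hd : d ≠ 0) (hV : 1 ≤ V)
    (hB : 1 ≤ B) (hg : |g| ≤ (d : ℤ) ^ a * ((z + h).choose h : ℤ) ^ l) (hy : y ≤ V)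
    (hb : |b| ≤ B) (hz : z ≤ Z) (ha : a ≤ T) (hm : m ≤ T) :
    |g * (y : ℤ) ^ m * b ^ z| ≤ ((d ^ T * (Z + h).choose h ^ l * V ^ T * B ^ Z : ℕ) : ℤ) := by
  have hd' : (1 : ℤ) ≤ d := by exact_mod_cast Nat.one_le_iff_ne_zero.2 hd
  have hV' : (1 : ℤ) ≤ V := by exact_mod_cast hV
  have hB' : (1 : ℤ) ≤ B := by exact_mod_cast hB
  have hpow_b : |b| ^ z ≤ (B : ℤ) ^ Z :=
    (pow_le_pow_left₀ (abs_nonneg _) hb _).trans (pow_le_pow_right₀ hB' hz)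
  have hpow_y : (y : ℤ) ^ m ≤ V ^ T :=
    (pow_le_pow_left₀ (by positivity) (by exact_mod_cast hy) _).trans (pow_le_pow_right₀ hV' hm)
  rw [abs_mul, abs_mul, abs_pow, abs_pow, Nat.abs_cast]
  push_cast
  calc |g| * (y : ℤ) ^ m * |b| ^ z
      ≤ ((d : ℤ) ^ a * ((z + h).choose h : ℤ) ^ l) * V ^ T * B ^ Z := by gcongr
    _ ≤ (d : ℤ) ^ T * ((Z + h).choose h : ℤ) ^ l * V ^ T * B ^ Z := by
      gcongr

theorem exists_feldmanComb_exponentialMoment_eq_zero {ι : Type*} [Fintype ι]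
    {h l d V B S T : ℕ} {v : ι → ℕ} {b : ι → ℤ} (hh : 0 < h) (hd : d ≠ 0)
    (hdvd : ∀ i, 1 ≤ i → i ≤ h → i ∣ d) (hV₁ : 1 ≤ V) (hV : ∀ y, v y ≤ V) (hB₁ : 1 ≤ B)
    (hB : ∀ y, |b y| ≤ B) (hS : 0 < S) (hT : 0 < T)
    (hcard : 2 * (S * T ^ 2) ≤ l * h * Fintype.card ι) :
    ∃ (c : Fin (l * h) × ι → ℤ) (G : ℕ → ℕ → ι → ℤ), c ≠ 0 ∧
      (∀ (z a : ℕ) y, (d : ℚ) ^ a * (hasseDeriv a (feldmanComb h c y)).eval (z : ℚ) = G z a y) ∧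
      (∀ z < S, ∀ a < T, ∀ m < T, exponentialMoment (G z a) v b m z = 0) ∧
      ∀ {Z N z a m}, z ≤ Z → a ≤ N → m ≤ N → |exponentialMoment (G z a) v b m z| ≤
        (((l * h * Fintype.card ι) ^ 2 * (d ^ T * (S + h).choose h ^ l * V ^ T * B ^ S) *
          (d ^ N * (Z + h).choose h ^ l * V ^ N * B ^ Z) : ℕ) : ℤ) := by
  choose g hg hgle using fun (i : Fin (l * h)) z a =>
    exists_int_eq_pow_mul_hasseDeriv_feldmanPoly (m := a) (z := z) hh hd hdvd i.2
  have hentry : ∀ {Z N z a m} i y, z ≤ Z → a ≤ N → m ≤ N → |g i z a * (v y : ℤ) ^ m * b y ^ z| ≤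
      ((d ^ N * (Z + h).choose h ^ l * V ^ N * B ^ Z : ℕ) : ℤ) := fun i y hz ha hm =>
    abs_auxiliary_entry_le hd hV₁ hB₁ (hgle i _ _) (hV _) (hB _) hz ha hm
  have hpos : 1 ≤ d ^ T * (S + h).choose h ^ l * V ^ T * B ^ S := by
    have := Nat.choose_pos (Nat.le_add_left h S)
    exact Nat.one_le_iff_ne_zero.2 (by positivity)
  have hcard_prod : Fintype.card (Fin (l * h) × ι) = l * h * Fintype.card ι := by simp
  obtain ⟨c, hc₀, hc, hcle⟩ := exists_ne_zero_exponentialMoment_sum_eq_zero hS hT hpos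
    (fun z hz a ha m hm i y => hentry i y hz.le ha.le hm.le) (hcard.trans_eq hcard_prod.symm)
  refine ⟨c, fun z a y => ∑ i, g i z a * c (i, y), hc₀, fun z a y =>
    pow_mul_hasseDeriv_feldmanComb_eval (fun i => hg i z a) c y, hc, fun hz ha hm => ?_⟩
  refine (abs_exponentialMoment_sum_le (by positivity) (fun i y => hentry i y hz ha hm)
    hcle).trans_eq ?_
  rw [hcard_prod]
  push_cast
  ring

theorem not_forall_pow_dvd_of_auxiliary_inequalities {p : ℕ} [hp : Fact p.Prime]
    {J K h l d S S' M M₁ M₂ R V B ν : ℕ} {θ x : ℤ} {γ : Fin K → ℤ} {s : Fin K → ℕ}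
    (hh : 0 < h) (hd : d ≠ 0) (hdvd : ∀ i, 1 ≤ i → i ≤ h → i ∣ d)
    (hθ : ‖(θ : ℚ_[p]) - 1‖ ≤ expRadius p) (hθ₁ : 1 < |θ|) (hx : ¬ (p : ℤ) ∣ x)
    (hγ₀ : ∀ k, γ k ≠ 0)
    (hs : Function.Injective fun y : Fin J × Fin K => (y.1 : ℕ) + s y.2)
    (hV₁ : 1 ≤ V) (hV : ∀ (j : Fin J) k, (j : ℕ) + s k ≤ V)
    (hB₁ : 1 ≤ B) (hB : ∀ (j : Fin J) k, |θ ^ (j : ℕ) * γ k| ≤ B)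
    (hS₀ : 0 < S) (hM₀ : 0 < M) (hSiegel : 2 * (S * (2 * M) ^ 2) ≤ l * h * (J * K))
    (hM : M₁ + M₂ ≤ M) (hM₁ : K ≤ M₁) (hR : K * J ≤ R * (M₁ - K))
    (hS : l * h ≤ (S' - R) * M) (hS' : J * K * (l * h) ≤ (S' - R) * M₂ * M)
    {W : ℕ} (hW : W = (l * h * (J * K)) ^ 2 *
      (d ^ (2 * M) * (S + h).choose h ^ l * V ^ (2 * M) * B ^ S) *
      (d ^ M * (S' + h).choose h ^ l * V ^ M * B ^ S'))
    (h₁ : (W : ℝ) * (2 * √3) ^ (l * h) < √3 ^ (S * M))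
    (h₂ : (W : ℝ) * d ^ (2 * M) * 4 ^ (S * M) < p ^ ν) :
    ¬ ∀ k, (p : ℤ) ^ ν ∣ γ k - x * θ ^ s k := by
  intro hγ
  have hcard : Fintype.card (Fin J × Fin K) = J * K := by simp
  have hb : ∀ y : Fin J × Fin K,
      (p : ℤ) ^ ν ∣ θ ^ (y.1 : ℕ) * γ y.2 - x * θ ^ ((y.1 : ℕ) + s y.2) := fun y => by
    rw [pow_add, mul_left_comm, ← mul_sub]
    exact (hγ y.2).mul_left _
  obtain ⟨c, G, hc₀, hG, hzero, hle⟩ := exists_feldmanComb_exponentialMoment_eq_zero hh hd hdvd hV₁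
    (fun y : Fin J × Fin K => hV y.1 y.2) hB₁ (fun y => hB y.1 y.2) hS₀
    (by positivity : 0 < 2 * M) (hcard ▸ hSiegel)
  have hlh : 0 < l * h := Nat.pos_of_ne_zero fun h0 => by
    rw [h0, zero_mul] at hSiegel
    exact (by positivity : 0 < 2 * (S * (2 * M) ^ 2)).not_ge hSiegel
  have hRS : R < S' := Nat.lt_of_sub_ne_zero fun h0 => by
    rw [h0, zero_mul] at hS
    exact hS.not_gt hlh
  refine hc₀ (eq_zero_of_feldmanComb_eq_zero (eq_zero_of_exponentialMoment_eq_zero (S := S' - R)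
    (M₁ := M₁) (M₂ := M₂) hs hθ₁ hγ₀ (natDegree_feldmanComb_lt hlh h c) hd hG
    (fun z hz a ha m hm => ?_) hM₁ hR hS hS'))
  exact exponentialMoment_eq_zero_of_abs_le hd hx hθ hb (by positivity)
    (fun y => discNorm_map_feldmanComb_le one_lt_sqrt_three.le h c y) hG hzero h₁ h₂ ha.le
    (by omega) ((hle (by omega : z ≤ S') ha.le (by omega : m ≤ M)).trans_eq (by rw [hW, hcard]))

end AuxiliaryFunction

section NumericalBounds

theorem lcmUpto_le_exp (h : ℕ) : (Nat.lcmUpto h : ℝ) ≤ Real.exp (5.39 * h) := by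
  have hψ := Chebyshev.psi_le_const_mul_self (x := (h : ℝ)) (by positivity)
  rw [Chebyshev.psi_eq_log_lcmUpto] at hψ
  rw [← Real.log_le_iff_le_exp (by exact_mod_cast Nat.lcmUpto_pos _)]
  refine hψ.trans ?_
  gcongr
  rw [show (4 : ℝ) = 2 ^ 2 by norm_num, Real.log_pow]
  have := Real.log_two_lt_d9
  push_cast
  linarith

theorem exp_pow (a : ℝ) (n : ℕ) : Real.exp a ^ n = Real.exp (n * a) :=
  (Real.exp_nat_mul a n).symm

theorem two_le_exp : (2 : ℝ) ≤ Real.exp 0.6935 := by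
  rw [← Real.log_le_iff_le_exp two_pos]
  linarith [Real.log_two_lt_d9]

theorem exp_le_two : Real.exp 0.693 ≤ 2 := by
  rw [← Real.le_log_iff_exp_le two_pos]
  linarith [Real.log_two_gt_d9]

theorem four_le_exp : (4 : ℝ) ≤ Real.exp 1.387 :=
  calc (4 : ℝ) = 2 ^ 2 := by norm_num
    _ ≤ Real.exp 0.6935 ^ 2 := by gcongr; exact two_le_exp
    _ = Real.exp 1.387 := by rw [exp_pow]; norm_num

theorem choose_mul_add_le_exp {m k : ℕ} (hm : m + 1 ≤ 2 ^ k) (h : ℕ) :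
    ((m * h + h).choose h : ℝ) ≤ Real.exp ((0.7 * k + 1) * h) := by
  have hexp : (m : ℝ) + 1 ≤ Real.exp (0.7 * k) :=
    calc (m : ℝ) + 1 ≤ 2 ^ k := by exact_mod_cast hm
      _ ≤ Real.exp 0.7 ^ k := by
          gcongr
          exact two_le_exp.trans (Real.exp_le_exp.2 (by norm_num))
      _ = Real.exp (0.7 * k) := by rw [exp_pow, mul_comm]
  calc ((m * h + h).choose h : ℝ) ≤ ((m * h + h : ℕ) : ℝ) ^ h / h.factorial :=
        Nat.choose_le_pow_div h _
    _ = ((m : ℝ) + 1) ^ h * ((h : ℝ) ^ h / h.factorial) := by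
        push_cast
        rw [← add_one_mul, mul_pow, mul_div_assoc]
    _ ≤ Real.exp (0.7 * k) ^ h * Real.exp h := by
        gcongr
        exact Real.pow_div_factorial_le_exp _ h.cast_nonneg h
    _ = Real.exp ((0.7 * k + 1) * h) := by
        rw [exp_pow, ← Real.exp_add]
        ring_nf

theorem pow_six_le_exp {X : ℝ} (hX : 5040 ≤ X) : X ^ 6 ≤ Real.exp X := by
  refine le_trans ?_ (Real.pow_div_factorial_le_exp X (by linarith) 7)
  rw [le_div_iff₀ (by positivity), pow_succ X 6]
  gcongr
  norm_num [Nat.factorial]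
  exact hX

theorem natAbs_le_exp_of_log_le {x : ℤ} {η : ℝ} (hx : x ≠ 0) (h : Real.log |(x : ℝ)| ≤ η) :
    (x.natAbs : ℝ) ≤ Real.exp η := by
  rw [Nat.cast_natAbs, Int.cast_abs]
  exact (Real.log_le_iff_le_exp (by positivity)).1 h

theorem mul_le_log_of_two_pow_le {e : ℕ} {x : ℝ} (h : 2 ^ e ≤ x) : 0.69 * e ≤ Real.log x := by
  have hlog := Real.log_le_log (by positivity) h
  rw [Real.log_pow] at hlog
  nlinarith [Real.log_two_gt_d9, e.cast_nonneg (α := ℝ)]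

theorem le_log_abs_of_two_le {α : ℤ} (hα : 2 ≤ |α|) : 0.69 ≤ Real.log |(α : ℝ)| := by
  have h : (2 : ℝ) ^ 1 ≤ |(α : ℝ)| := by
    rw [pow_one]
    exact_mod_cast hα
  simpa using mul_le_log_of_two_pow_le h

theorem mul_le_log_abs_of_pow_dvd {p e : ℕ} (hp : p.Prime) {x : ℤ} (hx : x ≠ 0)
    (h : (p : ℤ) ^ e ∣ x) : 0.69 * (e : ℝ) ≤ Real.log |(x : ℝ)| := by
  refine mul_le_log_of_two_pow_le ?_
  have hle : (p : ℤ) ^ e ≤ |x| := Int.le_of_dvd (abs_pos.2 hx) ((dvd_abs _ _).2 h)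
  calc (2 : ℝ) ^ e ≤ p ^ e := by gcongr; exact_mod_cast hp.two_le
    _ ≤ |(x : ℝ)| := by exact_mod_cast hle

end NumericalBounds

section InterpolationNodes

theorem exists_exponent_norm_pow_sub_one_le {p : ℕ} [hp : Fact p.Prime] {α : ℤ}
    (hα : ¬ (p : ℤ) ∣ α) :
    ∃ q : ℕ, 1 ≤ q ∧ q ≤ p ∧ ‖((α ^ q : ℤ) : ℚ_[p]) - 1‖ ≤ expRadius p := by
  by_cases h2 : p = 2
  · subst h2
    have hodd : Odd α := by rwa [← Int.not_even_iff_odd, even_iff_two_dvd]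
    have hdvd : (2 : ℤ) ^ 3 ∣ α ^ 2 - 1 := Int.eight_dvd_sq_sub_one_of_odd hodd
    have hnorm := padic_norm_le_of_pow_dvd (p := 2) hdvd
    refine ⟨2, by norm_num, le_rfl, ?_⟩
    rw [expRadius, if_pos rfl]
    push_cast at hnorm ⊢
    norm_num at hnorm ⊢
    exact hnorm
  · have hp2 := hp.1.two_le
    have hcop : IsCoprime α (p : ℤ) :=
      ((Nat.prime_iff_prime_int.1 hp.1).coprime_iff_not_dvd.2 hα).symm
    have hdvd : (p : ℤ) ^ 1 ∣ α ^ (p - 1) - 1 := by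
      rw [pow_one]
      exact (Int.ModEq.pow_card_sub_one_eq_one hp.1 hcop).symm.dvd
    have hnorm := padic_norm_le_of_pow_dvd (p := p) hdvd
    refine ⟨p - 1, by omega, by omega, ?_⟩
    rw [expRadius, if_neg h2]
    push_cast at hnorm ⊢
    rwa [pow_one, ← one_div] at hnorm

theorem exists_mul_eq_add_mul {q : ℕ} (hq : 0 < q) (n : ℕ) :
    ∃ s r : ℕ → ℕ, (∀ k, r k < q) ∧ ∀ k, q * s k = r k + k * n := by
  have hex : ∀ k : ℕ, ∃ s r : ℕ, r < q ∧ q * s = r + k * n := by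
    intro k
    refine ⟨(k * n + (q - 1)) / q, q - 1 - (k * n + (q - 1)) % q, by omega, ?_⟩
    have hdiv := Nat.div_add_mod (k * n + (q - 1)) q
    have hmod := Nat.mod_lt (k * n + (q - 1)) hq
    omega
  choose s r hr hsr using hex
  exact ⟨s, r, hr, hsr⟩

theorem mul_add_lt_mul_of_lt {q j J r : ℕ} (hj : j < J) (hr : r < q) : q * j + r < q * J :=
  calc q * j + r < q * j + q := by gcongr
    _ = q * (j + 1) := by ring
    _ ≤ q * J := Nat.mul_le_mul_left q hj

variable {q n J K : ℕ}

theorem injective_add_of_mul_eq {s r : ℕ → ℕ} (hqJ : q * J ≤ n) (hr : ∀ k, r k < q)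
    (hsr : ∀ k, q * s k = r k + k * n) :
    Function.Injective fun y : Fin J × Fin K => (y.1 : ℕ) + s y.2 := by
  have hlt (j : Fin J) (k : ℕ) : q * j + r k < n :=
    (mul_add_lt_mul_of_lt j.2 (hr k)).trans_le hqJ
  rintro ⟨j, k⟩ ⟨j', k'⟩ (heq : (j : ℕ) + s k = j' + s k')
  have hn : 0 < n := (Nat.zero_le _).trans_lt (hlt j k)
  have hmul : q * j + r k + n * k = q * j' + r k' + n * k' := by
    have := congrArg (q * ·) heq
    simp only [mul_add, hsr] at this
    linarith
  have hk : k = k' := by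
    have hdiv := congrArg (· / n) hmul
    simp only [Nat.add_mul_div_left _ _ hn, Nat.div_eq_of_lt (hlt _ _), zero_add] at hdiv
    exact Fin.ext hdiv
  subst hk
  rw [Fin.ext (add_right_cancel heq)]

theorem add_le_sq_of_mul_eq {j k s r : ℕ} (hqJ : q * J ≤ n) (hK : K ≤ q * n) (hj : j < J)
    (hk : k < K) (hr : r < q) (hsr : q * s = r + k * n) : j + s ≤ n ^ 2 := by
  have hmul : q * (j + s) ≤ q * n ^ 2 :=
    calc q * (j + s) = q * j + r + k * n := by rw [mul_add, hsr, add_assoc]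
      _ ≤ n + k * n := by gcongr; exact (mul_add_lt_mul_of_lt hj hr).le.trans hqJ
      _ = (k + 1) * n := by ring
      _ ≤ q * n * n := Nat.mul_le_mul_right n (hk.trans_le hK)
      _ = q * n ^ 2 := by ring
  exact Nat.le_of_mul_le_mul_left hmul (by omega)

theorem abs_pow_mul_le {α : ℤ} (hα : α ≠ 0) (x y : ℤ) {j k r : ℕ} (hj : j < J) (hk : k ≤ K)
    (hr : r < q) :
    |(α ^ q) ^ j * (α ^ r * x ^ (K - k) * y ^ k)| ≤
      ((α.natAbs ^ (q * J) * max x.natAbs y.natAbs ^ K : ℕ) : ℤ) := by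
  have hα₁ : 1 ≤ α.natAbs := Int.natAbs_pos.2 hα
  have hsize : α.natAbs ^ (q * j + r) * x.natAbs ^ (K - k) * y.natAbs ^ k ≤
      α.natAbs ^ (q * J) * max x.natAbs y.natAbs ^ K :=
    calc _ ≤ α.natAbs ^ (q * J) * max x.natAbs y.natAbs ^ (K - k) *
          max x.natAbs y.natAbs ^ k := by
          gcongr
          · exact (mul_add_lt_mul_of_lt hj hr).le
          · exact le_max_left _ _
          · exact le_max_right _ _
      _ = _ := by rw [mul_assoc, ← pow_add, Nat.sub_add_cancel hk]
  calc _ = ((α.natAbs ^ (q * j + r) * x.natAbs ^ (K - k) * y.natAbs ^ k : ℕ) : ℤ) := by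
        push_cast
        simp only [abs_mul, abs_pow, pow_add, pow_mul]
        ring
    _ ≤ _ := by exact_mod_cast hsize

theorem dvd_pow_mul_sub_of_dvd {R : Type*} [CommRing R] {m α x y : R} {k s r : ℕ}
    (h : m ∣ α ^ n * x - y) (hk : k ≤ K) (hsr : q * s = r + k * n) :
    m ∣ α ^ r * x ^ (K - k) * y ^ k - x ^ K * (α ^ q) ^ s := by
  have hfactor : α ^ r * x ^ (K - k) * y ^ k - x ^ K * (α ^ q) ^ s =
      α ^ r * x ^ (K - k) * -((α ^ n * x) ^ k - y ^ k) := by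
    have hxK : x ^ K = x ^ (K - k) * x ^ k := by rw [← pow_add, Nat.sub_add_cancel hk]
    rw [hxK, ← pow_mul, hsr, mul_pow, ← pow_mul, pow_add, mul_comm n]
    ring
  rw [hfactor]
  exact (h.trans (sub_dvd_pow_sub_pow _ _ _)).neg_right.mul_left _

end InterpolationNodes

section Parameters

/-- Sizes of the auxiliary exponential polynomial attached to `q`, to `a = log |α|` and to a bound
`η` for the logarithmic heights of `x` and `y`: there are `J * K` frequencies `j + s k`, with
`j < J` and `k < K`, and the coefficients have degree less than `l * h` in the basis of Feldman
polynomials of denominator `lcm (1, …, h)`. The numerical constants come from balancing Siegel's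
lemma (`mul_le`) against the height of the exponential values (`height_le`). -/
structure AuxiliaryParameters (q : ℕ) (a η : ℝ) (J K l h : ℕ) : Prop where
  le_h : 18 ≤ h
  le_l : 5040 ≤ l
  mul_le : 16000 * l ≤ J * K
  le_mul : J * K ≤ 16000 * (l + 1)
  K_le : 100 * K ≤ l
  height_le : q * J * a + K * η ≤ 0.017 * l

theorem exists_natCast_mem_Icc {x : ℝ} (hx : 0 ≤ x) : ∃ n : ℕ, x ≤ n ∧ (n : ℝ) ≤ x + 1 :=
  ⟨⌈x⌉₊, Nat.le_ceil _, (Nat.ceil_lt_add_one hx).le⟩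

theorem auxiliaryParameters_of_mem_Icc {q J K l h : ℕ} {a η : ℝ} (ha : 0.69 ≤ q * a) (hη : 1 ≤ η)
    (hh : 18 ≤ h) (hJ : 2e6 * η ≤ J) (hJ' : (J : ℝ) ≤ 2e6 * η + 1) (hK : 2e6 * (q * a) ≤ K)
    (hK' : (K : ℝ) ≤ 2e6 * (q * a) + 1) (hl : 16000 * l ≤ J * K) (hl' : J * K ≤ 16000 * (l + 1)) :
    AuxiliaryParameters q a η J K l h := by
  have hη' : 0.69 * η ≤ q * a * η := by gcongr
  have hqa : q * a ≤ q * a * η := le_mul_of_one_le_right (by linarith) hη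
  have hJK : 4e12 * (q * a * η) ≤ J * K :=
    calc _ = (2e6 * η) * (2e6 * (q * a)) := by ring
      _ ≤ _ := by gcongr
  have hl₁ : 2.49e8 * (q * a * η) ≤ l := by
    have : (J : ℝ) * K ≤ 16000 * (l + 1) := by exact_mod_cast hl'
    linarith
  refine ⟨hh, ?_, hl, hl', ?_, ?_⟩
  · have : (5040 : ℝ) ≤ l := by linarith [hl₁]
    exact_mod_cast this
  · have : 100 * (K : ℝ) ≤ l := by linarith
    exact_mod_cast this
  · have hKη : K * η ≤ (2e6 * (q * a) + 1) * η := by gcongr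
    have hJa : J * (q * a) ≤ (2e6 * η + 1) * (q * a) := by gcongr
    nlinarith

theorem exists_auxiliaryParameters {a η N : ℝ} {q : ℕ} (ha : 0.69 ≤ a) (hη : 1 ≤ η)
    (hN : 18 ≤ N) (hq : 1 ≤ q) :
    ∃ J K l h : ℕ, AuxiliaryParameters q a η J K l h ∧ N ≤ h ∧ (J : ℝ) ≤ 2000001 * η ∧
      (K : ℝ) ≤ 2000002 * (q * a) ∧ 1200 * ((l : ℝ) * h) ≤ 3.2e11 * (q * a * η * N) := by
  have hq' : (1 : ℝ) ≤ q := by exact_mod_cast hq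
  have hqa : 0.69 ≤ q * a := by nlinarith
  obtain ⟨J, hJ, hJ'⟩ := exists_natCast_mem_Icc (x := 2e6 * η) (by positivity)
  obtain ⟨K, hK, hK'⟩ := exists_natCast_mem_Icc (x := 2e6 * (q * a)) (by positivity)
  obtain ⟨h, hh, hh'⟩ := exists_natCast_mem_Icc (x := N) (by linarith)
  have hJη : (J : ℝ) ≤ 2000001 * η := by linarith
  have hKa : (K : ℝ) ≤ 2000002 * (q * a) := by linarith
  have hl : 16000 * ((J * K / 16000 : ℕ) : ℝ) ≤ 4.00001e12 * (q * a * η) :=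
    calc 16000 * ((J * K / 16000 : ℕ) : ℝ) ≤ J * K := by exact_mod_cast Nat.mul_div_le _ _
      _ ≤ (2000001 * η) * (2000002 * (q * a)) := by gcongr
      _ = (2000001 * 2000002) * (q * a * η) := by ring
      _ ≤ _ := by gcongr; norm_num
  refine ⟨J, K, J * K / 16000, h, auxiliaryParameters_of_mem_Icc hqa hη
    (by exact_mod_cast hN.trans hh) hJ hJ' hK hK' (by omega) (by omega), hh, hJη, hKa, ?_⟩
  generalize J * K / 16000 = l at hl
  have hhN : (h : ℝ) ≤ 19 / 18 * N := by linarith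
  calc 1200 * ((l : ℝ) * h) = 0.075 * (16000 * l) * h := by ring
    _ ≤ 0.075 * (4.00001e12 * (q * a * η)) * (19 / 18 * N) := by gcongr
    _ = (0.075 * 4.00001e12 * (19 / 18)) * (q * a * η * N) := by ring
    _ ≤ _ := by gcongr; norm_num

theorem auxiliary_product_le {U d c₁ c₂ V B h l : ℕ}
    (hU : (U : ℝ) ^ 2 ≤ Real.exp (l * h)) (hd : (d : ℝ) ≤ Real.exp (5.39 * h))
    (hc₁ : (c₁ : ℝ) ≤ Real.exp (5.9 * h)) (hc₂ : (c₂ : ℝ) ≤ Real.exp (8.7 * h))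
    (hV : (V : ℝ) ≤ Real.exp (2 * h)) (hB : (B : ℝ) ≤ Real.exp (0.017 * l)) :
    ((U ^ 2 * (d ^ (2 * (5 * l)) * c₁ ^ l * V ^ (2 * (5 * l)) * B ^ (80 * h)) *
      (d ^ (5 * l) * c₂ ^ l * V ^ (5 * l) * B ^ (2000 * h)) : ℕ) : ℝ) ≤
      Real.exp (165 * (l * h)) := by
  push_cast
  calc _ ≤ Real.exp (l * h) * (Real.exp (5.39 * h) ^ (2 * (5 * l)) * Real.exp (5.9 * h) ^ l *
          Real.exp (2 * h) ^ (2 * (5 * l)) * Real.exp (0.017 * l) ^ (80 * h)) *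
        (Real.exp (5.39 * h) ^ (5 * l) * Real.exp (8.7 * h) ^ l *
          Real.exp (2 * h) ^ (5 * l) * Real.exp (0.017 * l) ^ (2000 * h)) := by
        gcongr
    _ ≤ _ := by
        simp only [exp_pow, ← Real.exp_add]
        rw [Real.exp_le_exp]
        push_cast
        have : (0 : ℝ) ≤ l * h := by positivity
        nlinarith

theorem mul_pow_lt_sqrt_three_pow {W h l : ℕ} (hlh : 0 < l * h)
    (hW : (W : ℝ) ≤ Real.exp (165 * (l * h))) :
    (W : ℝ) * (2 * √3) ^ (l * h) < √3 ^ (80 * h * (5 * l)) := by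
  have hX : (0 : ℝ) < l * h := by exact_mod_cast hlh
  have hsqrt : √3 ≤ 2 := Real.sqrt_le_iff.2 (by norm_num)
  calc _ ≤ Real.exp (165 * (l * h)) * Real.exp 1.387 ^ (l * h) := by
        gcongr
        linarith [four_le_exp]
    _ < Real.exp 1 ^ (200 * (l * h)) := by
        rw [exp_pow, exp_pow, ← Real.exp_add, Real.exp_lt_exp]
        push_cast
        linarith
    _ ≤ 3 ^ (200 * (l * h)) := by gcongr; linarith [Real.exp_one_lt_d9]
    _ = √3 ^ (80 * h * (5 * l)) := by
        rw [show 80 * h * (5 * l) = 2 * (200 * (l * h)) by ring, pow_mul √3,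
          Real.sq_sqrt (by norm_num)]

theorem mul_pow_lt_prime_pow {W d h l p ν : ℕ} (hlh : 0 < l * h)
    (hW : (W : ℝ) ≤ Real.exp (165 * (l * h))) (hd : (d : ℝ) ≤ Real.exp (5.39 * h))
    (hp : 2 ≤ p) (hν : 1200 * (l * h) ≤ ν) :
    (W : ℝ) * d ^ (2 * (5 * l)) * 4 ^ (80 * h * (5 * l)) < p ^ ν := by
  have hX : (0 : ℝ) < l * h := by exact_mod_cast hlh
  calc _ ≤ Real.exp (165 * (l * h)) * Real.exp (5.39 * h) ^ (2 * (5 * l)) *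
          Real.exp 1.387 ^ (80 * h * (5 * l)) := by
        gcongr
        exact four_le_exp
    _ < Real.exp 0.693 ^ (1200 * (l * h)) := by
        simp only [exp_pow, ← Real.exp_add]
        rw [Real.exp_lt_exp]
        push_cast
        nlinarith
    _ ≤ 2 ^ (1200 * (l * h)) := by gcongr; exact exp_le_two
    _ ≤ (2 : ℝ) ^ ν := by gcongr; norm_num
    _ ≤ _ := by gcongr; exact_mod_cast hp

variable {q J K l h : ℕ} {a η : ℝ}

theorem AuxiliaryParameters.mul_pos (P : AuxiliaryParameters q a η J K l h) : 0 < l * h :=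
  Nat.mul_pos (by have := P.le_l; omega) (by have := P.le_h; omega)

theorem AuxiliaryParameters.sq_le_exp (P : AuxiliaryParameters q a η J K l h) :
    ((l * h * (J * K) : ℕ) : ℝ) ^ 2 ≤ Real.exp (l * h) := by
  obtain ⟨hh, hl⟩ := And.intro P.le_h P.le_l
  have hX : (5040 : ℝ) ≤ l * h := by
    have : 5040 ≤ l * h := by nlinarith
    exact_mod_cast this
  have hJK : J * K ≤ (l * h) ^ 2 :=
    calc J * K ≤ 18000 * l := by have := P.le_mul; omega
      _ ≤ (l * (18 * 18)) * l := by nlinarith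
      _ ≤ (l * (h * h)) * l := by gcongr
      _ = _ := by ring
  calc ((l * h * (J * K) : ℕ) : ℝ) ^ 2 ≤ ((l * h * (l * h) ^ 2 : ℕ) : ℝ) ^ 2 := by gcongr
    _ = ((l : ℝ) * h) ^ 6 := by push_cast; ring
    _ ≤ Real.exp (l * h) := pow_six_le_exp hX

theorem AuxiliaryParameters.height_le_exp (P : AuxiliaryParameters q a η J K l h) {α x y : ℤ}
    (hα : α ≠ 0) (hx : x ≠ 0) (hy : y ≠ 0) (hαa : Real.log |(α : ℝ)| ≤ a)
    (hxη : Real.log |(x : ℝ)| ≤ η) (hyη : Real.log |(y : ℝ)| ≤ η) :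
    ((α.natAbs ^ (q * J) * max x.natAbs y.natAbs ^ K : ℕ) : ℝ) ≤ Real.exp (0.017 * l) := by
  have hmax : ((max x.natAbs y.natAbs : ℕ) : ℝ) ≤ Real.exp η := by
    rw [Nat.cast_max]
    exact max_le (natAbs_le_exp_of_log_le hx hxη) (natAbs_le_exp_of_log_le hy hyη)
  calc _ = (α.natAbs : ℝ) ^ (q * J) * ((max x.natAbs y.natAbs : ℕ) : ℝ) ^ K := by
        rw [Nat.cast_mul, Nat.cast_pow, Nat.cast_pow]
    _ ≤ Real.exp a ^ (q * J) * Real.exp η ^ K := by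
        gcongr
        exact natAbs_le_exp_of_log_le hα hαa
    _ ≤ _ := by
        rw [exp_pow, exp_pow, ← Real.exp_add, Real.exp_le_exp]
        push_cast
        exact P.height_le

theorem AuxiliaryParameters.constant_le_exp (P : AuxiliaryParameters q a η J K l h) {n B : ℕ}
    (hn : 0 < n) (hnh : Real.log n ≤ h) (hB : (B : ℝ) ≤ Real.exp (0.017 * l)) :
    (((l * h * (J * K)) ^ 2 * (Nat.lcmUpto h ^ (2 * (5 * l)) * (80 * h + h).choose h ^ l *
      (n ^ 2) ^ (2 * (5 * l)) * B ^ (80 * h)) * (Nat.lcmUpto h ^ (5 * l) *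
      (2000 * h + h).choose h ^ l * (n ^ 2) ^ (5 * l) * B ^ (2000 * h)) : ℕ) : ℝ) ≤
      Real.exp (165 * (l * h)) := by
  refine auxiliary_product_le P.sq_le_exp (lcmUpto_le_exp h) ?_ ?_ ?_ hB
  · refine (choose_mul_add_le_exp (m := 80) (k := 7) (by norm_num) h).trans_eq ?_
    norm_num
  · refine (choose_mul_add_le_exp (m := 2000) (k := 11) (by norm_num) h).trans_eq ?_
    norm_num
  · have hn' : (n : ℝ) ≤ Real.exp h := (Real.log_le_iff_le_exp (by positivity)).1 hnh
    calc ((n ^ 2 : ℕ) : ℝ) = (n : ℝ) ^ 2 := Nat.cast_pow _ _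
      _ ≤ Real.exp h ^ 2 := by gcongr
      _ = Real.exp (2 * h) := by rw [exp_pow]; norm_num

end Parameters

section ExponentBound

theorem AuxiliaryParameters.lt_of_pow_dvd {p : ℕ} [hp : Fact p.Prime] {q J K l h n ν : ℕ}
    {η : ℝ} {α x y : ℤ}
    (P : AuxiliaryParameters q (Real.log |(α : ℝ)|) η J K l h) (hα : 2 ≤ |α|)
    (hpx : ¬ (p : ℤ) ∣ x) (hy : y ≠ 0) (hxη : Real.log |(x : ℝ)| ≤ η)
    (hyη : Real.log |(y : ℝ)| ≤ η) (hq : 1 ≤ q)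
    (hθ : ‖((α ^ q : ℤ) : ℚ_[p]) - 1‖ ≤ expRadius p) (hn : 0 < n) (hnh : Real.log n ≤ h)
    (hqJ : q * J ≤ n) (hKn : K ≤ q * n) (hν : (p : ℤ) ^ ν ∣ α ^ n * x - y) :
    ν < 1200 * (l * h) := by
  by_contra! hle
  have hα₀ : α ≠ 0 := by rintro rfl; norm_num at hα
  have hx : x ≠ 0 := fun hx => hpx (hx ▸ dvd_zero _)
  obtain ⟨s, r, hr, hsr⟩ := exists_mul_eq_add_mul hq n
  set B := α.natAbs ^ (q * J) * max x.natAbs y.natAbs ^ K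
  have hB : 1 ≤ B := by
    have hmax : 0 < max x.natAbs y.natAbs := lt_max_of_lt_left (Int.natAbs_pos.2 hx)
    exact Nat.mul_pos (pow_pos (Int.natAbs_pos.2 hα₀) _) (pow_pos hmax _)
  have hlh := P.mul_pos
  have hW := P.constant_le_exp hn hnh (P.height_le_exp hα₀ hx hy le_rfl hxη hyη)
  obtain ⟨hh, hl, hJK, hJK', hKl, -⟩ := P
  have hRK : 2000 * h - 800 * h = 1200 * h := by omega
  refine not_forall_pow_dvd_of_auxiliary_inequalities (d := Nat.lcmUpto h) (S := 80 * h)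
    (S' := 2000 * h) (M := 5 * l) (M₁ := 2 * l) (M₂ := 3 * l) (R := 800 * h) (V := n ^ 2) (B := B)
    (θ := α ^ q) (x := x ^ K) (γ := fun k : Fin K => α ^ r k * x ^ (K - k) * y ^ (k : ℕ))
    (s := fun k => s k) (by omega) (Nat.lcmUpto_pos h).ne'
    (fun i hi hih => Finset.dvd_lcm (f := id) (Finset.mem_Icc.2 ⟨hi, hih⟩)) hθ
    (by rw [abs_pow]; exact one_lt_pow₀ (by omega) (by omega))
    (fun hdvd => hpx ((Nat.prime_iff_prime_int.1 hp.1).dvd_of_dvd_pow hdvd))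
    (fun k => by positivity) (injective_add_of_mul_eq hqJ hr hsr) (Nat.one_le_pow _ _ hn)
    (fun j k => add_le_sq_of_mul_eq hqJ hKn j.2 k.2 (hr k) (hsr k)) hB
    (fun j k => abs_pow_mul_le hα₀ x y j.2 k.2.le (hr k)) (by omega) (by omega) ?_ (by omega)
    (by omega) ?_ ?_ ?_ rfl (mul_pow_lt_sqrt_three_pow hlh hW)
    (mul_pow_lt_prime_pow hlh hW (lcmUpto_le_exp h) hp.1.two_le hle)
    fun k => dvd_pow_mul_sub_of_dvd hν k.2.le (hsr k)
  · calc 2 * (80 * h * (2 * (5 * l)) ^ 2) = l * h * (16000 * l) := by ring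
      _ ≤ l * h * (J * K) := Nat.mul_le_mul_left _ hJK
  · calc K * J = J * K := mul_comm _ _
      _ ≤ 800 * 18 * (2 * l - K) := by omega
      _ ≤ 800 * h * (2 * l - K) := by gcongr
  · rw [hRK]
    nlinarith
  · rw [hRK]
    calc J * K * (l * h) ≤ (18000 * l) * (l * h) := Nat.mul_le_mul_right _ (by omega)
      _ = 1200 * h * (3 * l) * (5 * l) := by ring

theorem exponent_le_of_not_dvd {p : ℕ} [hp : Fact p.Prime] {α x y : ℤ} {n ν : ℕ} {η : ℝ}
    (hα : 2 ≤ |α|) (hpα : ¬ (p : ℤ) ∣ α) (hpx : ¬ (p : ℤ) ∣ x) (hy : y ≠ 0)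
    (hη : 1 ≤ η) (hαη : Real.log |(α : ℝ)| ≤ η) (hxη : Real.log |(x : ℝ)| ≤ η)
    (hyη : Real.log |(y : ℝ)| ≤ η) (hN : 18 ≤ Real.log n) (hn : 3e6 * (p * η) ≤ n)
    (hν : (p : ℤ) ^ ν ∣ α ^ n * x - y) :
    (ν : ℝ) ≤ 3.2e11 * (p * Real.log |(α : ℝ)| * η * Real.log n) := by
  have ha : 0.69 ≤ Real.log |(α : ℝ)| := le_log_abs_of_two_le hα
  obtain ⟨q, hq, hqp, hθ⟩ := exists_exponent_norm_pow_sub_one_le hpα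
  obtain ⟨J, K, l, h, P, hNh, hJ, hK, hlh⟩ := exists_auxiliaryParameters ha hη hN hq
  have hqp' : (q : ℝ) ≤ p := by exact_mod_cast hqp
  have hp2 : (2 : ℝ) ≤ p := by exact_mod_cast hp.1.two_le
  have hn₀ : 0 < n := Nat.pos_of_ne_zero (by rintro rfl; norm_num at hN)
  have hqJ : (q : ℝ) * J ≤ n :=
    calc (q : ℝ) * J ≤ p * (2000001 * η) := by gcongr
      _ ≤ 3e6 * (p * η) := by nlinarith
      _ ≤ n := hn
  have hKn : (K : ℝ) ≤ q * n :=
    calc (K : ℝ) ≤ 2000002 * (q * η) := hK.trans (by gcongr)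
      _ ≤ q * (3e6 * (p * η)) := by
          have : 0 ≤ (q : ℝ) * η := by positivity
          nlinarith
      _ ≤ q * n := by gcongr
  have hlt : ν < 1200 * (l * h) := P.lt_of_pow_dvd hα hpx hy hxη hyη hq hθ hn₀ hNh
    (by exact_mod_cast hqJ) (by exact_mod_cast hKn) hν
  calc (ν : ℝ) ≤ 1200 * ((l : ℝ) * h) := by exact_mod_cast hlt.le
    _ ≤ 3.2e11 * (q * Real.log |(α : ℝ)| * η * Real.log n) := hlh
    _ ≤ 3.2e11 * (p * Real.log |(α : ℝ)| * η * Real.log n) := by gcongr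

theorem log_abs_pow_mul_sub_le {α x y : ℤ} {n : ℕ} {η : ℝ} (hα : α ≠ 0) (hx : x ≠ 0) (hy : y ≠ 0)
    (hxη : Real.log |(x : ℝ)| ≤ η) (hyη : Real.log |(y : ℝ)| ≤ η) (hne : α ^ n * x ≠ y) :
    Real.log |((α ^ n * x - y : ℤ) : ℝ)| ≤ n * Real.log |(α : ℝ)| + η + 1 := by
  set a := Real.log |(α : ℝ)|
  have hα₁ : (1 : ℝ) ≤ |(α : ℝ)| := by exact_mod_cast Int.one_le_abs hα
  have ha : 0 ≤ a := Real.log_nonneg hα₁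
  have hαa : |(α : ℝ)| = Real.exp a := (Real.exp_log (by linarith)).symm
  have hx' : |(x : ℝ)| ≤ Real.exp η := (Real.log_le_iff_le_exp (by positivity)).1 hxη
  have hy' : |(y : ℝ)| ≤ Real.exp η := (Real.log_le_iff_le_exp (by positivity)).1 hyη
  have hpos : 0 < |((α ^ n * x - y : ℤ) : ℝ)| := by
    rw [abs_pos]
    exact_mod_cast sub_ne_zero.2 hne
  rw [Real.log_le_iff_le_exp hpos]
  calc |((α ^ n * x - y : ℤ) : ℝ)| ≤ |(α : ℝ)| ^ n * |(x : ℝ)| + |(y : ℝ)| := by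
        push_cast
        refine (abs_sub _ _).trans ?_
        rw [abs_mul, abs_pow]
    _ ≤ Real.exp (n * a) * Real.exp η + 1 * Real.exp η := by
        rw [hαa, exp_pow, one_mul]
        gcongr
    _ ≤ Real.exp (n * a) * Real.exp η + Real.exp (n * a) * Real.exp η := by
        gcongr
        exact Real.one_le_exp (by positivity)
    _ = Real.exp (n * a) * Real.exp η * 2 := by ring
    _ ≤ Real.exp (n * a) * Real.exp η * Real.exp 1 := by
        gcongr
        linarith [Real.exp_one_gt_d9]
    _ = _ := by rw [← Real.exp_add, ← Real.exp_add]

theorem le_prime_mul_log_mul {p : ℕ} (hp : p.Prime) {α : ℤ} (hα : 2 ≤ |α|) {η : ℝ} (hη : 0 ≤ η) :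
    1.38 * η ≤ p * Real.log |(α : ℝ)| * η := by
  have hp2 : (2 : ℝ) ≤ p := by exact_mod_cast hp.two_le
  gcongr
  nlinarith [le_log_abs_of_two_le hα]

theorem exponent_le_of_le {p : ℕ} (hp : p.Prime) {α x y : ℤ} {n ν : ℕ} {η : ℝ}
    (hα : 2 ≤ |α|) (hx : x ≠ 0) (hy : y ≠ 0) (hη : 1 ≤ η) (hxη : Real.log |(x : ℝ)| ≤ η)
    (hyη : Real.log |(y : ℝ)| ≤ η) (hn : (n : ℝ) ≤ 3e6 * (p * η)) (hne : α ^ n * x ≠ y)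
    (hν : (p : ℤ) ^ ν ∣ α ^ n * x - y) :
    (ν : ℝ) ≤ 1e7 * (p * Real.log |(α : ℝ)| * η) := by
  have hα₀ : α ≠ 0 := by rintro rfl; norm_num at hα
  have hνlog := mul_le_log_abs_of_pow_dvd hp (sub_ne_zero.2 hne) hν
  have hlog := log_abs_pow_mul_sub_le hα₀ hx hy hxη hyη hne
  have hE := le_prime_mul_log_mul hp hα (by linarith : 0 ≤ η)
  have hna : n * Real.log |(α : ℝ)| ≤ 3e6 * (p * η) * Real.log |(α : ℝ)| := by
    gcongr
    linarith [le_log_abs_of_two_le hα]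
  nlinarith

theorem mul_min_le_log_abs {p : ℕ} (hp : p.Prime) {u v : ℤ} {e ν : ℕ} (hv : v ≠ 0)
    (hu : (p : ℤ) ^ e ∣ u) (hν : (p : ℤ) ^ ν ∣ u - v) :
    0.69 * ((min e ν : ℕ) : ℝ) ≤ Real.log |(v : ℝ)| := by
  have hu' : (p : ℤ) ^ min e ν ∣ u := (pow_dvd_pow _ (min_le_left e ν)).trans hu
  refine mul_le_log_abs_of_pow_dvd hp hv ((dvd_sub_right hu').1 ?_)
  exact (pow_dvd_pow _ (min_le_right e ν)).trans hν

theorem log_abs_le_log_abs_of_dvd {x z : ℤ} (h : x ∣ z) (hz : z ≠ 0) :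
    Real.log |(x : ℝ)| ≤ Real.log |(z : ℝ)| := by
  have hx : x ≠ 0 := by
    rintro rfl
    exact hz (zero_dvd_iff.1 h)
  have hle : |x| ≤ |z| := Int.le_of_dvd (abs_pos.2 hz) ((abs_dvd_abs _ _).2 h)
  exact Real.log_le_log (by positivity) (by exact_mod_cast hle)

theorem exponent_le_of_dvd_base {p : ℕ} (hp : p.Prime) {α x y : ℤ} {n ν : ℕ} {η : ℝ}
    (hpα : (p : ℤ) ∣ α) (hy : y ≠ 0) (hη : 0 < η) (hyη : Real.log |(y : ℝ)| ≤ η)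
    (hn : 3e6 * (p * η) ≤ n) (hν : (p : ℤ) ^ ν ∣ α ^ n * x - y) : (ν : ℝ) ≤ 2 * η := by
  have hmin := mul_min_le_log_abs hp hy ((pow_dvd_pow_of_dvd hpα n).mul_right x) hν
  have hp2 : (2 : ℝ) ≤ p := by exact_mod_cast hp.two_le
  rcases min_choice n ν with h | h <;> rw [h] at hmin
  · nlinarith
  · linarith

theorem exponent_le_of_not_dvd_base {p : ℕ} [hp : Fact p.Prime] {α x y : ℤ} {n ν : ℕ} {η : ℝ}
    (hα : 2 ≤ |α|) (hpα : ¬ (p : ℤ) ∣ α) (hx : x ≠ 0) (hy : y ≠ 0)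
    (hη : 1 ≤ η) (hαη : Real.log |(α : ℝ)| ≤ η) (hxη : Real.log |(x : ℝ)| ≤ η)
    (hyη : Real.log |(y : ℝ)| ≤ η) (hN : 18 ≤ Real.log n) (hn : 3e6 * (p * η) ≤ n)
    (hν : (p : ℤ) ^ ν ∣ α ^ n * x - y) :
    (ν : ℝ) ≤ 3.2e11 * (p * Real.log |(α : ℝ)| * η * Real.log n) + 2 * η := by
  have hfin : FiniteMultiplicity (p : ℤ) x :=
    Int.finiteMultiplicity_iff.2 ⟨by simpa using hp.1.ne_one, hx⟩
  obtain ⟨x', hxe, hpx'⟩ := hfin.exists_eq_pow_mul_and_not_dvd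
  set e := multiplicity (p : ℤ) x
  have he := mul_le_log_abs_of_pow_dvd hp.1 hx (Dvd.intro _ hxe.symm)
  rcases le_total ν e with hle | hle
  · have hνe : (ν : ℝ) ≤ e := by exact_mod_cast hle
    have hpos : 0 ≤ p * Real.log |(α : ℝ)| * η * Real.log n := by
      have := le_log_abs_of_two_le hα
      positivity
    linarith
  · have hpe : (p : ℤ) ^ e ∣ y :=
      (dvd_sub_right ((Dvd.intro _ hxe.symm).mul_left _)).1 ((pow_dvd_pow _ hle).trans hν)
    obtain ⟨y', hye⟩ := hpe
    obtain ⟨μ, rfl⟩ := Nat.exists_eq_add_of_le hle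
    have hμ : (p : ℤ) ^ μ ∣ α ^ n * x' - y' := by
      rw [show α ^ n * x - y = p ^ e * (α ^ n * x' - y') by rw [hxe, hye]; ring, pow_add] at hν
      exact Int.dvd_of_mul_dvd_mul_left (pow_ne_zero _ (by exact_mod_cast hp.1.ne_zero)) hν
    have hy' : y' ≠ 0 := by
      rintro rfl
      exact hy (by simpa using hye)
    have hμη := exponent_le_of_not_dvd hα hpα hpx' hy' hη hαη
      ((log_abs_le_log_abs_of_dvd (Dvd.intro_left _ hxe.symm) hx).trans hxη)
      ((log_abs_le_log_abs_of_dvd (Dvd.intro_left _ hye.symm) hy).trans hyη) hN hn hμ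
    push_cast
    linarith

theorem exponent_le {p : ℕ} [hp : Fact p.Prime] {α x y : ℤ} {n ν : ℕ} {η : ℝ}
    (hα : 2 ≤ |α|) (hx : x ≠ 0) (hy : y ≠ 0)
    (hη : 1 ≤ η) (hαη : Real.log |(α : ℝ)| ≤ η) (hxη : Real.log |(x : ℝ)| ≤ η)
    (hyη : Real.log |(y : ℝ)| ≤ η) (hN : 18 ≤ Real.log n) (hne : α ^ n * x ≠ y)
    (hν : (p : ℤ) ^ ν ∣ α ^ n * x - y) :
    (ν : ℝ) ≤ 3.3e11 * (p * Real.log |(α : ℝ)| * η * Real.log n) := by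
  have hE : 1.38 * η ≤ p * Real.log |(α : ℝ)| * η :=
    le_prime_mul_log_mul hp.1 hα (by linarith)
  have hEN : p * Real.log |(α : ℝ)| * η * 18 ≤ p * Real.log |(α : ℝ)| * η * Real.log n := by
    gcongr
    linarith
  rcases le_total (n : ℝ) (3e6 * (p * η)) with hn | hn
  · have := exponent_le_of_le hp.1 hα hx hy hη hxη hyη hn hne hν
    linarith
  by_cases hpα : (p : ℤ) ∣ α
  · have := exponent_le_of_dvd_base hp.1 hpα hy (by linarith) hyη hn hν
    linarith
  · have := exponent_le_of_not_dvd_base hα hpα hx hy hη hαη hxη hyη hN hn hν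
    linarith

end ExponentBound

section ClosedForm

variable {R : Type*} [CommRing R] [LinearOrder R] [IsStrictOrderedRing R] {a b A B : R}

theorem abs_add_le_of_le (ha : |a| ≤ A) (hb : |b| ≤ B) : |a + b| ≤ A + B :=
  (abs_add_le a b).trans (add_le_add ha hb)

theorem abs_sub_le_of_le (ha : |a| ≤ A) (hb : |b| ≤ B) : |a - b| ≤ A + B :=
  (abs_sub a b).trans (add_le_add ha hb)

theorem abs_mul_le_of_le (ha : |a| ≤ A) (hb : |b| ≤ B) : |a * b| ≤ A * B := by
  rw [abs_mul]
  exact mul_le_mul ha hb (abs_nonneg b) ((abs_nonneg a).trans ha)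

theorem abs_sq_le_of_le (ha : |a| ≤ A) : |a ^ 2| ≤ A ^ 2 := by
  rw [abs_pow]
  gcongr

theorem add_pow_le_pow_succ {Y : R} (hY : 2 ≤ Y) {i j k : ℕ} (hi : i ≤ k) (hj : j ≤ k) :
    Y ^ i + Y ^ j ≤ Y ^ (k + 1) := by
  have hY₁ : 1 ≤ Y := one_le_two.trans hY
  calc Y ^ i + Y ^ j ≤ Y ^ k + Y ^ k :=
        add_le_add (pow_le_pow_right₀ hY₁ hi) (pow_le_pow_right₀ hY₁ hj)
    _ = Y ^ k * 2 := (mul_two _).symm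
    _ ≤ Y ^ k * Y := by gcongr
    _ = Y ^ (k + 1) := (pow_succ Y k).symm

theorem abs_mul_natCast_add_le {Y : R} {n k : ℕ} (hY : 2 ≤ Y) (hn : 1 ≤ n) (ha : |a| ≤ Y ^ k)
    (hb : |b| ≤ Y ^ k) : |a * n + b| ≤ n * Y ^ (k + 1) := by
  have hn' : (1 : R) ≤ n := by exact_mod_cast hn
  have hYk : 0 ≤ Y ^ k := (abs_nonneg b).trans hb
  have han : |a * n| ≤ Y ^ k * n := abs_mul_le_of_le ha (Nat.abs_cast n).le
  calc |a * n + b| ≤ Y ^ k * n + Y ^ k := abs_add_le_of_le han hb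
    _ ≤ Y ^ k * n + Y ^ k * n := by gcongr; exact le_mul_of_one_le_right hYk hn'
    _ = n * Y ^ k * 2 := by ring
    _ ≤ n * Y ^ k * Y := by gcongr
    _ = n * Y ^ (k + 1) := by ring

variable {α β u₀ u₁ u₂ Y : R}

theorem abs_sub_two_mul_add_le (hY : 3 ≤ Y) (hα : |α| ≤ Y) (h₀ : |u₀| ≤ Y) (h₁ : |u₁| ≤ Y)
    (h₂ : |u₂| ≤ Y) : |u₂ - 2 * α * u₁ + α ^ 2 * u₀| ≤ Y ^ 4 := by
  have h2α : |2 * α| ≤ 2 * Y := abs_mul_le_of_le (by simp) hα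
  calc |u₂ - 2 * α * u₁ + α ^ 2 * u₀| ≤ Y + 2 * Y * Y + Y ^ 2 * Y :=
        abs_add_le_of_le (abs_sub_le_of_le h₂ (abs_mul_le_of_le h2α h₁))
          (abs_mul_le_of_le (abs_sq_le_of_le hα) h₀)
    _ ≤ Y * Y + 2 * Y * Y + Y ^ 2 * Y := by gcongr; nlinarith
    _ = 3 * Y ^ 2 + Y ^ 3 := by ring
    _ ≤ Y * Y ^ 2 + Y ^ 3 := by gcongr
    _ = Y ^ 3 + Y ^ 3 := by ring
    _ ≤ Y ^ 4 := add_pow_le_pow_succ (by linarith) le_rfl le_rfl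

theorem exists_integral_closed_form {α β u₀ u₁ u₂ Y : ℤ} {a b c : ℚ} (hα : α ≠ 0) (hαβ : α ≠ β)
    (hY : 3 ≤ Y) (hαY : |α| ≤ Y) (hβY : |β| ≤ Y) (h₀Y : |u₀| ≤ Y) (h₁Y : |u₁| ≤ Y)
    (h₂Y : |u₂| ≤ Y) (h₀ : (u₀ : ℚ) = c + b) (h₁ : (u₁ : ℚ) = (a + c) * α + b * β)
    (h₂ : (u₂ : ℚ) = (a * 2 + c) * α ^ 2 + b * β ^ 2) :
    ∃ D A B C : ℤ, D ≠ 0 ∧ |D| ≤ Y ^ 10 ∧ |A| ≤ Y ^ 10 ∧ |B| ≤ Y ^ 10 ∧ |C| ≤ Y ^ 10 ∧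
      (A : ℚ) = D * a ∧ (B : ℚ) = D * b ∧ (C : ℚ) = D * c := by
  set δ := α - β with hδ
  set E := u₂ - 2 * α * u₁ + α ^ 2 * u₀ with hE
  have hpow {i j : ℕ} (hij : i ≤ j) : Y ^ i ≤ Y ^ j := pow_le_pow_right₀ (by linarith) hij
  have hδY : |δ| ≤ Y ^ 2 := (abs_sub_le_of_le hαY hβY).trans (by nlinarith)
  have hδ₂ : |δ ^ 2| ≤ Y ^ 4 := (abs_sq_le_of_le hδY).trans_eq (pow_mul Y 2 2).symm
  have hEY : |E| ≤ Y ^ 4 := abs_sub_two_mul_add_le hY hαY h₀Y h₁Y h₂Y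
  have hF : |δ ^ 2 * u₀ - E| ≤ Y ^ 6 :=
    calc |δ ^ 2 * u₀ - E| ≤ Y ^ 4 * Y + Y ^ 4 := abs_sub_le_of_le (abs_mul_le_of_le hδ₂ h₀Y) hEY
      _ = Y ^ 5 + Y ^ 4 := by rw [← pow_succ]
      _ ≤ Y ^ 6 := add_pow_le_pow_succ (by linarith) le_rfl (by norm_num)
  have hG : |u₁ - β * u₀| ≤ Y ^ 3 :=
    calc |u₁ - β * u₀| ≤ Y ^ 1 + Y ^ 2 := by
          rw [pow_one, pow_two]
          exact abs_sub_le_of_le h₁Y (abs_mul_le_of_le hβY h₀Y)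
      _ ≤ Y ^ 3 := add_pow_le_pow_succ (by linarith) (by norm_num) le_rfl
  refine ⟨α * δ ^ 2, δ ^ 2 * (u₁ - β * u₀) - δ * (δ ^ 2 * u₀ - E), α * E, α * (δ ^ 2 * u₀ - E),
    mul_ne_zero hα (pow_ne_zero _ (sub_ne_zero.2 hαβ)), ?_, ?_, ?_, ?_, ?_, ?_, ?_⟩
  · calc |α * δ ^ 2| ≤ Y * Y ^ 4 := abs_mul_le_of_le hαY hδ₂
      _ ≤ Y ^ 10 := by rw [← pow_succ']; exact hpow (by norm_num)
  · calc _ ≤ Y ^ 4 * Y ^ 3 + Y ^ 2 * Y ^ 6 :=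
          abs_sub_le_of_le (abs_mul_le_of_le hδ₂ hG) (abs_mul_le_of_le hδY hF)
      _ = Y ^ 7 + Y ^ 8 := by ring
      _ ≤ Y ^ 10 := add_pow_le_pow_succ (by linarith) (by norm_num) (by norm_num)
  · calc |α * E| ≤ Y * Y ^ 4 := abs_mul_le_of_le hαY hEY
      _ ≤ Y ^ 10 := by rw [← pow_succ']; exact hpow (by norm_num)
  · calc |α * (δ ^ 2 * u₀ - E)| ≤ Y * Y ^ 6 := abs_mul_le_of_le hαY hF
      _ ≤ Y ^ 10 := by rw [← pow_succ']; exact hpow (by norm_num)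
  all_goals
    simp only [hδ, hE]
    push_cast
    rw [h₀, h₁, h₂]
    ring

theorem exists_mul_eq_closed_form {α β Y : ℤ} {u : ℕ → ℤ} {a b c : ℚ} {n : ℕ} (hα : α ≠ 0)
    (hαβ : α ≠ β) (hY : 3 ≤ Y) (hαY : |α| ≤ Y) (hβY : |β| ≤ Y) (h₀ : |u 0| ≤ Y) (h₁ : |u 1| ≤ Y)
    (h₂ : |u 2| ≤ Y) (hu : ∀ n : ℕ, (u n : ℚ) = (a * n + c) * (α : ℚ) ^ n + b * (β : ℚ) ^ n)
    (hn : 1 ≤ n) :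
    ∃ D A B : ℤ, D ≠ 0 ∧ |D| ≤ Y ^ 10 ∧ |A| ≤ n * Y ^ 11 ∧ |B| ≤ n * Y ^ 11 ∧
      (A : ℚ) = D * (a * n + c) ∧ (B : ℚ) = D * b ∧ D * u n = A * α ^ n + B * β ^ n := by
  obtain ⟨D, A, B, C, hD, hDY, hAY, hBY, hCY, hA, hB, hC⟩ :=
    exists_integral_closed_form hα hαβ hY hαY hβY h₀ h₁ h₂ (by simpa using hu 0)
      (by simpa using hu 1) (by simpa using hu 2)
  have hAC : ((A * n + C : ℤ) : ℚ) = D * (a * n + c) := by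
    push_cast
    rw [hA, hC]
    ring
  have hBn : |B| ≤ n * Y ^ 11 := by
    have hY₀ : |(0 : ℤ)| ≤ Y ^ 10 := by rw [abs_zero]; positivity
    simpa using abs_mul_natCast_add_le (by linarith) hn hY₀ hBY
  refine ⟨D, A * n + C, B, hD, hDY, abs_mul_natCast_add_le (by linarith) hn hAY hCY, hBn, hAC, hB,
    ?_⟩
  have hform : (D : ℚ) * u n = ((A * n + C : ℤ) : ℚ) * α ^ n + B * β ^ n := by
    rw [hu n, hAC, hB]
    ring
  exact_mod_cast hform

end ClosedForm

section Valuation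

theorem ne_zero_and_abs_le_of_dvd {α r Y : ℤ} (h : α ∣ r) (hr : r ≠ 0) (hY : |r| ≤ Y) :
    α ≠ 0 ∧ |α| ≤ Y :=
  ⟨ne_zero_of_dvd_ne_zero hr h, (Int.le_of_dvd (abs_pos.2 hr) ((abs_dvd_abs _ _).2 h)).trans hY⟩

theorem ne_mul_of_eq_mul_of_ne {D w t : ℤ} {q : ℚ} (hD : D ≠ 0) (hw : (w : ℚ) = D * q)
    (ht : (t : ℚ) ≠ q) : w ≠ D * t := by
  rintro rfl
  push_cast at hw
  exact ht (mul_left_cancel₀ (by exact_mod_cast hD) hw)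

theorem two_le_abs {z : ℤ} (h₀ : z ≠ 0) (h₁ : z ≠ 1) (h₂ : z ≠ -1) : 2 ≤ |z| := by
  rcases abs_cases z with h | h <;> omega

theorem exponent_lt_of_log_le {p : ℕ} [hp : Fact p.Prime] {α x y : ℤ} {n ν : ℕ} {G L : ℝ}
    (hα : 2 ≤ |α|) (hy : y ≠ 0) (hne : α ^ n * x ≠ y) (hαG : Real.log |(α : ℝ)| ≤ G)
    (hG : 2.25 ≤ G) (hGn : 8 * G ≤ Real.log n) (hL : 1 ≤ L)
    (hx : x ≠ 0 → Real.log |(x : ℝ)| ≤ Real.log n + 12 * G + L)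
    (hyη : Real.log |(y : ℝ)| ≤ Real.log n + 12 * G + L) (hν : (p : ℤ) ^ ν ∣ α ^ n * x - y) :
    (ν : ℝ) < 2.02e12 * G ^ 2 * p * Real.log n ^ 2 * L := by
  have hp2 : (2 : ℝ) ≤ p := by exact_mod_cast hp.1.two_le
  set N := Real.log n
  set η := N + 12 * G + L with hη
  have hNL : N ≤ N * L := le_mul_of_one_le_right (by linarith) hL
  have hN : 18 ≤ N := by linarith
  have hNL' : 18 * L ≤ N * L := by gcongr
  have hηNL : η ≤ 2.6 * (N * L) := by linarith
  have hbig : 3.3e11 * (p * G * (2.6 * (N * L)) * N) < 2.02e12 * G ^ 2 * p * N ^ 2 * L := by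
    have hpos : 0 < (p : ℝ) * G * (N * L) * N := by positivity
    nlinarith
  refine lt_of_le_of_lt ?_ hbig
  by_cases hx₀ : x = 0
  · have hdvd : (p : ℤ) ^ ν ∣ y := by rwa [hx₀, mul_zero, zero_sub, dvd_neg] at hν
    have hνη := mul_le_log_abs_of_pow_dvd hp.1 hy hdvd
    have hpGN : 1 ≤ (p : ℝ) * G * N := by
      have : 4 ≤ (p : ℝ) * G := by nlinarith
      nlinarith
    have hmul : 2.6 * (N * L) * 1 ≤ 2.6 * (N * L) * (p * G * N) := by gcongr
    linarith
  · have hαη : Real.log |(α : ℝ)| ≤ η := by linarith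
    refine (exponent_le hα hx₀ hy (by linarith) hαη (hx hx₀) hyη (by linarith) hne hν).trans ?_
    gcongr

theorem le_log_of_eleven_le {Y : ℝ} (hY : 11 ≤ Y) : 2.25 ≤ Real.log Y := by
  have hpow : (2 : ℝ) ^ 10 ≤ Y ^ 3 :=
    le_trans (by norm_num) (pow_le_pow_left₀ (by norm_num) hY 3)
  have hlog := mul_le_log_of_two_pow_le hpow
  rw [Real.log_pow] at hlog
  push_cast at hlog
  linarith

theorem log_le_add_of_le {z n Y L : ℝ} (hz : 0 < z) (hn : 0 < n) (hY : 0 < Y)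
    (h : z ≤ n * Y ^ 12 * Real.exp L) : Real.log z ≤ Real.log n + 12 * Real.log Y + L := by
  have hlog := Real.log_le_log hz h
  rwa [Real.log_mul (by positivity) (by positivity), Real.log_mul (by positivity) (by positivity),
    Real.log_pow, Real.log_exp, Nat.cast_ofNat] at hlog

theorem abs_mul_sub_le {D t w n Y L : ℝ} (hn : 1 ≤ n) (hY : 2 ≤ Y) (hL : 0 ≤ L)
    (hD : |D| ≤ Y ^ 10) (ht : |t| ≤ Real.exp L) (hw : |w| ≤ n * Y ^ 11) :
    |D * t - w| ≤ n * Y ^ 12 * Real.exp L := by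
  have hY₁ : 1 ≤ Y := one_le_two.trans hY
  have hD' : |D| ≤ n * Y ^ 11 :=
    calc |D| ≤ 1 * Y ^ 10 := by rwa [one_mul]
      _ ≤ n * Y ^ 11 := by gcongr; norm_num
  calc |D * t - w| ≤ |D| * |t| + |w| := by
        rw [← abs_mul]
        exact abs_sub _ _
    _ ≤ n * Y ^ 11 * Real.exp L + n * Y ^ 11 := by gcongr
    _ ≤ n * Y ^ 11 * Real.exp L + n * Y ^ 11 * Real.exp L := by
        refine add_le_add le_rfl (le_mul_of_one_le_right ?_ (Real.one_le_exp hL))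
        positivity
    _ = n * Y ^ 11 * 2 * Real.exp L := by ring
    _ ≤ n * Y ^ 11 * Y * Real.exp L := by gcongr
    _ = _ := by ring

theorem abs_le_exp_max_one_log (t : ℝ) : |t| ≤ Real.exp (max 1 (Real.log |t|)) := by
  rcases eq_or_ne t 0 with rfl | ht
  · simpa using (Real.exp_pos _).le
  · exact (Real.log_le_iff_le_exp (by positivity)).1 (le_max_right _ _)

/-- The equation `D * v = θ ^ n * z + w - D * t` is the closed form of `D * (u n - t)`: the root `1`
contributes `w` and the other root `θ ^ n * z`. -/
theorem padicValInt_lt_of_eq_pow_mul_add_sub {p : ℕ} [Fact p.Prime] {θ z w D t v Y : ℤ} {n : ℕ}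
    (hY : 11 ≤ Y) (hn : Y ^ 8 ≤ n) (hθ : 2 ≤ |θ|) (hθY : |θ| ≤ Y) (hD : D ≠ 0)
    (hDY : |D| ≤ Y ^ 10) (hz : |z| ≤ n * Y ^ 11) (hw : |w| ≤ n * Y ^ 11) (hwt : w ≠ D * t)
    (hv : v ≠ 0) (h : D * v = θ ^ n * z + w - D * t) :
    (padicValInt p v : ℝ) <
      2.02e12 * Real.log (Y : ℝ) ^ 2 * p * Real.log n ^ 2 * max 1 (Real.log |(t : ℝ)|) := by
  set L := max 1 (Real.log |(t : ℝ)|)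
  have hL : 1 ≤ L := le_max_left _ _
  have hY' : (11 : ℝ) ≤ Y := by exact_mod_cast hY
  have hnY : (Y : ℝ) ^ 8 ≤ n := by exact_mod_cast hn
  have hn₁ : (1 : ℝ) ≤ n := (one_le_pow₀ (by linarith)).trans hnY
  have hlogn : 8 * Real.log (Y : ℝ) ≤ Real.log n := by
    have := Real.log_le_log (by positivity) hnY
    rwa [Real.log_pow, Nat.cast_ofNat] at this
  have hθ₀ : (0 : ℝ) < |(θ : ℝ)| := by exact_mod_cast (by linarith : 0 < |θ|)
  have hy : D * t - w ≠ 0 := sub_ne_zero.2 hwt.symm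
  have hD' : D * v = θ ^ n * z - (D * t - w) := by rw [h]; ring
  have hz' : |(z : ℝ)| ≤ n * (Y : ℝ) ^ 12 * Real.exp L :=
    calc |(z : ℝ)| ≤ n * (Y : ℝ) ^ 11 * 1 := by rw [mul_one]; exact_mod_cast hz
      _ ≤ n * (Y : ℝ) ^ 12 * Real.exp L := by
          gcongr
          · linarith
          · norm_num
          · exact Real.one_le_exp (by linarith)
  have hDw : |((D * t - w : ℤ) : ℝ)| ≤ n * (Y : ℝ) ^ 12 * Real.exp L := by
    push_cast
    exact abs_mul_sub_le hn₁ (by linarith) (by linarith) (by exact_mod_cast hDY)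
      (abs_le_exp_max_one_log _) (by exact_mod_cast hw)
  refine exponent_lt_of_log_le hθ hy (fun h₀ => mul_ne_zero hD hv ?_)
    (Real.log_le_log hθ₀ (by exact_mod_cast hθY)) (le_log_of_eleven_le hY') hlogn hL
    (fun hz₀ => log_le_add_of_le (by positivity) (by linarith) (by linarith) hz')
    (log_le_add_of_le (by positivity) (by linarith) (by linarith) hDw)
    (hD' ▸ (padicValInt_dvd v).mul_left D)
  rw [hD', h₀, sub_self]

end Valuation

/-- Lemma (valuation bound): with notation as in the context, `c₂ = 2.02·10¹² (log Y)²`,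
`n > Y⁸`, and `t` an integer with `t ≠ u_n` (and `t ≠ b` if `β = 1`, `t ≠ a n + c` if
`α = 1`), for every prime `p` we have `ν_p(u_n - t) < c₂ p (log n)²` when `t = 0`, and
`ν_p(u_n - t) < c₂ p (log n)² log⁺ t` when `t ≠ 0`, where `log⁺ t = max{1, log |t|}`. -/
theorem valuation_upper_bound
    (r₁ r₂ r₃ : ℤ) (hr₁ : r₁ ≠ 0) (hr₂ : r₂ ≠ 0) (hr₃ : r₃ ≠ 0)
    (α β : ℤ)
    (hpoly : ∀ X : ℤ, X ^ 3 - r₁ * X ^ 2 - r₂ * X - r₃ = (X - α) ^ 2 * (X - β))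
    (hone : α = 1 ∨ β = 1) (hαβ : α ≠ β) (hαβ' : α ≠ -β)
    (u : ℕ → ℤ)
    (hrec : ∀ n, 3 ≤ n → u n = r₁ * u (n - 1) + r₂ * u (n - 2) + r₃ * u (n - 3))
    (a b c : ℚ) (ha : a ≠ 0)
    (hu : ∀ n : ℕ, (u n : ℚ) = (a * n + c) * (α : ℚ) ^ n + b * (β : ℚ) ^ n)
    (Y : ℤ)
    (hY : Y = max (max (max |r₁| |r₂|) (max |r₃| |u 0|)) (max (max |u 1| |u 2|) 11))
    (c₂ : ℝ) (hc₂ : c₂ = 2.02e12 * (Real.log (Y : ℝ)) ^ 2)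
    (n : ℕ) (hn : (n : ℤ) > Y ^ 8)
    (t : ℤ) (ht : t ≠ u n)
    (htβ : β = 1 → (t : ℚ) ≠ b) (htα : α = 1 → (t : ℚ) ≠ a * n + c)
    (p : ℕ) (hp : p.Prime) :
    (t = 0 → (padicValInt p (u n - t) : ℝ) < c₂ * p * (Real.log n) ^ 2) ∧
    (t ≠ 0 → (padicValInt p (u n - t) : ℝ) <
        c₂ * p * (Real.log n) ^ 2 * max 1 (Real.log |(t : ℝ)|)) := by
  have : Fact p.Prime := ⟨hp⟩
  suffices h : (padicValInt p (u n - t) : ℝ) <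
      2.02e12 * Real.log (Y : ℝ) ^ 2 * p * Real.log n ^ 2 * max 1 (Real.log |(t : ℝ)|) by
    rw [← hc₂] at h
    exact ⟨by rintro rfl; simpa using h, fun _ => h⟩
  have hY₁₁ : 11 ≤ Y := by simp [hY]
  have hn₁ : 1 ≤ n := by exact_mod_cast (by positivity : 0 ≤ Y ^ 8).trans_lt hn
  have hv : u n - t ≠ 0 := sub_ne_zero.2 ht.symm
  have hr : r₃ = α ^ 2 * β := by linarith [hpoly 0]
  have hr₃Y : |r₃| ≤ Y := by simp [hY]
  obtain ⟨hα, hαY⟩ := ne_zero_and_abs_le_of_dvd ⟨α * β, by rw [hr]; ring⟩ hr₃ hr₃Y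
  obtain ⟨hβ, hβY⟩ := ne_zero_and_abs_le_of_dvd (Dvd.intro_left _ hr.symm) hr₃ hr₃Y
  obtain ⟨D, A, B, hD, hDY, hAY, hBY, hA, hB, hform⟩ := exists_mul_eq_closed_form hα hαβ
    (by linarith : 3 ≤ Y) hαY hβY (by simp [hY]) (by simp [hY]) (by simp [hY]) hu hn₁
  rcases hone with rfl | rfl
  · exact padicValInt_lt_of_eq_pow_mul_add_sub hY₁₁ hn.le
      (two_le_abs hβ hαβ.symm fun h => hαβ' (by rw [h]; norm_num)) hβY hD hDY hBY hAY
      (ne_mul_of_eq_mul_of_ne hD hA (htα rfl)) hv (by rw [mul_sub, hform]; ring)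
  · exact padicValInt_lt_of_eq_pow_mul_add_sub hY₁₁ hn.le (two_le_abs hα hαβ hαβ') hαY hD hDY hAY
      hBY (ne_mul_of_eq_mul_of_ne hD hB (htβ rfl)) hv (by rw [mul_sub, hform]; ring)
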